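/- arXiv:2406.15779 — 5 statements merged into one kernel-verified Lean document; each statement's English description precedes it below -/
import Mathlib

section
/- Suppose the topology generated on K by the metric d is strictly finer than the topology of K. Then there exists a linear isometric embedding of c₀ (the Banach space of real sequences converging to 0, with the supremum norm) into C(K) whose range consists of d-Lipschitz functions. -/
/-!
By compactness and lower semicontinuity, the closed `d`-thickening of a closed set is closed. A
continuous `d`-Lipschitz Urysohn function can therefore be built, as in Urysohn's lemma, by choosing
closed pieces of `{f ≤ t}` and `{t ≤ f}` one rational level `t` at a time: the triangle inequality
makes the thickenings which these two sets must contain disjoint, and normality separates them.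

If the `d`-topology is not coarser than that of `K`, there are a point `x₀` and `ε > 0` such that
every neighbourhood of `x₀` contains points at `d`-distance at least `ε` from `x₀`. Uniformly
Lipschitz functions `φₙ` vanishing at `x₀` can then be made to peak at points `yₙ` so close to `x₀`
that all earlier `φₘ` are still small at `yₙ`. Cutting `φₙ` off where an earlier one is large gives
disjoint bumps of norm one, which span an isometric copy of `c₀`. At most two bumps are nonzero at
one of two given points, so the elements of the span are Lipschitz.
-/

open Set Filter Topology
open scoped ZeroAtInfty

section Thickening

variable {X Y α : Type*} [TopologicalSpace X] [CompactSpace X] [TopologicalSpace Y] [LinearOrder α]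

lemma isClosed_setOf_exists_mem_le {F : X × Y → α} (hF : LowerSemicontinuous F) {A : Set X}
    (hA : IsClosed A) (r : α) : IsClosed {y | ∃ x ∈ A, F (x, y) ≤ r} := by
  have hclosed : IsClosed (Prod.fst ⁻¹' A ∩ F ⁻¹' Iic r) :=
    (hA.preimage continuous_fst).inter (hF.isClosed_preimage r)
  have himage : {y | ∃ x ∈ A, F (x, y) ≤ r} = Prod.snd '' (Prod.fst ⁻¹' A ∩ F ⁻¹' Iic r) := by
    ext y
    simp
  exact himage ▸ isClosedMap_snd_of_compactSpace _ hclosed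

end Thickening

/-- A prospective description of a function `f : K → ℝ` near one value `height`: `lower` and
`upper` are to be contained in `{f ≤ height}` and `{height ≤ f}` respectively. -/
structure LevelCut (K : Type*) [TopologicalSpace K] where
  height : ℝ
  lower : Set K
  upper : Set K
  isClosed_lower : IsClosed lower
  isClosed_upper : IsClosed upper
  lower_union_upper : lower ∪ upper = univ

namespace LevelCut

variable {K : Type*} [TopologicalSpace K] {d : PseudoMetric K ℝ} {S : Set (LevelCut K)}

/-- A family of level cuts is coherent if it obeys the constraints that a function which is
`1`-Lipschitz for `d` imposes on its level sets. The strict inequality makes the two sides of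
the constraint closed sets to be separated. -/
def Coherent (d : PseudoMetric K ℝ) (S : Set (LevelCut K)) : Prop :=
  ∀ l ∈ S, ∀ m ∈ S, l.height < m.height →
    ∀ x ∈ l.lower, ∀ y ∈ m.upper, m.height - l.height < d x y

lemma Coherent.exists_insert [CompactSpace K] [NormalSpace K]
    (hd : LowerSemicontinuous fun p : K × K => d p.1 p.2) (hS : Coherent d S) (hfin : S.Finite)
    (t : ℝ) : ∃ c : LevelCut K, c.height = t ∧ Coherent d (insert c S) := by
  let E : Set K := ⋃ l ∈ {l ∈ S | l.height < t}, {z | ∃ x ∈ l.lower, d x z ≤ t - l.height}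
  let F : Set K := ⋃ m ∈ {m ∈ S | t < m.height}, {z | ∃ y ∈ m.upper, d y z ≤ m.height - t}
  have hE : IsClosed E := (hfin.sep _).isClosed_biUnion fun l _ =>
    isClosed_setOf_exists_mem_le hd l.isClosed_lower _
  have hF : IsClosed F := (hfin.sep _).isClosed_biUnion fun m _ =>
    isClosed_setOf_exists_mem_le hd m.isClosed_upper _
  have hEF : E ⊆ Fᶜ := by
    simp only [E, F, subset_def, mem_compl_iff, mem_iUnion₂]
    rintro z ⟨l, ⟨hl, hlt⟩, x, hx, hxz⟩ ⟨m, ⟨hm, htm⟩, y, hy, hyz⟩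
    have hxy := hS l hl m hm (hlt.trans htm) x hx y hy
    linarith [d.triangle x z y, d.symm z y]
  obtain ⟨V, hV, hEV, hVF⟩ := normal_exists_closure_subset hE hF.isOpen_compl hEF
  refine ⟨⟨t, closure V, Vᶜ, isClosed_closure, hV.isClosed_compl,
    eq_univ_of_subset (union_subset_union_left _ subset_closure) (union_compl_self V)⟩, rfl, ?_⟩
  rintro l (rfl | hl) m (rfl | hm) hlm x hx y hy
  · exact absurd hlm (lt_irrefl _)
  · by_contra! hxy
    exact hVF hx (mem_biUnion (show m ∈ {m ∈ S | t < m.height} from ⟨hm, hlm⟩)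
      ⟨y, hy, d.symm x y ▸ hxy⟩)
  · by_contra! hxy
    exact hy (hEV (mem_biUnion (show l ∈ {l ∈ S | l.height < t} from ⟨hl, hlm⟩) ⟨x, hx, hxy⟩))
  · exact hS l hl m hm hlm x hx y hy

lemma Coherent.exists_superset [CompactSpace K] [NormalSpace K]
    (hd : LowerSemicontinuous fun p : K × K => d p.1 p.2) (hS : Coherent d S) (hfin : S.Finite) :
    ∃ T, S ⊆ T ∧ Coherent d T ∧ ∀ q : ℚ, ∃ c ∈ T, c.height = q := by
  let P := {R : Set (LevelCut K) // R.Finite ∧ Coherent d R}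
  let D (q : ℚ) : Order.Cofinal P :=
    { carrier := {R | ∃ c ∈ R.1, c.height = q}
      isCofinal := fun R => by
        obtain ⟨c, hc, hR⟩ := R.2.2.exists_insert hd R.2.1 q
        exact ⟨⟨insert c R.1, R.2.1.insert c, hR⟩, ⟨c, mem_insert c _, hc⟩, subset_insert c _⟩ }
  let S₀ : P := ⟨S, hfin, hS⟩
  let I := Order.idealOfCofinals S₀ D
  refine ⟨⋃ R ∈ I, R.1, subset_biUnion_of_mem (u := Subtype.val)
    (Order.mem_idealOfCofinals S₀ D), ?_, fun q => ?_⟩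
  · intro l hl m hm
    obtain ⟨R, hR, hlR⟩ := mem_iUnion₂.1 hl
    obtain ⟨R', hR', hmR'⟩ := mem_iUnion₂.1 hm
    obtain ⟨Q, -, hRQ, hR'Q⟩ := I.directed R hR R' hR'
    exact Q.2.2 l (hRQ hlR) m (hR'Q hmR')
  · obtain ⟨R, ⟨c, hcR, hc⟩, hR⟩ := Order.cofinal_meets_idealOfCofinals S₀ D q
    exact ⟨c, mem_biUnion hR hcR, hc⟩

/-- The function described by a family of level cuts. The infimum takes the junk value `0` at
points outside every `lower` set and where the available heights are unbounded below. -/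
noncomputable def value (S : Set (LevelCut K)) (x : K) : ℝ :=
  sInf (height '' {l ∈ S | x ∈ l.lower})

lemma Coherent.height_le_of_mem (hS : Coherent d S) {l m : LevelCut K} (hl : l ∈ S) (hm : m ∈ S)
    {x : K} (hxl : x ∈ l.lower) (hxm : x ∈ m.upper) : m.height ≤ l.height := by
  by_contra! hlm
  have hlt := hS l hl m hm hlm x hxl x hxm
  rw [d.refl] at hlt
  linarith

lemma Coherent.value_le (hS : Coherent d S) (hbot : ∃ b ∈ S, b.upper = univ) {l : LevelCut K}
    (hl : l ∈ S) {x : K} (hx : x ∈ l.lower) : value S x ≤ l.height := by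
  obtain ⟨b, hb, hbu⟩ := hbot
  refine csInf_le ⟨b.height, ?_⟩ (mem_image_of_mem height ⟨hl, hx⟩)
  rintro _ ⟨m, ⟨hm, hxm⟩, rfl⟩
  exact hS.height_le_of_mem hm hb hxm (hbu ▸ mem_univ x)

lemma Coherent.le_value (hS : Coherent d S) (htop : ∃ t ∈ S, t.lower = univ) {m : LevelCut K}
    (hm : m ∈ S) {x : K} (hx : x ∈ m.upper) : m.height ≤ value S x := by
  obtain ⟨t, ht, htl⟩ := htop
  refine le_csInf ⟨_, mem_image_of_mem height ⟨ht, htl ▸ mem_univ x⟩⟩ ?_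
  rintro _ ⟨l, ⟨hl, hxl⟩, rfl⟩
  exact hS.height_le_of_mem hl hm hxl hx

section Value

variable (hS : Coherent d S) (hbot : ∃ b ∈ S, b.upper = univ) (htop : ∃ t ∈ S, t.lower = univ)
  (hdense : ∀ q : ℚ, ∃ c ∈ S, c.height = q)
include hS hbot htop hdense

lemma Coherent.continuous_value : Continuous (value S) := by
  refine continuous_iff_lower_upperSemicontinuous.2 ⟨fun x t htx => ?_, fun x t hxt => ?_⟩
  · obtain ⟨q, htq, hqx⟩ := exists_rat_btwn htx
    obtain ⟨c, hc, hcq⟩ := hdense q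
    have hxc : x ∉ c.lower := fun h => (hS.value_le hbot hc h).not_gt (hcq ▸ hqx)
    filter_upwards [c.isClosed_lower.isOpen_compl.mem_nhds hxc] with z hz
    have hzc : z ∈ c.upper := (c.lower_union_upper ▸ mem_univ z).resolve_left hz
    exact htq.trans_le (hcq ▸ hS.le_value htop hc hzc)
  · obtain ⟨q, hxq, hqt⟩ := exists_rat_btwn hxt
    obtain ⟨c, hc, hcq⟩ := hdense q
    have hxc : x ∉ c.upper := fun h => (hS.le_value htop hc h).not_gt (hcq ▸ hxq)
    filter_upwards [c.isClosed_upper.isOpen_compl.mem_nhds hxc] with z hz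
    have hzc : z ∈ c.lower := (c.lower_union_upper ▸ mem_univ z).resolve_right hz
    exact (hcq ▸ hS.value_le hbot hc hzc : value S z ≤ q).trans_lt hqt

lemma Coherent.value_sub_le (x y : K) : value S y - value S x ≤ d x y := by
  by_contra! hlt
  obtain ⟨q, hxq, hqy⟩ := exists_rat_btwn (lt_sub_comm.1 hlt)
  obtain ⟨r, hqr, hry⟩ := exists_rat_btwn (lt_sub_iff_add_lt.1 hqy)
  obtain ⟨l, hl, hlq⟩ := hdense q
  obtain ⟨m, hm, hmr⟩ := hdense r
  have hxl : x ∈ l.lower := (l.lower_union_upper ▸ mem_univ x).resolve_right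
    fun h => (hS.le_value htop hl h).not_gt (hlq ▸ hxq)
  have hym : y ∈ m.upper := (m.lower_union_upper ▸ mem_univ y).resolve_left
    fun h => (hS.value_le hbot hm h).not_gt (hmr ▸ hry)
  have hlm : l.height < m.height := by linarith [d.nonneg x y]
  linarith [hS l hl m hm hlm x hxl y hym]

lemma Coherent.abs_value_sub_le (x y : K) : |value S x - value S y| ≤ d x y :=
  abs_sub_le_iff.2 ⟨d.symm x y ▸ hS.value_sub_le hbot htop hdense y x,
    hS.value_sub_le hbot htop hdense x y⟩

end Value

end LevelCut

section Urysohn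

variable {K : Type*} [TopologicalSpace K] [CompactSpace K] [NormalSpace K] {d : PseudoMetric K ℝ}

open LevelCut in
theorem exists_continuous_zero_const_of_lt_pseudoMetric
    (hd : LowerSemicontinuous fun p : K × K => d p.1 p.2) {A B : Set K} (hA : IsClosed A)
    (hB : IsClosed B) {r : ℝ} (hr : 0 ≤ r) (hAB : ∀ x ∈ A, ∀ y ∈ B, r < d x y) :
    ∃ f : C(K, ℝ), EqOn f 0 A ∧ EqOn f (fun _ => r) B ∧ (∀ x, f x ∈ Icc 0 r) ∧
      ∀ x y, |f x - f y| ≤ d x y := by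
  let bot : LevelCut K := ⟨0, A, univ, hA, isClosed_univ, union_univ A⟩
  let top : LevelCut K := ⟨r, univ, B, isClosed_univ, hB, univ_union B⟩
  have hcoherent : Coherent d {bot, top} := by
    rintro l (rfl | rfl) m (rfl | rfl) hlm x hx y hy
    · exact absurd hlm (lt_irrefl _)
    · exact (sub_zero r).trans_lt (hAB x hx y hy)
    · exact absurd hlm hr.not_gt
    · exact absurd hlm (lt_irrefl _)
  obtain ⟨T, hST, hT, hdense⟩ := hcoherent.exists_superset hd (toFinite _)
  have hbotT : bot ∈ T := hST (mem_insert _ _)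
  have htopT : top ∈ T := hST (mem_insert_of_mem _ rfl)
  have hbot : ∃ b ∈ T, b.upper = univ := ⟨bot, hbotT, rfl⟩
  have htop : ∃ t ∈ T, t.lower = univ := ⟨top, htopT, rfl⟩
  have hnonneg (x : K) : 0 ≤ value T x := hT.le_value htop hbotT (mem_univ x)
  have hle (x : K) : value T x ≤ r := hT.value_le hbot htopT (mem_univ x)
  exact ⟨⟨value T, hT.continuous_value hbot htop hdense⟩,
    fun x hx => (hT.value_le hbot hbotT hx).antisymm (hnonneg x),
    fun x hx => (hle x).antisymm (hT.le_value htop htopT hx),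
    fun x => ⟨hnonneg x, hle x⟩, hT.abs_value_sub_le hbot htop hdense⟩

lemma exists_continuous_eq_zero_eq_of_lt_mul_pseudoMetric
    (hd : LowerSemicontinuous fun p : K × K => d p.1 p.2) {x₀ y₀ : K} {c r : ℝ} (hc : 0 < c)
    (hr : 0 ≤ r) (hxy : r < c * d x₀ y₀) :
    ∃ f : C(K, ℝ), f x₀ = 0 ∧ f y₀ = r ∧ ∀ x y, |f x - f y| ≤ c * d x y := by
  have hball (z : K) : IsClosed {x | d z x ≤ 0} :=
    (hd.comp (Continuous.prodMk_right z)).isClosed_preimage 0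
  have hmem (z : K) : z ∈ {x | d z x ≤ 0} := (d.refl z).le
  have hsep : ∀ x ∈ {x | d x₀ x ≤ 0}, ∀ y ∈ {y | d y₀ y ≤ 0}, r / c < d x y := by
    intro x hx y hy
    rw [mem_ofPred_eq] at hx hy
    have hr_lt : r / c < d x₀ y₀ := (div_lt_iff₀' hc).2 hxy
    linarith [d.triangle x₀ x y₀, d.triangle x y y₀, d.symm y y₀]
  obtain ⟨f, hf₀, hfr, -, hf⟩ := exists_continuous_zero_const_of_lt_pseudoMetric hd
    (hball x₀) (hball y₀) (div_nonneg hr hc.le) hsep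
  refine ⟨c • f, ?_, ?_, fun x y => ?_⟩
  · simp [hf₀ (hmem x₀)]
  · simp [hfr (hmem y₀), mul_div_cancel₀ r hc.ne']
  · rw [ContinuousMap.smul_apply, ContinuousMap.smul_apply, ← smul_sub, smul_eq_mul, abs_mul,
      abs_of_pos hc]
    exact mul_le_mul_of_nonneg_left (hf x y) hc.le

lemma exists_seq_peaks (hd : LowerSemicontinuous fun p : K × K => d p.1 p.2) {x₀ : K}
    {c r ε : ℝ} (hc : 0 < c) (hr : 0 ≤ r) (hε : 0 < ε) (hfreq : ∃ᶠ y in 𝓝 x₀, r < c * d x₀ y) :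
    ∃ (φ : ℕ → C(K, ℝ)) (y : ℕ → K), (∀ n, φ n (y n) = r) ∧ (∀ m n, m < n → φ m (y n) < ε) ∧
      ∀ n x x', |φ n x - φ n x'| ≤ c * d x x' := by
  have hstep (s : Finset (C(K, ℝ) × K)) (hs : ∀ p ∈ s, p.1 x₀ = 0) :
      ∃ q : C(K, ℝ) × K, (q.1 x₀ = 0 ∧ q.1 q.2 = r ∧ ∀ x x', |q.1 x - q.1 x'| ≤ c * d x x') ∧
        ∀ p ∈ s, p.1 q.2 < ε := by
    have hsmall : ∀ᶠ y in 𝓝 x₀, ∀ p ∈ s, p.1 y < ε := s.eventually_all.2 fun p hp =>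
      p.1.continuous.continuousAt.eventually_lt_const (hs p hp ▸ hε)
    obtain ⟨y, hfar, hy⟩ := (hfreq.and_eventually hsmall).exists
    obtain ⟨f, hf⟩ := exists_continuous_eq_zero_eq_of_lt_mul_pseudoMetric hd hc hr hfar
    exact ⟨(f, y), hf, hy⟩
  obtain ⟨F, hF, hlt⟩ := exists_seq_of_forall_finset_exists _ _
    fun s hs => hstep s fun p hp => (hs p hp).1
  exact ⟨fun n => (F n).1, fun n => (F n).2, fun n => (hF n).2.1, hlt, fun n => (hF n).2.2⟩

end Urysohn

section Bumps

variable {K : Type*} [TopologicalSpace K]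

lemma abs_partialSups_apply_sub_le {φ : ℕ → C(K, ℝ)} {x y : K} {c : ℝ}
    (hφ : ∀ n, |φ n x - φ n y| ≤ c) (n : ℕ) :
    |partialSups φ n x - partialSups φ n y| ≤ c := by
  induction n with
  | zero => simpa only [partialSups_zero] using hφ 0
  | succ n ih =>
    simp only [partialSups_add_one, ContinuousMap.sup_apply]
    exact (abs_max_sub_max_le_max _ _ _ _).trans (max_le ih (hφ (n + 1)))

lemma partialSups_apply_lt_iff {φ : ℕ → C(K, ℝ)} {x : K} {c : ℝ} {n : ℕ} :
    partialSups φ n x < c ↔ ∀ k ≤ n, φ k x < c :=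
  partialSups_iff_forall (fun f : C(K, ℝ) => f x < c) sup_lt_iff

/-- A `[0, 1]`-valued bump living on `{2 < φ} ∩ {ψ < 2}`. -/
def bump (φ ψ : C(K, ℝ)) : C(K, ℝ) := 0 ⊔ (1 ⊓ ((φ - 2) ⊓ (2 - ψ)))

lemma bump_apply (φ ψ : C(K, ℝ)) (x : K) :
    bump φ ψ x = max 0 (min 1 (min (φ x - 2) (2 - ψ x))) := rfl

lemma bump_eq_one {φ ψ : C(K, ℝ)} {x : K} (hφ : 3 ≤ φ x) (hψ : ψ x ≤ 1) : bump φ ψ x = 1 := by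
  have hmin : 1 ≤ min (φ x - 2) (2 - ψ x) := le_min (by linarith) (by linarith)
  rw [bump_apply, min_eq_left hmin, max_eq_right zero_le_one]

lemma bump_mul_bump_eq_zero {φ ψ φ' ψ' : C(K, ℝ)} (h : φ ≤ ψ') :
    bump φ ψ * bump φ' ψ' = 0 := by
  ext x
  rcases le_or_gt (φ x) 2 with hφ | hφ
  · have hmin : min 1 (min (φ x - 2) (2 - ψ x)) ≤ 0 := by simp [hφ]
    simp [bump_apply φ, max_eq_left hmin]
  · have hψ' : 2 ≤ ψ' x := hφ.le.trans (h x)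
    have hmin : min 1 (min (φ' x - 2) (2 - ψ' x)) ≤ 0 := by simp [hψ']
    simp [bump_apply φ', max_eq_left hmin]

lemma abs_bump_sub_le {φ ψ : C(K, ℝ)} {x y : K} {c : ℝ} (hφ : |φ x - φ y| ≤ c)
    (hψ : |ψ x - ψ y| ≤ c) : |bump φ ψ x - bump φ ψ y| ≤ c := by
  have hc : |(0 : ℝ)| ≤ c := abs_zero.trans_le ((abs_nonneg _).trans hφ)
  have hmin : |min (φ x - 2) (2 - ψ x) - min (φ y - 2) (2 - ψ y)| ≤ c :=
    (abs_min_sub_min_le_max _ _ _ _).trans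
      (max_le (by simpa using hφ) (by simpa [abs_sub_comm] using hψ))
  rw [bump_apply, bump_apply]
  refine (abs_max_sub_max_le_max _ _ _ _).trans (max_le (by simpa using hc) ?_)
  exact (abs_min_sub_min_le_max _ _ _ _).trans (max_le (by simpa using hc) hmin)

variable [CompactSpace K]

lemma norm_bump_le_one (φ ψ : C(K, ℝ)) : ‖bump φ ψ‖ ≤ 1 := by
  refine (ContinuousMap.norm_le _ zero_le_one).2 fun x => ?_
  rw [bump_apply, Real.norm_of_nonneg (le_max_left _ _)]
  exact max_le zero_le_one (min_le_left _ _)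

lemma exists_seq_disjoint_norm_one_lipschitz [NormalSpace K] {d : PseudoMetric K ℝ}
    (hd : LowerSemicontinuous fun p : K × K => d p.1 p.2) {x₀ : K} {c : ℝ} (hc : 0 < c)
    (hfreq : ∃ᶠ y in 𝓝 x₀, 3 < c * d x₀ y) :
    ∃ g : ℕ → C(K, ℝ), (Pairwise fun m n => g m * g n = 0) ∧ (∀ n, ‖g n‖ = 1) ∧
      ∀ n x y, |g n x - g n y| ≤ c * d x y := by
  obtain ⟨φ, y, hpeak, hearlier, hlip⟩ :=
    exists_seq_peaks hd hc zero_le_three zero_lt_one hfreq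
  let g (n : ℕ) : C(K, ℝ) := bump (φ (n + 1)) (partialSups φ n)
  have hdisj {m n : ℕ} (hmn : m < n) : g m * g n = 0 :=
    bump_mul_bump_eq_zero (le_partialSups_of_le φ hmn)
  have hone (n : ℕ) : g n (y (n + 1)) = 1 :=
    bump_eq_one (hpeak (n + 1)).ge
      (partialSups_apply_lt_iff.2 fun k hk => hearlier k (n + 1) (Nat.lt_succ_of_le hk)).le
  refine ⟨g, fun m n hmn => ?_, fun n => (norm_bump_le_one _ _).antisymm ?_, fun n x z => ?_⟩
  · rcases hmn.lt_or_gt with h | h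
    · exact hdisj h
    · exact mul_comm (g m) (g n) ▸ hdisj h
  · simpa only [hone, norm_one] using (g n).norm_coe_le_norm (y (n + 1))
  · exact abs_bump_sub_le (hlip (n + 1) x z) (abs_partialSups_apply_sub_le (hlip · x z) n)

end Bumps

lemma exists_frequently_le_of_not_isOpen {X : Type*} [TopologicalSpace X] {d : X → X → ℝ}
    {U : Set X} (hU : ∀ x ∈ U, ∃ ε > 0, {y | d x y < ε} ⊆ U) (hopen : ¬ IsOpen U) :
    ∃ x, ∃ ε > 0, ∃ᶠ y in 𝓝 x, ε ≤ d x y := by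
  rw [isOpen_iff_mem_nhds] at hopen
  push Not at hopen
  obtain ⟨x, hx, hxU⟩ := hopen
  obtain ⟨ε, hε, hball⟩ := hU x hx
  refine ⟨x, ε, hε, fun hnear => hxU ?_⟩
  filter_upwards [hnear] with y hy
  exact hball (not_le.1 hy)

section DisjointFunctions

variable {ι X 𝕜 : Type*} [TopologicalSpace X] [NormedField 𝕜] {g : ι → C(X, 𝕜)}

lemma exists_finset_card_le_one_forall_notMem_apply_eq_zero
    (hdisj : Pairwise fun i j => g i * g j = 0) (x : X) :
    ∃ s : Finset ι, s.card ≤ 1 ∧ ∀ i ∉ s, g i x = 0 := by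
  by_cases hx : ∃ i, g i x ≠ 0
  · obtain ⟨i, hi⟩ := hx
    refine ⟨{i}, by simp, fun j hj => ?_⟩
    have hmul : g i x * g j x = 0 :=
      DFunLike.congr_fun (hdisj (Finset.notMem_singleton.1 hj).symm) x
    exact (mul_eq_zero.1 hmul).resolve_left hi
  · push Not at hx
    exact ⟨∅, by simp, fun i _ => hx i⟩

lemma norm_sub_le_of_hasSum_smul (hdisj : Pairwise fun i j => g i * g j = 0) {a : ι → 𝕜}
    {f : C(X, 𝕜)} (hf : HasSum (fun i => a i • g i) f) {C c : ℝ} (hC : 0 ≤ C)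
    (ha : ∀ i, ‖a i‖ ≤ C) {x y : X} (hc : 0 ≤ c) (hg : ∀ i, ‖g i x - g i y‖ ≤ c) :
    ‖f x - f y‖ ≤ 2 * (C * c) := by
  classical
  obtain ⟨s, hs, hgs⟩ := exists_finset_card_le_one_forall_notMem_apply_eq_zero hdisj x
  obtain ⟨t, ht, hgt⟩ := exists_finset_card_le_one_forall_notMem_apply_eq_zero hdisj y
  have hsum : HasSum (fun i => a i * (g i x - g i y)) (f x - f y) := by
    simpa [mul_sub] using
      (ContinuousMap.hasSum_apply hf x).sub (ContinuousMap.hasSum_apply hf y)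
  have hfinite : HasSum (fun i => a i * (g i x - g i y))
      (∑ i ∈ s ∪ t, a i * (g i x - g i y)) := by
    refine hasSum_sum_of_ne_finset_zero fun i hi => ?_
    rw [Finset.notMem_union] at hi
    rw [hgs i hi.1, hgt i hi.2, sub_zero, mul_zero]
  have hterm : ∀ i ∈ s ∪ t, ‖a i * (g i x - g i y)‖ ≤ C * c := fun i _ =>
    (norm_mul _ _).trans_le (mul_le_mul (ha i) (hg i) (norm_nonneg _) hC)
  have hcard : ((s ∪ t).card : ℝ) ≤ 2 := by
    exact_mod_cast (Finset.card_union_le s t).trans (add_le_add hs ht)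
  calc ‖f x - f y‖ = ‖∑ i ∈ s ∪ t, a i * (g i x - g i y)‖ := by rw [hsum.unique hfinite]
    _ ≤ (s ∪ t).card • (C * c) :=
        (norm_sum_le _ _).trans (Finset.sum_le_card_nsmul _ _ _ hterm)
    _ ≤ 2 * (C * c) := by rw [nsmul_eq_mul]; gcongr

variable [CompactSpace X]

lemma norm_sum_smul_le_of_pairwise_mul_eq_zero
    (hdisj : Pairwise fun i j => g i * g j = 0) (hg : ∀ i, ‖g i‖ ≤ 1) {a : ι → 𝕜} {C : ℝ}
    (hC : 0 ≤ C) {t : Finset ι} (ha : ∀ i ∈ t, ‖a i‖ ≤ C) : ‖∑ i ∈ t, a i • g i‖ ≤ C := by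
  classical
  rw [ContinuousMap.norm_le _ hC]
  intro x
  obtain ⟨s, hs, hgs⟩ := exists_finset_card_le_one_forall_notMem_apply_eq_zero hdisj x
  have hterm : ∀ i ∈ t ∩ s, ‖a i * g i x‖ ≤ C := fun i hi =>
    calc ‖a i * g i x‖ = ‖a i‖ * ‖g i x‖ := norm_mul _ _
      _ ≤ C * 1 := mul_le_mul (ha i (Finset.mem_inter.1 hi).1)
          (((g i).norm_coe_le_norm x).trans (hg i)) (norm_nonneg _) hC
      _ = C := mul_one C
  have hcard : ((t ∩ s).card : ℝ) ≤ 1 := by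
    exact_mod_cast (Finset.card_le_card Finset.inter_subset_right).trans hs
  calc ‖(∑ i ∈ t, a i • g i) x‖ = ‖∑ i ∈ t, a i * g i x‖ := by simp
    _ = ‖∑ i ∈ t ∩ s, a i * g i x‖ := by
        refine congrArg _ (Finset.sum_subset Finset.inter_subset_left fun i hi his => ?_).symm
        rw [hgs i fun h => his (Finset.mem_inter.2 ⟨hi, h⟩), mul_zero]
    _ ≤ (t ∩ s).card • C := (norm_sum_le _ _).trans (Finset.sum_le_card_nsmul _ _ _ hterm)
    _ ≤ C := by rw [nsmul_eq_mul]; exact mul_le_of_le_one_left hC hcard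

lemma norm_le_of_hasSum_smul (hdisj : Pairwise fun i j => g i * g j = 0) (hg : ∀ i, ‖g i‖ ≤ 1)
    {a : ι → 𝕜} {f : C(X, 𝕜)} (hf : HasSum (fun i => a i • g i) f) {C : ℝ} (hC : 0 ≤ C)
    (ha : ∀ i, ‖a i‖ ≤ C) : ‖f‖ ≤ C :=
  le_of_tendsto hf.norm <| Eventually.of_forall fun _ =>
    norm_sum_smul_le_of_pairwise_mul_eq_zero hdisj hg hC fun i _ => ha i

lemma norm_smul_le_of_hasSum_smul (hdisj : Pairwise fun i j => g i * g j = 0) {a : ι → 𝕜}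
    {f : C(X, 𝕜)} (hf : HasSum (fun i => a i • g i) f) (i : ι) : ‖a i • g i‖ ≤ ‖f‖ := by
  refine (ContinuousMap.norm_le _ (norm_nonneg f)).2 fun x => ?_
  by_cases hx : g i x = 0
  · simp [hx]
  have hsingle : ∀ j, j ≠ i → (a j • g j) x = 0 := fun j hj => by
    have hmul : g j x * g i x = 0 := DFunLike.congr_fun (hdisj hj) x
    simp [(mul_eq_zero.1 hmul).resolve_right hx]
  rw [← (ContinuousMap.hasSum_apply hf x).unique (hasSum_single i hsingle)]
  exact f.norm_coe_le_norm x

variable [TopologicalSpace ι] [DiscreteTopology ι] [CompleteSpace 𝕜]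

lemma summable_smul_of_pairwise_mul_eq_zero (hdisj : Pairwise fun i j => g i * g j = 0)
    (hg : ∀ i, ‖g i‖ ≤ 1) (a : C₀(ι, 𝕜)) : Summable fun i => a i • g i := by
  rw [summable_iff_vanishing_norm]
  intro ε hε
  have hlim : Tendsto (fun i => ‖a i‖) cofinite (𝓝 0) := by
    simpa only [cocompact_eq_cofinite, norm_zero] using (zero_at_infty a).norm
  have hfin : {i | ¬ ‖a i‖ < ε / 2}.Finite := hlim.eventually_lt_const (half_pos hε)
  refine ⟨hfin.toFinset, fun t ht => ?_⟩
  have hsmall : ∀ i ∈ t, ‖a i‖ ≤ ε / 2 := fun i hi => by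
    have hi' := Finset.disjoint_left.1 ht hi
    rw [hfin.mem_toFinset, mem_ofPred_eq, not_not] at hi'
    exact hi'.le
  exact (norm_sum_smul_le_of_pairwise_mul_eq_zero hdisj hg (half_pos hε).le hsmall).trans_lt
    (half_lt_self hε)

lemma exists_linearIsometry_hasSum_smul (hdisj : Pairwise fun i j => g i * g j = 0)
    (hg : ∀ i, ‖g i‖ = 1) :
    ∃ J : C₀(ι, 𝕜) →ₗᵢ[𝕜] C(X, 𝕜), ∀ a, HasSum (fun i => a i • g i) (J a) := by
  have hsum := summable_smul_of_pairwise_mul_eq_zero hdisj fun i => (hg i).le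
  let J : C₀(ι, 𝕜) →ₗ[𝕜] C(X, 𝕜) :=
    { toFun := fun a => ∑' i, a i • g i
      map_add' := fun a b => by
        simpa only [ZeroAtInftyContinuousMap.add_apply, add_smul] using
          (hsum a).tsum_add (hsum b)
      map_smul' := fun r a => by
        simpa only [ZeroAtInftyContinuousMap.smul_apply, smul_assoc, RingHom.id_apply] using
          (hsum a).tsum_const_smul r }
  have hJ (a : C₀(ι, 𝕜)) : HasSum (fun i => a i • g i) (J a) := (hsum a).hasSum
  have hnorm (a : C₀(ι, 𝕜)) : ‖J a‖ = ‖a‖ := by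
    refine (norm_le_of_hasSum_smul hdisj (fun i => (hg i).le) (hJ a) (norm_nonneg a)
      a.toBCF.norm_coe_le_norm).antisymm ?_
    refine (a.toBCF.norm_le (norm_nonneg (J a))).2 fun i => ?_
    calc ‖a i‖ = ‖a i • g i‖ := by rw [norm_smul, hg, mul_one]
      _ ≤ ‖J a‖ := norm_smul_le_of_hasSum_smul hdisj (hJ a) i
  exact ⟨⟨J, hnorm⟩, hJ⟩

end DisjointFunctions

theorem exists_isometric_lipschitz_copy_of_c0_general
    {K : Type*} [TopologicalSpace K] [CompactSpace K] [NormalSpace K] (d : PseudoMetric K ℝ)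
    (hd : LowerSemicontinuous fun p : K × K => d p.1 p.2)
    (hstrict : ∃ U : Set K, (∀ x ∈ U, ∃ ε > 0, {y : K | d x y < ε} ⊆ U) ∧ ¬ IsOpen U) :
    ∃ J : C₀(ℕ, ℝ) →ₗᵢ[ℝ] C(K, ℝ), ∃ L ≥ 0, ∀ a x y, |J a x - J a y| ≤ L * ‖a‖ * d x y := by
  obtain ⟨U, hU, hopen⟩ := hstrict
  obtain ⟨x₀, ε, hε, hfar⟩ := exists_frequently_le_of_not_isOpen hU hopen
  have hc : 0 < 4 / ε := by positivity
  have hfreq : ∃ᶠ y in 𝓝 x₀, 3 < 4 / ε * d x₀ y := hfar.mono fun y hy =>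
    calc (3 : ℝ) < 4 / ε * ε := by rw [div_mul_cancel₀ _ hε.ne']; norm_num
      _ ≤ 4 / ε * d x₀ y := mul_le_mul_of_nonneg_left hy hc.le
  obtain ⟨g, hdisj, hnorm, hlip⟩ := exists_seq_disjoint_norm_one_lipschitz hd hc hfreq
  obtain ⟨J, hJ⟩ := exists_linearIsometry_hasSum_smul hdisj hnorm
  refine ⟨J, 2 * (4 / ε), by positivity, fun a x y => ?_⟩
  calc |J a x - J a y| ≤ 2 * (‖a‖ * (4 / ε * d x y)) :=
        norm_sub_le_of_hasSum_smul hdisj (hJ a) (norm_nonneg a) a.toBCF.norm_coe_le_norm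
          (mul_nonneg hc.le (d.nonneg x y)) fun n => hlip n x y
    _ = 2 * (4 / ε) * ‖a‖ * d x y := by ring

/-- If the topology generated on `K` by `d` is strictly finer than the
topology of `K`, then there is a linear isometric embedding of `c₀` into `C(K)` whose
range consists of `d`-Lipschitz functions. Here `c₀` is the Banach space of real sequences
converging to `0` with the supremum norm, formalized as `ZeroAtInftyContinuousMap ℕ ℝ`. -/
theorem exists_isometric_lipschitz_copy_of_c0
    {K : Type*} [TopologicalSpace K] [CompactSpace K] [T2Space K]
    (d : K → K → ℝ)
    (hd_nonneg : ∀ x y, 0 ≤ d x y)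
    (hd_symm : ∀ x y, d x y = d y x)
    (hd_eq : ∀ x y, d x y = 0 ↔ x = y)
    (hd_tri : ∀ x y z, d x z ≤ d x y + d y z)
    (hd_lsc : LowerSemicontinuous fun p : K × K => d p.1 p.2)
    (hfiner : ∀ U : Set K, IsOpen U → ∀ x ∈ U, ∃ ε > 0, {y : K | d x y < ε} ⊆ U)
    (hstrict : ∃ U : Set K, (∀ x ∈ U, ∃ ε > 0, {y : K | d x y < ε} ⊆ U) ∧ ¬ IsOpen U) :
    ∃ J : ZeroAtInftyContinuousMap ℕ ℝ →L[ℝ] C(K, ℝ),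
      (∀ a : ZeroAtInftyContinuousMap ℕ ℝ, ‖J a‖ = ‖a‖) ∧
      (∀ a : ZeroAtInftyContinuousMap ℕ ℝ,
        ∃ L ≥ 0, ∀ t₁ t₂ : K, |J a t₁ - J a t₂| ≤ L * d t₁ t₂) := by
  obtain ⟨J, L, hL, hJ⟩ := exists_isometric_lipschitz_copy_of_c0_general
    ⟨d, fun x => (hd_eq x x).2 rfl, hd_symm, hd_tri⟩ hd_lsc hstrict
  exact ⟨J.toContinuousLinearMap, J.norm_map,
    fun a => ⟨L * ‖a‖, mul_nonneg hL (norm_nonneg a), hJ a⟩⟩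
end

section
/- Let K be a compact metric space with metric d and let n ∈ ℕ. The following are equivalent: (i) there exists a surjective Lipschitz map φ : K → [0,1]ⁿ (with [0,1]ⁿ carrying the Euclidean metric); (ii) for every (n+1)-dimensional real normed space X there exists a linear isometric embedding of X into C(K) whose range consists of d-Lipschitz functions; (iii) there exists a linear isometric embedding of the (n+1)-dimensional Euclidean space (ℝ^{n+1}, ‖·‖₂) into C(K) whose range consists of d-Lipschitz functions. -/
/-!
Everything goes through Lipschitz maps `ψ : K → Y` that hit every unit vector of `Y` up to sign.
A closed hemisphere of the unit sphere of an `(n+1)`-dimensional `Y` is a Lipschitz image of a cube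
`[0,1]ⁿ`, so a Lipschitz surjection onto the cube yields such a `ψ`. If `Y` is the dual of `X` and
`‖ψ t‖ ≤ 1`, then, `x` being normed by some unit functional and hence up to sign by some `ψ t`, the
map `x ↦ (t ↦ ψ t x)` is isometric. Conversely, an isometric embedding of a Hilbert space `E` into
`C(K)` represents evaluation at `t` by a vector `ψ t` of the unit ball; a unit vector `x` is normed
at some `t`, and the equality case of the Cauchy-Schwarz inequality forces `ψ t = ± x`. Finally, the
unit sphere of `ℝⁿ⁺¹` maps onto `[0,1]ⁿ` by an even Lipschitz map.
-/

open NormedSpace Set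

open scoped NNReal RealInnerProductSpace

universe u v

/-- The cube `[0,1]^ι` as a subset of Euclidean space. -/
def unitCube (ι : Type*) : Set (EuclideanSpace ℝ ι) :=
  {x | ∀ i, x i ∈ Icc (0 : ℝ) 1}

/-- `ψ` hits every unit vector up to sign, so that its range and the antipodal copy of its range
together contain the unit sphere. -/
def CoversSphereUpToSign {α Y : Type*} [SeminormedAddCommGroup Y] (ψ : α → Y) : Prop :=
  ∀ y, ‖y‖ = 1 → ∃ t, ψ t = y ∨ ψ t = -y

/-- `X` embeds linearly and isometrically into `C(K)` with range consisting of Lipschitz functions;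
the Lipschitz constant may depend on the function. -/
def LipschitzEmbeddable (X K : Type*) [SeminormedAddCommGroup X] [NormedSpace ℝ X]
    [PseudoMetricSpace K] [CompactSpace K] : Prop :=
  ∃ J : X →ₗᵢ[ℝ] C(K, ℝ), ∀ x, ∃ C, LipschitzWith C (J x)

section Normalize

variable {Y : Type*} [NormedAddCommGroup Y] [NormedSpace ℝ Y]

theorem norm_normalize_le_one (a : Y) : ‖normalize a‖ ≤ 1 := by
  rcases eq_or_ne a 0 with rfl | ha
  · simp
  · exact (norm_normalize ha).le

theorem norm_mul_norm_normalize_sub_normalize_le (a b : Y) :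
    ‖a‖ * ‖normalize a - normalize b‖ ≤ 2 * ‖a - b‖ := by
  have key : ‖a‖ • (normalize a - normalize b) = (a - b) + (‖b‖ - ‖a‖) • normalize b := by
    rw [smul_sub, sub_smul, norm_smul_normalize, norm_smul_normalize]
    abel
  calc ‖a‖ * ‖normalize a - normalize b‖
      = ‖(a - b) + (‖b‖ - ‖a‖) • normalize b‖ := by rw [← key, norm_smul, norm_norm]
    _ ≤ ‖a - b‖ + |‖b‖ - ‖a‖| * ‖normalize b‖ := by
        rw [← Real.norm_eq_abs, ← norm_smul]
        exact norm_add_le _ _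
    _ ≤ ‖a - b‖ + ‖a - b‖ * 1 := by
        gcongr
        · rw [norm_sub_rev]
          exact abs_norm_sub_norm_le b a
        · exact norm_normalize_le_one b
    _ = 2 * ‖a - b‖ := by ring

theorem lipschitzOnWith_normalize {r : ℝ≥0} (hr : 0 < r) :
    LipschitzOnWith (2 / r) (normalize : Y → Y) {y | r ≤ ‖y‖} := by
  refine lipschitzOnWith_iff_norm_sub_le.2 fun a ha b _ => ?_
  have hr' : (0 : ℝ) < r := hr
  rw [NNReal.coe_div, NNReal.coe_ofNat, div_mul_eq_mul_div, le_div_iff₀' hr']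
  calc (r : ℝ) * ‖normalize a - normalize b‖ ≤ ‖a‖ * ‖normalize a - normalize b‖ := by
        gcongr
        exact ha
    _ ≤ 2 * ‖a - b‖ := norm_mul_norm_normalize_sub_normalize_le a b

end Normalize

section Hemisphere

variable {V Y : Type*} [NormedAddCommGroup V]

theorem half_le_norm_one_sub_norm_prodMk (v : V) : 1 / 2 ≤ ‖(1 - ‖v‖, v)‖ := by
  have h₁ : 1 - ‖v‖ ≤ ‖(1 - ‖v‖, v)‖ := (le_abs_self _).trans (norm_fst_le (1 - ‖v‖, v))
  have h₂ : ‖v‖ ≤ ‖(1 - ‖v‖, v)‖ := norm_snd_le (1 - ‖v‖, v)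
  linarith

theorem lipschitzWith_one_sub_norm_prodMk : LipschitzWith 1 fun v : V => (1 - ‖v‖, v) := by
  have h : LipschitzWith 1 fun v : V => 1 - ‖v‖ := by
    simpa using (LipschitzWith.const (1 : ℝ)).sub (lipschitzWith_one_norm (E := V))
  simpa using h.prodMk LipschitzWith.id

variable [NormedSpace ℝ V] [NormedAddCommGroup Y] [NormedSpace ℝ Y]

theorem exists_pos_smul_one_sub_norm_prodMk_eq {q : ℝ × V} (hq : q ≠ 0) (h : 0 ≤ q.1) :
    ∃ r : ℝ, 0 < r ∧ ∃ v : V, ‖v‖ ≤ 1 ∧ r • (1 - ‖v‖, v) = q := by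
  obtain ⟨a, w⟩ := q
  have hr : 0 < a + ‖w‖ := by
    refine (add_nonneg h (norm_nonneg w)).lt_of_ne fun h₀ => hq ?_
    obtain ⟨ha, hw⟩ := (add_eq_zero_iff_of_nonneg h (norm_nonneg w)).1 h₀.symm
    exact Prod.ext ha (norm_eq_zero.1 hw)
  have hnorm : ‖(a + ‖w‖)⁻¹ • w‖ = (a + ‖w‖)⁻¹ * ‖w‖ := by
    rw [norm_smul, norm_inv, Real.norm_of_nonneg hr.le]
  refine ⟨a + ‖w‖, hr, (a + ‖w‖)⁻¹ • w, ?_, Prod.ext ?_ (smul_inv_smul₀ hr.ne' w)⟩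
  · rw [hnorm, inv_mul_le_one₀ hr]
    exact le_add_of_nonneg_left h
  · change (a + ‖w‖) * (1 - ‖(a + ‖w‖)⁻¹ • w‖) = a
    rw [hnorm]
    field_simp
    ring

/-- The graph of `1 - ‖v‖` over `V`, seen in `Y` through `e` and projected radially onto the unit
sphere. It sends the closed unit ball of `V` onto the hemisphere over `[0, ∞) × V`. -/
noncomputable def hemisphereMap (e : (ℝ × V) ≃L[ℝ] Y) (v : V) : Y :=
  normalize (e (1 - ‖v‖, v))

theorem exists_pos_forall_le_norm_map (e : (ℝ × V) ≃L[ℝ] Y) :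
    ∃ r : ℝ≥0, 0 < r ∧ ∀ v : V, r ≤ ‖e (1 - ‖v‖, v)‖ := by
  obtain ⟨C, hC, he⟩ := antilipschitzWith_iff_exists_mul_le_norm.1 ⟨_, e.antilipschitz⟩
  refine ⟨⟨C * (1 / 2), by positivity⟩, mul_pos hC one_half_pos, fun v => ?_⟩
  exact (mul_le_mul_of_nonneg_left (half_le_norm_one_sub_norm_prodMk v) hC.le).trans (he _)

theorem norm_hemisphereMap (e : (ℝ × V) ≃L[ℝ] Y) (v : V) : ‖hemisphereMap e v‖ = 1 := by
  obtain ⟨r, hr, hle⟩ := exists_pos_forall_le_norm_map e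
  have hr' : (0 : ℝ) < r := hr
  exact norm_normalize (norm_pos_iff.1 (hr'.trans_le (hle v)))

theorem exists_lipschitzWith_hemisphereMap (e : (ℝ × V) ≃L[ℝ] Y) :
    ∃ C, LipschitzWith C (hemisphereMap e) := by
  obtain ⟨r, hr, hle⟩ := exists_pos_forall_le_norm_map e
  have hgraph := e.lipschitz.comp (lipschitzWith_one_sub_norm_prodMk (V := V))
  exact ⟨_, lipschitzOnWith_univ.1 ((lipschitzOnWith_normalize hr).comp
    (hgraph.lipschitzOnWith (s := univ)) fun v _ => hle v)⟩

theorem exists_hemisphereMap_eq_or_eq_neg (e : (ℝ × V) ≃L[ℝ] Y) {y : Y} (hy : ‖y‖ = 1) :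
    ∃ v, ‖v‖ ≤ 1 ∧ (hemisphereMap e v = y ∨ hemisphereMap e v = -y) := by
  have upper (y : Y) (hy : ‖y‖ = 1) (h : 0 ≤ (e.symm y).1) :
      ∃ v, ‖v‖ ≤ 1 ∧ hemisphereMap e v = y := by
    have hy₀ : e.symm y ≠ 0 := by
      rw [ne_eq, e.symm.map_eq_zero_iff, ← norm_eq_zero, hy]
      exact one_ne_zero
    obtain ⟨r, hr, v, hv, hrv⟩ := exists_pos_smul_one_sub_norm_prodMk_eq hy₀ h
    refine ⟨v, hv, ?_⟩
    rw [hemisphereMap, ← normalize_smul_of_pos hr, ← map_smul, hrv, e.apply_symm_apply,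
      normalize_eq_self_of_norm_eq_one hy]
  rcases le_total 0 (e.symm y).1 with h | h
  · obtain ⟨v, hv, hvy⟩ := upper y hy h
    exact ⟨v, hv, .inl hvy⟩
  · obtain ⟨v, hv, hvy⟩ := upper (-y) (by rwa [norm_neg]) (by simpa using h)
    exact ⟨v, hv, .inr hvy⟩

end Hemisphere

section Cube

theorem exists_lipschitzWith_unitCube_surjOn_closedBall (ι : Type*) [Fintype ι] :
    ∃ f : EuclideanSpace ℝ ι → ι → ℝ, (∃ C, LipschitzWith C f) ∧
      SurjOn f (unitCube ι) (Metric.closedBall 0 1) := by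
  refine ⟨fun x => (2 : ℝ) • x.ofLp - 1, ⟨_, ((lipschitzWith_smul (2 : ℝ)).comp
    (PiLp.lipschitzWith_ofLp 2 _)).sub (LipschitzWith.const _)⟩, fun v hv => ?_⟩
  refine ⟨WithLp.toLp 2 fun i => (v i + 1) / 2, fun i => ?_, ?_⟩
  · obtain ⟨hl, hu⟩ := abs_le.1 ((norm_le_pi_norm v i).trans (mem_closedBall_zero_iff.1 hv))
    constructor <;> dsimp only <;> linarith
  · ext i
    simp only [Pi.sub_apply, Pi.smul_apply, smul_eq_mul, Pi.one_apply]
    ring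

theorem exists_lipschitzWith_coversSphereUpToSign_of_unitCube {K ι Y : Type*}
    [PseudoEMetricSpace K] [Fintype ι] [NormedAddCommGroup Y] [NormedSpace ℝ Y]
    {φ : K → EuclideanSpace ℝ ι} {C : ℝ≥0} (hφ : LipschitzWith C φ) (hcube : unitCube ι ⊆ range φ)
    (hY : Module.finrank ℝ Y = Fintype.card ι + 1) :
    ∃ ψ : K → Y, (∃ C, LipschitzWith C ψ) ∧ (∀ t, ‖ψ t‖ = 1) ∧ CoversSphereUpToSign ψ := by
  have : FiniteDimensional ℝ Y := Module.finite_of_finrank_pos (by lia)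
  let e : (ℝ × (ι → ℝ)) ≃L[ℝ] Y := ContinuousLinearEquiv.ofFinrankEq (by simp [hY, add_comm])
  obtain ⟨f, ⟨Cf, hf⟩, hsurj⟩ := exists_lipschitzWith_unitCube_surjOn_closedBall ι
  obtain ⟨Ce, he⟩ := exists_lipschitzWith_hemisphereMap e
  refine ⟨hemisphereMap e ∘ f ∘ φ, ⟨_, he.comp (hf.comp hφ)⟩, fun _ => norm_hemisphereMap e _,
    fun y hy => ?_⟩
  obtain ⟨v, hv, hvy⟩ := exists_hemisphereMap_eq_or_eq_neg e hy
  obtain ⟨x, hx, rfl⟩ := hsurj (mem_closedBall_zero_iff.2 hv)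
  obtain ⟨t, rfl⟩ := hcube hx
  exact ⟨t, hvy⟩

theorem norm_sq_le_card_of_mem_unitCube {ι : Type*} [Fintype ι] {x : EuclideanSpace ℝ ι}
    (hx : x ∈ unitCube ι) : ‖x‖ ^ 2 ≤ Fintype.card ι := by
  rw [EuclideanSpace.real_norm_sq_eq, Fintype.card_eq_sum_ones, Nat.cast_sum]
  refine Finset.sum_le_sum fun i _ => ?_
  simpa using pow_le_one₀ (n := 2) (hx i).1 (hx i).2

theorem exists_norm_eq_one_succ_eq {n : ℕ} {w : EuclideanSpace ℝ (Fin n)} (hw : ‖w‖ ≤ 1) :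
    ∃ x : EuclideanSpace ℝ (Fin (n + 1)), ‖x‖ = 1 ∧ ∀ i : Fin n, x i.succ = w i := by
  have hw' : 0 ≤ 1 - ‖w‖ ^ 2 := sub_nonneg.2 (pow_le_one₀ (norm_nonneg w) hw)
  refine ⟨WithLp.toLp 2 (Fin.cons √(1 - ‖w‖ ^ 2) w.ofLp), ?_, fun i => rfl⟩
  rw [← sq_eq_sq₀ (norm_nonneg _) zero_le_one, EuclideanSpace.real_norm_sq_eq, Fin.sum_univ_succ]
  simp only [Fin.cons_zero, Fin.cons_succ]
  rw [Real.sq_sqrt hw', ← EuclideanSpace.real_norm_sq_eq]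
  ring

/-- Drop the first coordinate, fold by absolute values and truncate to `[0,1]ⁿ`. The factor `n + 1`
makes the image of the unit sphere fill the cube. -/
noncomputable def cubeFold (n : ℕ) (x : EuclideanSpace ℝ (Fin (n + 1))) :
    EuclideanSpace ℝ (Fin n) :=
  WithLp.toLp 2 fun i => min 1 ((n + 1) * |x i.succ|)

theorem cubeFold_neg {n : ℕ} (x : EuclideanSpace ℝ (Fin (n + 1))) :
    cubeFold n (-x) = cubeFold n x := by
  simp only [cubeFold, PiLp.neg_apply, abs_neg]

theorem cubeFold_mem_unitCube {n : ℕ} (x : EuclideanSpace ℝ (Fin (n + 1))) :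
    cubeFold n x ∈ unitCube (Fin n) :=
  fun _ => ⟨le_min zero_le_one (by positivity), min_le_left _ _⟩

theorem exists_lipschitzWith_cubeFold (n : ℕ) : ∃ C, LipschitzWith C (cubeFold n) := by
  have htail (i : Fin n) :
      LipschitzWith (1 * 1) fun x : EuclideanSpace ℝ (Fin (n + 1)) => x i.succ :=
    (LipschitzWith.eval i.succ).comp (PiLp.lipschitzWith_ofLp 2 _)
  have hcoord (i : Fin n) :
      LipschitzWith (‖(n + 1 : ℝ)‖₊ * (1 * (1 * 1)))
        fun x : EuclideanSpace ℝ (Fin (n + 1)) => min 1 ((n + 1) * |x i.succ|) :=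
    ((lipschitzWith_smul (n + 1 : ℝ)).comp (lipschitzWith_one_norm.comp (htail i))).const_min 1
  have hpi : LipschitzWith _ fun (x : EuclideanSpace ℝ (Fin (n + 1))) (i : Fin n) =>
      min 1 ((n + 1) * |x i.succ|) := fun x y => edist_pi_le_iff.2 fun i => hcoord i x y
  exact ⟨_, (PiLp.lipschitzWith_toLp 2 _).comp hpi⟩

theorem exists_norm_eq_one_cubeFold_eq {n : ℕ} {c : EuclideanSpace ℝ (Fin n)}
    (hc : c ∈ unitCube (Fin n)) : ∃ x, ‖x‖ = 1 ∧ cubeFold n x = c := by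
  have hn : (0 : ℝ) < n + 1 := by positivity
  have hnorm : ‖(n + 1 : ℝ)⁻¹ • c‖ ≤ 1 := by
    rw [norm_smul, norm_inv, Real.norm_of_nonneg hn.le, inv_mul_le_one₀ hn]
    have hcard : ‖c‖ ^ 2 ≤ n := by simpa using norm_sq_le_card_of_mem_unitCube hc
    exact (sq_le_sq₀ (norm_nonneg c) hn.le).1 (hcard.trans (by nlinarith))
  obtain ⟨x, hx, hxc⟩ := exists_norm_eq_one_succ_eq hnorm
  refine ⟨x, hx, ?_⟩
  ext i
  have hfold : (n + 1 : ℝ) * |x i.succ| = c i := by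
    rw [hxc, PiLp.smul_apply, smul_eq_mul, abs_mul, abs_inv, abs_of_pos hn,
      abs_of_nonneg (hc i).1, mul_inv_cancel_left₀ hn.ne']
  change min 1 ((n + 1 : ℝ) * |x i.succ|) = c i
  rw [hfold, min_eq_right (hc i).2]

theorem CoversSphereUpToSign.range_cubeFold_comp {α : Type*} {n : ℕ}
    {ψ : α → EuclideanSpace ℝ (Fin (n + 1))} (hψ : CoversSphereUpToSign ψ) :
    range (cubeFold n ∘ ψ) = unitCube (Fin n) := by
  refine Subset.antisymm (range_subset_iff.2 fun t => cubeFold_mem_unitCube (ψ t)) fun c hc => ?_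
  obtain ⟨x, hx, rfl⟩ := exists_norm_eq_one_cubeFold_eq hc
  obtain ⟨t, ht | ht⟩ := hψ x hx
  · exact ⟨t, congrArg (cubeFold n) ht⟩
  · exact ⟨t, (congrArg (cubeFold n) ht).trans (cubeFold_neg x)⟩

end Cube

section Embedding

theorem exists_lipschitzWith_of_forall_apply {α 𝕜 E F : Type*} [PseudoMetricSpace α]
    [RCLike 𝕜] [SeminormedAddCommGroup E] [NormedSpace 𝕜 E] [CompleteSpace E]
    [SeminormedAddCommGroup F] [NormedSpace 𝕜 F] {g : α → E →L[𝕜] F}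
    (h : ∀ x, ∃ C, LipschitzWith C fun t => g t x) : ∃ C, LipschitzWith C g := by
  have hpoint : ∀ x, ∃ C, ∀ p : α × α,
      ‖((dist p.1 p.2 : 𝕜)⁻¹ • (g p.1 - g p.2)) x‖ ≤ C := fun x => by
    obtain ⟨C, hC⟩ := h x
    refine ⟨C, fun p => ?_⟩
    rw [smul_apply, sub_apply, norm_smul, norm_inv,
      RCLike.norm_ofReal, abs_dist, ← dist_eq_norm]
    exact inv_mul_le_of_le_mul₀ dist_nonneg C.coe_nonneg
      ((hC.dist_le_mul p.1 p.2).trans_eq (mul_comm _ _))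
  obtain ⟨C, hC⟩ := banach_steinhaus hpoint
  refine ⟨_, LipschitzWith.of_dist_le' (K := C) fun s t => ?_⟩
  rw [dist_eq_norm]
  rcases (dist_nonneg (x := s) (y := t)).eq_or_lt with hst | hst
  · refine ContinuousLinearMap.opNorm_le_bound _ (by rw [← hst, mul_zero]) fun x => ?_
    obtain ⟨L, hL⟩ := h x
    simpa [← hst, dist_eq_norm] using hL.dist_le_mul s t
  · have h := hC (s, t)
    rwa [norm_smul, norm_inv, RCLike.norm_ofReal, abs_dist, inv_mul_le_iff₀' hst] at h

theorem exists_norm_apply_eq_norm {α F : Type*} [TopologicalSpace α] [CompactSpace α] [Nonempty α]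
    [SeminormedAddCommGroup F] (f : C(α, F)) : ∃ t, ‖f t‖ = ‖f‖ := by
  obtain ⟨t, -, ht⟩ := isCompact_univ.exists_isMaxOn univ_nonempty f.continuous.norm.continuousOn
  exact ⟨t, (f.norm_coe_le_norm t).antisymm
    ((f.norm_le (norm_nonneg _)).2 fun s => ht (mem_univ s))⟩

theorem eq_or_eq_neg_of_abs_inner_eq_one {E : Type*} [NormedAddCommGroup E] [InnerProductSpace ℝ E]
    {w x : E} (hw : ‖w‖ ≤ 1) (hx : ‖x‖ = 1) (h : |⟪w, x⟫| = 1) : w = x ∨ w = -x := by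
  have eq_of_inner {y : E} (hy : ‖y‖ = 1) (h : ⟪w, y⟫ = 1) : w = y :=
    eq_of_norm_le_re_inner_eq_norm_sq (𝕜 := ℝ) (hw.trans_eq hy.symm) (by simp [h, hy])
  rcases eq_or_eq_neg_of_abs_eq h with h | h
  · exact .inl (eq_of_inner hx h)
  · exact .inr (eq_of_inner (by rwa [norm_neg]) (by rw [inner_neg_right, h, neg_neg]))

variable {K : Type*} [PseudoMetricSpace K] [CompactSpace K]

theorem lipschitzEmbeddable_of_coversSphereUpToSign {X : Type*} [NormedAddCommGroup X]
    [NormedSpace ℝ X] {ψ : K → StrongDual ℝ X} {C : ℝ≥0} (hψ : LipschitzWith C ψ)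
    (hle : ∀ t, ‖ψ t‖ ≤ 1) (hcov : CoversSphereUpToSign ψ) : LipschitzEmbeddable X K := by
  have happly (x : X) : LipschitzWith _ fun t => ψ t x :=
    (ContinuousLinearMap.apply ℝ ℝ x).lipschitz.comp hψ
  let J : X →ₗ[ℝ] C(K, ℝ) :=
    { toFun := fun x => ⟨fun t => ψ t x, (happly x).continuous⟩
      map_add' := fun x y => by ext t; exact map_add (ψ t) x y
      map_smul' := fun c x => by ext t; exact map_smul (ψ t) c x }
  refine ⟨⟨J, fun x => le_antisymm ?_ ?_⟩, fun x => ⟨_, happly x⟩⟩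
  · refine (ContinuousMap.norm_le _ (norm_nonneg x)).2 fun t => ?_
    exact ((ψ t).le_of_opNorm_le (hle t) x).trans_eq (one_mul _)
  · rcases eq_or_ne x 0 with rfl | hx
    · simp
    · obtain ⟨f, hf, hfx⟩ := exists_dual_vector ℝ x (norm_ne_zero_iff.2 hx)
      obtain ⟨t, ht⟩ := hcov f hf
      have hnorming : ‖ψ t x‖ = ‖x‖ := by rcases ht with ht | ht <;> simp [ht, hfx]
      exact hnorming.symm.trans_le ((J x).norm_coe_le_norm t)

namespace LipschitzEmbeddable

theorem of_linearIsometry {X Y : Type*} [SeminormedAddCommGroup X] [NormedSpace ℝ X]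
    [SeminormedAddCommGroup Y] [NormedSpace ℝ Y] (h : LipschitzEmbeddable Y K) (f : X →ₗᵢ[ℝ] Y) :
    LipschitzEmbeddable X K :=
  let ⟨J, hJ⟩ := h
  ⟨J.comp f, fun x => hJ (f x)⟩

theorem exists_coversSphereUpToSign {E : Type*} [NormedAddCommGroup E] [InnerProductSpace ℝ E]
    [CompleteSpace E] (h : LipschitzEmbeddable E K) :
    ∃ ψ : K → E, (∃ C, LipschitzWith C ψ) ∧ CoversSphereUpToSign ψ := by
  obtain ⟨J, hJ⟩ := h
  let ev (t : K) : StrongDual ℝ E := (ContinuousMap.evalCLM ℝ t).comp J.toContinuousLinearMap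
  have hev (t : K) : ‖ev t‖ ≤ 1 := ContinuousLinearMap.opNorm_le_bound _ zero_le_one fun x =>
    ((J x).norm_coe_le_norm t).trans_eq (by rw [J.norm_map, one_mul])
  obtain ⟨C, hC⟩ := exists_lipschitzWith_of_forall_apply (g := ev) hJ
  refine ⟨fun t => (InnerProductSpace.toDual ℝ E).symm (ev t),
    ⟨_, (InnerProductSpace.toDual ℝ E).symm.lipschitz.comp hC⟩, fun x hx => ?_⟩
  have : Nonempty K := not_isEmpty_iff.1 fun _ =>
    zero_ne_one (α := ℝ) (by rw [← hx, ← J.norm_map, Subsingleton.elim (J x) 0, norm_zero])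
  obtain ⟨t, ht⟩ := exists_norm_apply_eq_norm (J x)
  refine ⟨t, eq_or_eq_neg_of_abs_inner_eq_one ?_ hx ?_⟩
  · rw [LinearIsometryEquiv.norm_map]
    exact hev t
  · rw [InnerProductSpace.toDual_symm_apply, ← Real.norm_eq_abs, ← hx, ← J.norm_map]
    exact ht

end LipschitzEmbeddable

theorem lipschitzEmbeddable_iff_exists_continuousLinearMap {X : Type*} [SeminormedAddCommGroup X]
    [NormedSpace ℝ X] :
    LipschitzEmbeddable X K ↔ ∃ J : X →L[ℝ] C(K, ℝ), (∀ x, ‖J x‖ = ‖x‖) ∧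
      ∀ x, ∃ L ≥ 0, ∀ t₁ t₂, |J x t₁ - J x t₂| ≤ L * dist t₁ t₂ := by
  refine ⟨fun ⟨J, hJ⟩ => ⟨J.toContinuousLinearMap, J.norm_map, fun x => ?_⟩,
    fun ⟨J, hnorm, hJ⟩ => ⟨⟨J.toLinearMap, hnorm⟩, fun x => ?_⟩⟩
  · obtain ⟨C, hC⟩ := hJ x
    exact ⟨C, C.coe_nonneg, hC.dist_le_mul⟩
  · obtain ⟨L, -, hL⟩ := hJ x
    exact ⟨_, LipschitzWith.of_dist_le' hL⟩

theorem lipschitzEmbeddable_of_unitCube {ι X : Type*} [Fintype ι] [NormedAddCommGroup X]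
    [NormedSpace ℝ X] {φ : K → EuclideanSpace ℝ ι} {C : ℝ≥0} (hφ : LipschitzWith C φ)
    (hcube : unitCube ι ⊆ range φ) (hX : Module.finrank ℝ X = Fintype.card ι + 1) :
    LipschitzEmbeddable X K := by
  have : FiniteDimensional ℝ X := Module.finite_of_finrank_pos (by lia)
  have hdual : Module.finrank ℝ (StrongDual ℝ X) = Fintype.card ι + 1 := by
    rw [← hX, ← Subspace.dual_finrank_eq (K := ℝ) (V := X)]
    exact (LinearMap.toContinuousLinearMap (𝕜 := ℝ) (E := X) (F' := ℝ)).symm.finrank_eq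
  obtain ⟨ψ, ⟨C', hψ⟩, hnorm, hcov⟩ :=
    exists_lipschitzWith_coversSphereUpToSign_of_unitCube hφ hcube hdual
  exact lipschitzEmbeddable_of_coversSphereUpToSign hψ (fun t => (hnorm t).le) hcov

theorem LipschitzEmbeddable.exists_range_eq_unitCube {n : ℕ}
    (h : LipschitzEmbeddable (EuclideanSpace ℝ (Fin (n + 1))) K) :
    ∃ φ : K → EuclideanSpace ℝ (Fin n), (∃ C, LipschitzWith C φ) ∧
      range φ = unitCube (Fin n) := by
  obtain ⟨ψ, ⟨C, hψ⟩, hcov⟩ := h.exists_coversSphereUpToSign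
  obtain ⟨C', hfold⟩ := exists_lipschitzWith_cubeFold n
  exact ⟨cubeFold n ∘ ψ, ⟨_, hfold.comp hψ⟩, hcov.range_cubeFold_comp⟩

end Embedding

theorem lipschitz_cube_surjection_iff_embeddings_general
    {K : Type u} [PseudoMetricSpace K] [CompactSpace K] (n : ℕ) :
    List.TFAE [
      ∃ φ : K → EuclideanSpace ℝ (Fin n), (∃ C, LipschitzWith C φ) ∧ range φ = unitCube (Fin n),
      ∀ (X : Type v) [NormedAddCommGroup X] [NormedSpace ℝ X] [FiniteDimensional ℝ X],
        Module.finrank ℝ X = n + 1 → LipschitzEmbeddable X K,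
      LipschitzEmbeddable (EuclideanSpace ℝ (Fin (n + 1))) K] := by
  tfae_have 1 → 2 := fun ⟨φ, ⟨_, hφ⟩, hcube⟩ X _ _ _ hX =>
    lipschitzEmbeddable_of_unitCube hφ hcube.ge (by rwa [Fintype.card_fin])
  tfae_have 2 → 3 := fun h =>
    (h (EuclideanSpace ℝ (ULift.{v} (Fin (n + 1)))) (by simp)).of_linearIsometry
      (LinearIsometryEquiv.piLpCongrLeft 2 ℝ ℝ Equiv.ulift.symm).toLinearIsometry
  tfae_have 3 → 1 := LipschitzEmbeddable.exists_range_eq_unitCube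
  tfae_finish

/-- Let `K` be a compact metric space and `n ∈ ℕ`. The following are
equivalent: (i) there is a surjective Lipschitz map `φ : K → [0,1]ⁿ` (Euclidean metric);
(ii) every `(n+1)`-dimensional real normed space embeds linearly isometrically into `C(K)`
with `d`-Lipschitz range; (iii) the `(n+1)`-dimensional Euclidean space so embeds. -/
theorem lipschitz_cube_surjection_iff_embeddings
    {K : Type*} [MetricSpace K] [CompactSpace K] (n : ℕ) :
    ((∃ φ : K → EuclideanSpace ℝ (Fin n), (∃ C : NNReal, LipschitzWith C φ) ∧
        Set.range φ = {x : EuclideanSpace ℝ (Fin n) | ∀ i, x i ∈ Set.Icc (0 : ℝ) 1}) ↔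
      (∀ (X : Type) [NormedAddCommGroup X] [NormedSpace ℝ X] [FiniteDimensional ℝ X],
        Module.finrank ℝ X = n + 1 →
        ∃ J : X →L[ℝ] C(K, ℝ), (∀ x : X, ‖J x‖ = ‖x‖) ∧
          (∀ x : X, ∃ L ≥ 0, ∀ t₁ t₂ : K, |J x t₁ - J x t₂| ≤ L * dist t₁ t₂))) ∧
    ((∀ (X : Type) [NormedAddCommGroup X] [NormedSpace ℝ X] [FiniteDimensional ℝ X],
        Module.finrank ℝ X = n + 1 →
        ∃ J : X →L[ℝ] C(K, ℝ), (∀ x : X, ‖J x‖ = ‖x‖) ∧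
          (∀ x : X, ∃ L ≥ 0, ∀ t₁ t₂ : K, |J x t₁ - J x t₂| ≤ L * dist t₁ t₂)) ↔
      (∃ J : EuclideanSpace ℝ (Fin (n + 1)) →L[ℝ] C(K, ℝ),
        (∀ x : EuclideanSpace ℝ (Fin (n + 1)), ‖J x‖ = ‖x‖) ∧
        (∀ x : EuclideanSpace ℝ (Fin (n + 1)),
          ∃ L ≥ 0, ∀ t₁ t₂ : K, |J x t₁ - J x t₂| ≤ L * dist t₁ t₂))) := by
  simp only [← lipschitzEmbeddable_iff_exists_continuousLinearMap]
  have h := lipschitz_cube_surjection_iff_embeddings_general.{_, 0} (K := K) n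
  exact ⟨h.out 0 1, h.out 1 2⟩
end

section
/- The following are equivalent: (i) K is not fragmented by d; (ii) there exists a linear isometric embedding of ℓ₁ (the Banach space of absolutely summable real sequences with the ℓ₁ norm) into C(K) whose range consists of d-Lipschitz functions; (iii) there exists an isomorphic embedding (a bounded linear map which is bounded below) of ℓ₁ into C(K) whose range consists of d-Lipschitz functions. -/
/-!
If `K` is not fragmented by `d`, some nonempty set `A` and some `ε > 0` are such that every nonempty
relatively open subset of `A` has diameter at least `ε`. Lower semicontinuity makes metric
thickenings of compact sets closed, so that Urysohn's construction can be carried out with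
`d`-Lipschitz functions. For finitely many open sets meeting `A` it gives a Lipschitz function, with
constant controlled by `ε`, that is `1` near some point and `-1` near another point of `A` in each
of them. Iterating gives equi-Lipschitz functions `f n` realizing every sequence of signs, so that
`a ↦ ∑ a n • f n` is isometric on `ℓ¹`.

Conversely, let `J` embed `ℓ¹` in `C(K, ℝ)` with Lipschitz range. By Banach–Steinhaus the images
`f n` of the unit vectors share a Lipschitz constant. If `d` fragments `K`, then the uniform
distance fragments the metrizable image of `x ↦ (f n x)`, which is therefore separable for that
distance, and a diagonal argument makes a subsequence of `f` converge pointwise. By Hahn–Banach,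
Riesz representation and dominated convergence, convex combinations of differences of disjoint pairs
of its terms become uniformly small, whereas in `ℓ¹` the corresponding combinations have norm at
least `1`.
-/

open MeasureTheory Set Filter Topology
open scoped lp

namespace LipschitzCopy

section LowerSemicontinuous

lemma isClosed_setOf_exists_mem_le {X Y β : Type*} [TopologicalSpace X] [TopologicalSpace Y]
    [LinearOrder β] {f : X × Y → β} (hf : LowerSemicontinuous f) {C : Set Y} (hC : IsCompact C)
    (s : β) : IsClosed {x | ∃ y ∈ C, f (x, y) ≤ s} := by
  rw [← isOpen_compl_iff, isOpen_iff_forall_mem_open]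
  intro x hx
  obtain ⟨u, v, hu, -, hxu, hCv, huv⟩ := generalized_tube_lemma isCompact_singleton hC
    (hf.isOpen_preimage s) (by
      rintro ⟨x', y⟩ ⟨rfl, hy⟩
      exact not_le.1 fun h ↦ hx ⟨y, hy, h⟩)
  refine ⟨u, ?_, hu, hxu rfl⟩
  rintro x' hx' ⟨y, hy, h⟩
  exact (huv ⟨hx', hCv hy⟩).not_ge h

end LowerSemicontinuous

section Scale

/-- A candidate for the pair of closed sets `{g ≤ value}` and `{value ≤ g}` attached to a continuous
function `g` that is being constructed. -/
structure Level (K : Type*) [TopologicalSpace K] where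
  value : ℝ
  lower : Set K
  upper : Set K
  isClosed_lower : IsClosed lower
  isClosed_upper : IsClosed upper
  lower_union_upper : lower ∪ upper = univ

variable {K : Type*} [TopologicalSpace K] {d : PseudoMetric K ℝ} {S : Set (Level K)}

/-- A set of levels compatible with a function that is `1`-Lipschitz for `d`. The inequality is
strict, which leaves room for inserting further levels. -/
def IsScale (d : PseudoMetric K ℝ) (S : Set (Level K)) : Prop :=
  ∀ a ∈ S, ∀ b ∈ S, a.value < b.value →
    ∀ x ∈ a.lower, ∀ y ∈ b.upper, b.value - a.value < d x y

lemma Level.mem_upper_of_notMem_lower {l : Level K} {x : K} (hx : x ∉ l.lower) : x ∈ l.upper :=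
  (l.lower_union_upper.ge (mem_univ x)).resolve_left hx

lemma Level.mem_lower_of_notMem_upper {l : Level K} {x : K} (hx : x ∉ l.upper) : x ∈ l.lower :=
  (l.lower_union_upper.ge (mem_univ x)).resolve_right hx

lemma exists_isClosed_cover_of_pos (hd : LowerSemicontinuous fun p : K × K ↦ d p.1 p.2)
    {F H : Set K} (hF : IsCompact F) (hH : IsCompact H) (hFH : ∀ x ∈ F, ∀ y ∈ H, 0 < d x y) :
    ∃ C D : Set K, IsClosed C ∧ IsClosed D ∧ C ∪ D = univ ∧ Disjoint F D ∧ Disjoint C H := by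
  obtain ⟨U, V, hU, hV, hFU, hHV, hUV⟩ := generalized_tube_lemma hF hH (hd.isOpen_preimage 0)
    fun p hp ↦ hFH p.1 hp.1 p.2 hp.2
  have hUV_disjoint : U ∩ V = ∅ :=
    eq_empty_of_forall_notMem fun x hx ↦ (hUV (mk_mem_prod hx.1 hx.2)).ne' (d.refl x)
  refine ⟨Vᶜ, Uᶜ, hV.isClosed_compl, hU.isClosed_compl, ?_, ?_, ?_⟩
  · rw [← compl_inter, inter_comm, hUV_disjoint, compl_empty]
  · exact disjoint_compl_right.mono_left hFU
  · exact disjoint_compl_left.mono_right hHV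

lemma IsScale.insert (hS : IsScale d S) {l : Level K}
    (h_below : ∀ a ∈ S, a.value < l.value →
      ∀ x ∈ a.lower, ∀ y ∈ l.upper, l.value - a.value < d x y)
    (h_above : ∀ b ∈ S, l.value < b.value →
      ∀ x ∈ l.lower, ∀ y ∈ b.upper, b.value - l.value < d x y) :
    IsScale d (insert l S) := by
  rintro a (rfl | ha) b (rfl | hb) hab
  · exact (lt_irrefl _ hab).elim
  · exact h_above b hb hab
  · exact h_below a ha hab
  · exact hS a ha b hb hab

variable [CompactSpace K]

lemma IsScale.exists_insert (hd : LowerSemicontinuous fun p : K × K ↦ d p.1 p.2)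
    (hS : IsScale d S) (hS_finite : S.Finite) (q : ℝ) :
    ∃ l : Level K, l.value = q ∧ IsScale d (Insert.insert l S) := by
  let F : Set K := ⋃ a ∈ S ∩ {a | a.value < q}, {x | ∃ y ∈ a.lower, d x y ≤ q - a.value}
  let H : Set K := ⋃ b ∈ S ∩ {b | q < b.value}, {x | ∃ y ∈ b.upper, d x y ≤ b.value - q}
  have hF : IsClosed F := (hS_finite.inter_of_left _).isClosed_biUnion fun a _ ↦
    isClosed_setOf_exists_mem_le hd a.isClosed_lower.isCompact _
  have hH : IsClosed H := (hS_finite.inter_of_left _).isClosed_biUnion fun b _ ↦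
    isClosed_setOf_exists_mem_le hd b.isClosed_upper.isCompact _
  have hFH : ∀ u ∈ F, ∀ v ∈ H, 0 < d u v := by
    intro u hu v hv
    simp only [F, H, mem_iUnion₂] at hu hv
    obtain ⟨a, ⟨ha, haq⟩, x, hx, hux⟩ := hu
    obtain ⟨b, ⟨hb, hqb⟩, y, hy, hvy⟩ := hv
    have hxy := hS a ha b hb (lt_trans haq hqb) x hx y hy
    linarith [d.triangle x u y, d.triangle u v y, d.symm x u]
  obtain ⟨C, D, hC, hD, hCD, hFD, hCH⟩ :=
    exists_isClosed_cover_of_pos hd hF.isCompact hH.isCompact hFH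
  refine ⟨⟨q, C, D, hC, hD, hCD⟩, rfl, hS.insert ?_ ?_⟩
  · intro a ha haq x hx y hy
    by_contra! h
    rw [d.symm] at h
    exact hFD.notMem_of_mem_right hy (mem_biUnion ⟨ha, haq⟩ ⟨x, hx, h⟩)
  · intro b hb hqb x hx y hy
    by_contra! h
    exact hCH.notMem_of_mem_left hx (mem_biUnion ⟨hb, hqb⟩ ⟨y, hy, h⟩)

lemma IsScale.exists_superset (hd : LowerSemicontinuous fun p : K × K ↦ d p.1 p.2)
    (hS : IsScale d S) (hS_finite : S.Finite) {ι : Type*} [Encodable ι] (q : ι → ℝ) :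
    ∃ T, S ⊆ T ∧ IsScale d T ∧ ∀ i, ∃ l ∈ T, l.value = q i := by
  let FiniteScale := {S : Set (Level K) // S.Finite ∧ IsScale d S}
  let withValue (i : ι) : Order.Cofinal FiniteScale :=
    { carrier := {T | ∃ l ∈ T.1, l.value = q i}
      isCofinal := by
        rintro ⟨T, hT_finite, hT⟩
        obtain ⟨l, hl, hlT⟩ := hT.exists_insert hd hT_finite (q i)
        exact ⟨⟨Insert.insert l T, hT_finite.insert l, hlT⟩, ⟨l, mem_insert _ _, hl⟩,
          subset_insert l T⟩ }
  let I := Order.idealOfCofinals ⟨S, hS_finite, hS⟩ withValue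
  refine ⟨⋃ T ∈ I, T.1, subset_biUnion_of_mem (u := fun T : FiniteScale ↦ T.1)
    (Order.mem_idealOfCofinals ⟨S, hS_finite, hS⟩ withValue), ?_, fun i ↦ ?_⟩
  · intro a ha b hb
    obtain ⟨T, hT, haT⟩ := mem_iUnion₂.1 ha
    obtain ⟨T', hT', hbT'⟩ := mem_iUnion₂.1 hb
    obtain ⟨T'', -, hTT'', hT'T''⟩ := I.directed T hT T' hT'
    exact T''.2.2 a (hTT'' haT) b (hT'T'' hbT')
  · obtain ⟨T, ⟨l, hlT, hl⟩, hT⟩ :=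
      Order.cofinal_meets_idealOfCofinals ⟨S, hS_finite, hS⟩ withValue i
    exact ⟨l, mem_iUnion₂.2 ⟨T, hT, hlT⟩, hl⟩

end Scale

section ScaleFunction

variable {K : Type*} [TopologicalSpace K] {d : PseudoMetric K ℝ} {S : Set (Level K)}

/-- The function defined by a scale. It is meaningful when every point lies in a lower set of the
scale and the values of the lower sets containing it are bounded below. -/
noncomputable def scaleFun (S : Set (Level K)) (x : K) : ℝ :=
  sInf (Level.value '' {l ∈ S | x ∈ l.lower})

/-- A scale with levels at all rational values, whose function is bounded below
and above. -/
structure IsCompleteScale (d : PseudoMetric K ℝ) (S : Set (Level K)) : Prop where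
  isScale : IsScale d S
  exists_value_eq : ∀ q : ℚ, ∃ l ∈ S, l.value = q
  exists_bot : ∃ l ∈ S, l.upper = univ
  exists_top : ∃ l ∈ S, l.lower = univ

lemma IsScale.value_le_of_mem (hS : IsScale d S) {a b : Level K} (ha : a ∈ S) (hb : b ∈ S)
    {x : K} (hxa : x ∈ a.upper) (hxb : x ∈ b.lower) : a.value ≤ b.value := by
  by_contra! h
  have := hS b hb a ha h x hxb x hxa
  rw [d.refl] at this
  linarith

namespace IsCompleteScale

lemma nonempty_image_value (hS : IsCompleteScale d S) (x : K) :
    (Level.value '' {l ∈ S | x ∈ l.lower}).Nonempty := by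
  obtain ⟨l, hl, hl_lower⟩ := hS.exists_top
  exact ⟨l.value, l, ⟨hl, hl_lower ▸ mem_univ x⟩, rfl⟩

lemma bddBelow_image_value (hS : IsCompleteScale d S) (x : K) :
    BddBelow (Level.value '' {l ∈ S | x ∈ l.lower}) := by
  obtain ⟨a, ha, ha_upper⟩ := hS.exists_bot
  refine ⟨a.value, ?_⟩
  rintro _ ⟨l, ⟨hl, hx⟩, rfl⟩
  exact hS.isScale.value_le_of_mem ha hl (ha_upper ▸ mem_univ x) hx

lemma scaleFun_le (hS : IsCompleteScale d S) {l : Level K} (hl : l ∈ S) {x : K}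
    (hx : x ∈ l.lower) : scaleFun S x ≤ l.value :=
  csInf_le (hS.bddBelow_image_value x) (mem_image_of_mem _ ⟨hl, hx⟩)

lemma le_scaleFun (hS : IsCompleteScale d S) {l : Level K} (hl : l ∈ S) {x : K}
    (hx : x ∈ l.upper) : l.value ≤ scaleFun S x := by
  refine le_csInf (hS.nonempty_image_value x) ?_
  rintro _ ⟨b, ⟨hb, hxb⟩, rfl⟩
  exact hS.isScale.value_le_of_mem hl hb hx hxb

lemma continuous_scaleFun (hS : IsCompleteScale d S) : Continuous (scaleFun S) := by
  refine continuous_iff_lower_upperSemicontinuous.2 ⟨fun x c hc ↦ ?_, fun x c hc ↦ ?_⟩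
  · obtain ⟨q, hcq, hqx⟩ := exists_rat_btwn hc
    obtain ⟨l, hl, hlq⟩ := hS.exists_value_eq q
    have hx : x ∉ l.lower := fun hx ↦ hqx.not_ge (hlq ▸ hS.scaleFun_le hl hx)
    filter_upwards [l.isClosed_lower.isOpen_compl.mem_nhds hx] with y hy
    exact hcq.trans_le (hlq ▸ hS.le_scaleFun hl (l.mem_upper_of_notMem_lower hy))
  · obtain ⟨q, hxq, hqc⟩ := exists_rat_btwn hc
    obtain ⟨l, hl, hlq⟩ := hS.exists_value_eq q
    have hx : x ∉ l.upper := fun hx ↦ hxq.not_ge (hlq ▸ hS.le_scaleFun hl hx)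
    filter_upwards [l.isClosed_upper.isOpen_compl.mem_nhds hx] with y hy
    exact (hlq ▸ hS.scaleFun_le hl (l.mem_lower_of_notMem_upper hy)).trans_lt hqc

lemma scaleFun_sub_le (hS : IsCompleteScale d S) (x y : K) :
    scaleFun S y - scaleFun S x ≤ d x y := by
  by_contra! h
  obtain ⟨_, ⟨a, ⟨ha, hxa⟩, rfl⟩, ha_lt⟩ := exists_lt_of_csInf_lt (hS.nonempty_image_value x)
    (show sInf _ < scaleFun S y - d x y by rw [← scaleFun]; linarith)
  obtain ⟨q, haq, hqy⟩ := exists_rat_btwn (show a.value + d x y < scaleFun S y by linarith)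
  obtain ⟨b, hb, hbq⟩ := hS.exists_value_eq q
  have hy : y ∈ b.upper :=
    b.mem_upper_of_notMem_lower fun hy ↦ hqy.not_ge (hbq ▸ hS.scaleFun_le hb hy)
  linarith [hS.isScale a ha b hb (by linarith [d.nonneg x y]) x hxa y hy]

lemma abs_scaleFun_sub_le (hS : IsCompleteScale d S) (x y : K) :
    |scaleFun S x - scaleFun S y| ≤ d x y :=
  abs_sub_le_iff.2 ⟨d.symm y x ▸ hS.scaleFun_sub_le y x, hS.scaleFun_sub_le x y⟩

end IsCompleteScale

end ScaleFunction

section Urysohn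

variable {K : Type*} [TopologicalSpace K] [CompactSpace K] {d : PseudoMetric K ℝ}

lemma exists_lipschitz_le_zero_ge (hd : LowerSemicontinuous fun p : K × K ↦ d p.1 p.2)
    {F H : Set K} (hF : IsCompact F) (hH : IsCompact H) {r : ℝ} (hr : 0 ≤ r)
    (hFH : ∀ x ∈ F, ∀ y ∈ H, r < d x y) :
    ∃ g : C(K, ℝ), (∀ x ∈ F, g x ≤ 0) ∧ (∀ x ∈ H, r ≤ g x) ∧ ∀ x y, |g x - g y| ≤ d x y := by
  let bot : Level K := ⟨0, {x | ∃ y ∈ F, d x y ≤ 0}, univ,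
    isClosed_setOf_exists_mem_le hd hF 0, isClosed_univ, union_univ _⟩
  let top : Level K := ⟨r, univ, {x | ∃ y ∈ H, d x y ≤ 0}, isClosed_univ,
    isClosed_setOf_exists_mem_le hd hH 0, univ_union _⟩
  have h_two : IsScale d {bot, top} := by
    rintro a (rfl | rfl) b (rfl | rfl) hab
    · exact (lt_irrefl _ hab).elim
    · rintro x ⟨u, hu, hxu⟩ y ⟨v, hv, hyv⟩
      rw [show top.value - bot.value = r from sub_zero r]
      linarith [hFH u hu v hv, d.triangle u x v, d.triangle x y v, d.symm u x]
    · exact (hr.not_gt hab).elim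
    · exact (lt_irrefl _ hab).elim
  obtain ⟨S, h_two_S, hS, hS_rat⟩ := h_two.exists_superset hd (toFinite _) fun q : ℚ ↦ (q : ℝ)
  have hbot : bot ∈ S := h_two_S (mem_insert _ _)
  have htop : top ∈ S := h_two_S (mem_insert_of_mem _ rfl)
  have hS' : IsCompleteScale d S := ⟨hS, hS_rat, ⟨bot, hbot, rfl⟩, ⟨top, htop, rfl⟩⟩
  exact ⟨⟨scaleFun S, hS'.continuous_scaleFun⟩,
    fun x hx ↦ hS'.scaleFun_le hbot ⟨x, hx, (d.refl x).le⟩,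
    fun x hx ↦ hS'.le_scaleFun htop ⟨x, hx, (d.refl x).le⟩, hS'.abs_scaleFun_sub_le⟩

lemma exists_lipschitz_eventuallyEq (hd : LowerSemicontinuous fun p : K × K ↦ d p.1 p.2)
    {F H : Set K} (hF : IsCompact F) (hH : IsCompact H) {r : ℝ} (hr : 0 < r)
    (hFH : ∀ x ∈ F, ∀ y ∈ H, r < d x y) :
    ∃ f : C(K, ℝ), (∀ x, |f x| ≤ 1) ∧ (∀ x y, |f x - f y| ≤ 4 / r * d x y) ∧
      (∀ x ∈ F, f =ᶠ[𝓝 x] fun _ ↦ -1) ∧ ∀ x ∈ H, f =ᶠ[𝓝 x] fun _ ↦ 1 := by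
  obtain ⟨g, hgF, hgH, hg⟩ := exists_lipschitz_le_zero_ge hd hF hH hr.le hFH
  let k : C(K, ℝ) := ⟨fun x ↦ 4 / r * g x - 2, by fun_prop⟩
  have h_neg_one_le : (-1 : ℝ) ≤ 1 := by norm_num
  let f : C(K, ℝ) := ⟨fun x ↦ projIcc (-1) 1 h_neg_one_le (k x), by fun_prop⟩
  have hkF : ∀ x ∈ F, k x < -1 := fun x hx ↦ by
    have : 4 / r * g x ≤ 0 := mul_nonpos_of_nonneg_of_nonpos (by positivity) (hgF x hx)
    change 4 / r * g x - 2 < -1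
    linarith
  have hkH : ∀ x ∈ H, 1 < k x := fun x hx ↦ by
    have : 4 / r * r ≤ 4 / r * g x := by gcongr; exact hgH x hx
    rw [div_mul_cancel₀ 4 hr.ne'] at this
    change 1 < 4 / r * g x - 2
    linarith
  refine ⟨f, fun x ↦ abs_le.2 (projIcc (-1) 1 h_neg_one_le (k x)).2, fun x y ↦ ?_, fun x hx ↦ ?_,
    fun x hx ↦ ?_⟩
  · calc |f x - f y| ≤ |k x - k y| := abs_projIcc_sub_projIcc h_neg_one_le
      _ = |4 / r * (g x - g y)| := congrArg abs (by simp only [k, ContinuousMap.coe_mk]; ring)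
      _ = 4 / r * |g x - g y| := by rw [abs_mul, abs_of_pos (by positivity)]
      _ ≤ 4 / r * d x y := by gcongr; exact hg x y
  · filter_upwards [k.continuous.continuousAt.eventually_lt continuousAt_const (hkF x hx)]
      with y hy
    exact congrArg Subtype.val (projIcc_of_le_left h_neg_one_le hy.le)
  · filter_upwards [continuousAt_const.eventually_lt k.continuous.continuousAt (hkH x hx)]
      with y hy
    exact congrArg Subtype.val (projIcc_of_right_le h_neg_one_le hy.le)

end Urysohn

section Fragmented

variable {X : Type*} [TopologicalSpace X] {r : X → X → Prop}

/-- Every nonempty set has a nonempty relatively open subset whose points are pairwise related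
by `r`. A space is fragmented by a metric `d` if this holds for `fun x y ↦ d x y < ε` for all
`ε > 0`. -/
def FragmentedBy (r : X → X → Prop) : Prop :=
  ∀ A : Set X, A.Nonempty → ∃ U, IsOpen U ∧ (A ∩ U).Nonempty ∧ ∀ x ∈ A ∩ U, ∀ y ∈ A ∩ U, r x y

/-- No nonempty relatively open subset of `A` has `d`-diameter less than `ε`. -/
def IsNowhereSmall (d : PseudoMetric X ℝ) (A : Set X) (ε : ℝ) : Prop :=
  ∀ U, IsOpen U → (A ∩ U).Nonempty → ∃ x ∈ A ∩ U, ∃ y ∈ A ∩ U, ε ≤ d x y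

lemma forall_pos_fragmentedBy_iff {d : X → X → ℝ} :
    (∀ ε > 0, FragmentedBy fun x y ↦ d x y < ε) ↔
      ∀ A : Set X, A.Nonempty → ∀ ε > 0, ∃ U : Set X, IsOpen U ∧
        (A ∩ U).Nonempty ∧ ∀ x ∈ A ∩ U, ∀ y ∈ A ∩ U, d x y < ε :=
  ⟨fun h A hA ε hε ↦ h ε hε A hA, fun h ε hε A hA ↦ h A hA ε hε⟩

lemma exists_isNowhereSmall_of_not_fragmentedBy {d : PseudoMetric X ℝ} {ε : ℝ}
    (h : ¬ FragmentedBy fun x y ↦ d x y < ε) : ∃ A : Set X, A.Nonempty ∧ IsNowhereSmall d A ε := by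
  rw [FragmentedBy] at h
  push Not at h
  exact h

end Fragmented

section SignSequence

variable {K : Type*} [TopologicalSpace K] {d : PseudoMetric K ℝ} {A : Set K} {ε : ℝ}

lemma IsNowhereSmall.exists_isOpen_far (hA : IsNowhereSmall d A ε) (hε : 0 < ε)
    (hd : LowerSemicontinuous fun p : K × K ↦ d p.1 p.2) {Z : Set K} (hZ : Z.Finite)
    {U : Set K} (hU : IsOpen U) (hAU : (A ∩ U).Nonempty) :
    ∃ V ⊆ U, IsOpen V ∧ (A ∩ V).Nonempty ∧ ∀ z ∈ Z, ∀ x ∈ V, ε / 3 < d z x := by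
  induction Z, hZ using Set.Finite.induction_on with
  | empty => exact ⟨U, Subset.rfl, hU, hAU, by simp⟩
  | @insert z Z _ _ ih =>
    obtain ⟨V, hVU, hV, hAV, hZV⟩ := ih
    obtain ⟨x, hx, y, hy, hxy⟩ := hA V hV hAV
    obtain ⟨w, hw, hzw⟩ : ∃ w ∈ A ∩ V, ε / 3 < d z w := by
      by_contra! h
      linarith [h x hx, h y hy, d.triangle x z y, d.symm x z]
    refine ⟨V ∩ {x | ε / 3 < d z x}, inter_subset_left.trans hVU,
      hV.inter ((hd.comp (Continuous.prodMk_right z)).isOpen_preimage _),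
      ⟨w, hw.1, hw.2, hzw⟩, ?_⟩
    rintro z' (rfl | hz') x ⟨hxV, hzx⟩
    · exact hzx
    · exact hZV z' hz' x hxV

lemma IsNowhereSmall.exists_finite_separated (hA : IsNowhereSmall d A ε) (hε : 0 < ε)
    (hd : LowerSemicontinuous fun p : K × K ↦ d p.1 p.2) {T : Set (Set K)} (hT : T.Finite)
    (hTA : ∀ U ∈ T, IsOpen U ∧ (A ∩ U).Nonempty) :
    ∃ F H : Set K, F.Finite ∧ H.Finite ∧ (∀ x ∈ F, ∀ y ∈ H, ε / 3 < d x y) ∧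
      ∀ U ∈ T, (A ∩ U ∩ F).Nonempty ∧ (A ∩ U ∩ H).Nonempty := by
  induction T, hT using Set.Finite.induction_on with
  | empty => exact ⟨∅, ∅, by simp⟩
  | @insert U T _ _ ih =>
    rw [forall_mem_insert] at hTA
    obtain ⟨F, H, hF, hH, hFH, hT⟩ := ih hTA.2
    obtain ⟨V, hVU, -, ⟨x, hxA, hxV⟩, hHV⟩ := hA.exists_isOpen_far hε hd hH hTA.1.1 hTA.1.2
    obtain ⟨W, hWU, -, ⟨y, hyA, hyW⟩, hFW⟩ :=
      hA.exists_isOpen_far hε hd (hF.insert x) hTA.1.1 hTA.1.2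
    refine ⟨insert x F, insert y H, hF.insert x, hH.insert y, ?_, ?_⟩
    · rintro u hu v (rfl | hv)
      · exact hFW u hu v hyW
      · obtain rfl | hu := hu
        · exact d.symm v u ▸ hHV v hv u hxV
        · exact hFH u hu v hv
    · refine forall_mem_insert.2 ⟨⟨⟨x, ⟨hxA, hVU hxV⟩, mem_insert _ _⟩,
        ⟨y, ⟨hyA, hWU hyW⟩, mem_insert _ _⟩⟩, fun U' hU' ↦ ⟨?_, ?_⟩⟩
      · exact (hT U' hU').1.mono (inter_subset_inter_right _ (subset_insert _ _))
      · exact (hT U' hU').2.mono (inter_subset_inter_right _ (subset_insert _ _))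

lemma exists_forall_eq_of_forall_lt [CompactSpace K] {Y : Type*} [TopologicalSpace Y] [T1Space Y]
    {f : ℕ → C(K, Y)} {s : ℕ → Y} (h : ∀ N, ∃ t, ∀ i < N, f i t = s i) :
    ∃ t, ∀ i, f i t = s i := by
  have h_closed (N : ℕ) : IsClosed {t | ∀ i < N, f i t = s i} := by
    simp only [ofPred_forall]
    exact isClosed_biInter fun i _ ↦ isClosed_singleton.preimage (f i).continuous
  obtain ⟨t, ht⟩ := IsCompact.nonempty_iInter_of_sequence_nonempty_isCompact_isClosed
    (fun N ↦ {t | ∀ i < N, f i t = s i})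
    (fun N t ht i hi ↦ ht i (hi.trans N.lt_succ_self)) h (h_closed 0).isCompact h_closed
  exact ⟨t, fun i ↦ mem_iInter.1 ht (i + 1) i i.lt_succ_self⟩

variable [CompactSpace K]

lemma IsNowhereSmall.exists_lipschitz_splitting (hA : IsNowhereSmall d A ε) (hε : 0 < ε)
    (hd : LowerSemicontinuous fun p : K × K ↦ d p.1 p.2) {T : Set (Set K)} (hT : T.Finite)
    (hTA : ∀ U ∈ T, IsOpen U ∧ (A ∩ U).Nonempty) :
    ∃ f : C(K, ℝ), (∀ x, |f x| ≤ 1) ∧ (∀ x y, |f x - f y| ≤ 12 / ε * d x y) ∧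
      ∀ U ∈ T, ∀ s ∈ ({1, -1} : Set ℝ), (A ∩ (U ∩ interior (f ⁻¹' {s}))).Nonempty := by
  obtain ⟨F, H, hF, hH, hFH, hTFH⟩ := hA.exists_finite_separated hε hd hT hTA
  obtain ⟨f, hf_le, hf, hfF, hfH⟩ :=
    exists_lipschitz_eventuallyEq hd hF.isCompact hH.isCompact (by positivity) hFH
  rw [show 4 / (ε / 3) = 12 / ε by ring] at hf
  refine ⟨f, hf_le, hf, fun U hU s hs ↦ ?_⟩
  obtain rfl | rfl := hs
  · obtain ⟨x, ⟨hxA, hxU⟩, hxH⟩ := (hTFH U hU).2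
    exact ⟨x, hxA, hxU, mem_interior_iff_mem_nhds.2 (hfH x hxH)⟩
  · obtain ⟨x, ⟨hxA, hxU⟩, hxF⟩ := (hTFH U hU).1
    exact ⟨x, hxA, hxU, mem_interior_iff_mem_nhds.2 (hfF x hxF)⟩

lemma IsNowhereSmall.exists_lipschitz_seq_signs (hA : IsNowhereSmall d A ε) (hε : 0 < ε)
    (hA_nonempty : A.Nonempty) (hd : LowerSemicontinuous fun p : K × K ↦ d p.1 p.2) :
    ∃ f : ℕ → C(K, ℝ), (∀ n x, |f n x| ≤ 1) ∧
      (∀ n x y, |f n x - f n y| ≤ 12 / ε * d x y) ∧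
      ∀ s : ℕ → ℝ, (∀ n, s n ∈ ({1, -1} : Set ℝ)) → ∃ t, ∀ n, f n t = s n := by
  let Family := {T : Set (Set K) // T.Finite ∧ ∀ U ∈ T, IsOpen U ∧ (A ∩ U).Nonempty}
  choose f hf_le hf hf_split using
    fun T : Family ↦ hA.exists_lipschitz_splitting hε hd T.2.1 T.2.2
  let split (T : Family) : Family :=
    ⟨image2 (fun U s ↦ U ∩ interior (f T ⁻¹' {s})) T.1 {1, -1}, T.2.1.image2 _ (toFinite _), by
      rintro _ ⟨U, hU, s, hs, rfl⟩
      exact ⟨(T.2.2 U hU).1.inter isOpen_interior, hf_split T U hU s hs⟩⟩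
  let T (n : ℕ) : Family := split^[n] ⟨{univ}, finite_singleton _, by simpa using hA_nonempty⟩
  refine ⟨fun n ↦ f (T n), fun n ↦ hf_le _, fun n ↦ hf _, fun s hs ↦ ?_⟩
  have h_initial (N : ℕ) : ∃ U ∈ (T N).1, ∀ i < N, ∀ x ∈ U, f (T i) x = s i := by
    induction N with
    | zero => exact ⟨univ, rfl, by simp⟩
    | succ N ih =>
      obtain ⟨U, hU, hUs⟩ := ih
      refine ⟨U ∩ interior (f (T N) ⁻¹' {s N}), ?_, fun i hi x hx ↦ ?_⟩
      · rw [show T (N + 1) = split (T N) from Function.iterate_succ_apply' _ _ _]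
        exact mem_image2_of_mem hU (hs N)
      · obtain hi | rfl := Nat.lt_succ_iff_lt_or_eq.1 hi
        · exact hUs i hi x hx.1
        · exact interior_subset (s := f (T i) ⁻¹' {s i}) hx.2
  refine exists_forall_eq_of_forall_lt fun N ↦ ?_
  obtain ⟨U, hU, hUs⟩ := h_initial N
  obtain ⟨x, -, hx⟩ := ((T N).2.2 U hU).2
  exact ⟨x, fun i hi ↦ hUs i hi x hx⟩

end SignSequence

section SummableSequences

variable {ι E : Type*} [NormedAddCommGroup E] [NormedSpace ℝ E]

lemma lpOne_hasSum_norm (a : ℓ¹(ι, ℝ)) : HasSum (fun i ↦ ‖a i‖) ‖a‖ := by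
  simpa using lp.hasSum_norm (p := 1) (by simp) a

lemma exists_clm_lpOne [CompleteSpace E] {f : ι → E} {C : ℝ} (hf : ∀ i, ‖f i‖ ≤ C) :
    ∃ J : ℓ¹(ι, ℝ) →L[ℝ] E, (∀ a, ‖J a‖ ≤ C * ‖a‖) ∧ ∀ a, HasSum (fun i ↦ a i • f i) (J a) := by
  have h_le (a : ℓ¹(ι, ℝ)) (i : ι) : ‖a i • f i‖ ≤ C * ‖a i‖ := by
    rw [norm_smul, mul_comm]
    gcongr
    exact hf i
  have h_norm (a : ℓ¹(ι, ℝ)) : HasSum (fun i ↦ C * ‖a i‖) (C * ‖a‖) :=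
    (lpOne_hasSum_norm a).mul_left C
  have h_sum (a : ℓ¹(ι, ℝ)) : Summable fun i ↦ a i • f i :=
    .of_norm_bounded (h_norm a).summable (h_le a)
  let J : ℓ¹(ι, ℝ) →ₗ[ℝ] E :=
    { toFun a := ∑' i, a i • f i
      map_add' a b := by
        simp only [lp.coeFn_add, Pi.add_apply, add_smul, (h_sum a).tsum_add (h_sum b)]
      map_smul' c a := by
        simp only [lp.coeFn_smul, Pi.smul_apply, smul_assoc, (h_sum a).tsum_const_smul c,
          RingHom.id_apply] }
  have hJ (a : ℓ¹(ι, ℝ)) : ‖J a‖ ≤ C * ‖a‖ := tsum_of_norm_bounded (h_norm a) (h_le a)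
  exact ⟨J.mkContinuous C hJ, hJ, fun a ↦ (h_sum a).hasSum⟩

variable {K : Type*} [TopologicalSpace K]

lemma hasSum_eval {f : ι → C(K, ℝ)} {a : ℓ¹(ι, ℝ)} {g : C(K, ℝ)}
    (h : HasSum (fun i ↦ a i • f i) g) (x : K) : HasSum (fun i ↦ a i * f i x) (g x) := by
  simpa using h.mapL (ContinuousMap.evalCLM ℝ x)

lemma abs_sub_le_of_hasSum {f : ι → C(K, ℝ)} {x y : K} {C : ℝ}
    (hf : ∀ i, |f i x - f i y| ≤ C) {a : ℓ¹(ι, ℝ)} {g : C(K, ℝ)}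
    (h : HasSum (fun i ↦ a i • f i) g) : |g x - g y| ≤ ‖a‖ * C := by
  have h_sub := (hasSum_eval h x).sub (hasSum_eval h y)
  rw [← h_sub.tsum_eq, ← Real.norm_eq_abs]
  refine tsum_of_norm_bounded ((lpOne_hasSum_norm a).mul_right C) fun i ↦ ?_
  rw [← mul_sub, norm_mul, Real.norm_eq_abs (f i x - f i y)]
  gcongr
  exact hf i

variable [CompactSpace K]

lemma norm_le_of_hasSum_of_signs {f : ι → C(K, ℝ)}
    (hf : ∀ s : ι → ℝ, (∀ i, s i ∈ ({1, -1} : Set ℝ)) → ∃ t, ∀ i, f i t = s i)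
    {a : ℓ¹(ι, ℝ)} {g : C(K, ℝ)} (h : HasSum (fun i ↦ a i • f i) g) : ‖a‖ ≤ ‖g‖ := by
  obtain ⟨t, ht⟩ := hf (fun i ↦ if 0 ≤ a i then 1 else -1) fun i ↦ by split_ifs <;> simp
  have h_abs (i : ι) : a i * f i t = ‖a i‖ := by
    rw [ht, Real.norm_eq_abs]
    split_ifs with hi
    · rw [abs_of_nonneg hi, mul_one]
    · rw [abs_of_neg (not_le.1 hi), mul_neg_one]
  have hgt : g t = ‖a‖ := by
    have := hasSum_eval h t
    simp only [h_abs] at this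
    exact this.unique (lpOne_hasSum_norm a)
  exact hgt ▸ (le_abs_self _).trans (g.norm_coe_le_norm t)

end SummableSequences

section NotFragmented

variable {K : Type*} [TopologicalSpace K] [CompactSpace K] {d : PseudoMetric K ℝ}

theorem exists_isometric_lipschitz_of_not_fragmentedBy
    (hd : LowerSemicontinuous fun p : K × K ↦ d p.1 p.2) {ε : ℝ} (hε : 0 < ε)
    (h : ¬ FragmentedBy fun x y ↦ d x y < ε) :
    ∃ J : ℓ¹(ℕ, ℝ) →L[ℝ] C(K, ℝ), (∀ a, ‖J a‖ = ‖a‖) ∧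
      ∀ a, ∃ L ≥ 0, ∀ x y : K, |J a x - J a y| ≤ L * d x y := by
  obtain ⟨A, hA_nonempty, hA⟩ := exists_isNowhereSmall_of_not_fragmentedBy h
  obtain ⟨f, hf_le, hf, hf_signs⟩ := hA.exists_lipschitz_seq_signs hε hA_nonempty hd
  obtain ⟨J, hJ_le, hJ⟩ := exists_clm_lpOne fun n ↦
    (ContinuousMap.norm_le (f n) zero_le_one).2 (hf_le n)
  have hJ_norm (a : ℓ¹(ℕ, ℝ)) : ‖J a‖ = ‖a‖ :=
    le_antisymm (one_mul ‖a‖ ▸ hJ_le a) (norm_le_of_hasSum_of_signs hf_signs (hJ a))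
  refine ⟨J, hJ_norm, fun a ↦ ⟨‖a‖ * (12 / ε), by positivity, fun x y ↦ ?_⟩⟩
  rw [mul_assoc]
  exact abs_sub_le_of_hasSum (fun n ↦ hf n x y) (hJ a)

end NotFragmented

section FragmentedImage

variable {K X : Type*} [TopologicalSpace K] [TopologicalSpace X] {r r' : X → X → Prop}

lemma FragmentedBy.mono (h : FragmentedBy r) (hr : ∀ x y, r x y → r' x y) : FragmentedBy r' := by
  intro A hA
  obtain ⟨U, hU, hAU, hrU⟩ := h A hA
  exact ⟨U, hU, hAU, fun x hx y hy ↦ hr x y (hrU x hx y hy)⟩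

lemma FragmentedBy.exists_countable_net [SecondCountableTopology X] (h : FragmentedBy r) :
    ∃ S : Set X, S.Countable ∧ ∀ x, ∃ s ∈ S, r x s := by
  let HasNet (U : Set X) : Prop := ∃ S : Set X, S.Countable ∧ ∀ x ∈ U, ∃ s ∈ S, r x s
  let W : Set X := ⋃₀ {U | IsOpen U ∧ HasNet U}
  have hW : HasNet W := by
    obtain ⟨T, hT_countable, hT, hTW⟩ :=
      TopologicalSpace.isOpen_sUnion_countable {U | IsOpen U ∧ HasNet U} fun U hU ↦ hU.1
    choose! S hS_countable hS using fun U (hU : U ∈ T) ↦ (hT hU).2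
    refine ⟨⋃ U ∈ T, S U, hT_countable.biUnion hS_countable, fun x hx ↦ ?_⟩
    obtain ⟨U, hU, hxU⟩ := hTW.ge hx
    obtain ⟨s, hs, hxs⟩ := hS U hU x hxU
    exact ⟨s, mem_biUnion hU hs, hxs⟩
  obtain hW_univ | hW_compl := Wᶜ.eq_empty_or_nonempty
  · simpa [HasNet, compl_empty_iff.1 hW_univ] using hW
  · obtain ⟨U, hU, ⟨p, hpW, hpU⟩, hrU⟩ := h Wᶜ hW_compl
    obtain ⟨S, hS_countable, hS⟩ := hW
    suffices h_net : HasNet U from (hpW (mem_sUnion_of_mem hpU ⟨hU, h_net⟩)).elim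
    refine ⟨insert p S, hS_countable.insert p, fun x hxU ↦ ?_⟩
    by_cases hxW : x ∈ W
    · obtain ⟨s, hs, hxs⟩ := hS x hxW
      exact ⟨s, mem_insert_of_mem p hs, hxs⟩
    · exact ⟨p, mem_insert p S, hrU x ⟨hxW, hxU⟩ p ⟨hpW, hpU⟩⟩

variable [CompactSpace K]

lemma exists_minimal_isClosed_subset_image [T1Space X] {Φ : K → X} (hΦ : Continuous Φ)
    {B : Set X} (hB : B ⊆ range Φ) : ∃ M, Minimal (fun M ↦ IsClosed M ∧ B ⊆ Φ '' M) M := by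
  let Family : Set (Set K) := {M | IsClosed M ∧ B ⊆ Φ '' M}
  suffices h_chain : ∀ c ⊆ Family, IsChain (· ⊆ ·) c → c.Nonempty → ∃ L ∈ Family, ∀ M ∈ c, L ⊆ M by
    have h_univ : univ ∈ Family := ⟨isClosed_univ, by rwa [image_univ]⟩
    obtain ⟨M, -, hM⟩ := zorn_superset_nonempty Family h_chain univ h_univ
    exact ⟨M, hM⟩
  intro c hc hc_chain hc_nonempty
  refine ⟨⋂₀ c, ⟨isClosed_sInter fun M hM ↦ (hc hM).1, fun b hb ↦ ?_⟩,
    fun M hM ↦ sInter_subset_of_mem hM⟩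
  have : Nonempty c := hc_nonempty.to_subtype
  have h_closed (M : c) : IsClosed ((M : Set K) ∩ Φ ⁻¹' {b}) :=
    (hc M.2).1.inter (isClosed_singleton.preimage hΦ)
  have h_directed : Directed (· ⊇ ·) fun M : c ↦ (M : Set K) ∩ Φ ⁻¹' {b} := fun M N ↦
    (hc_chain.total M.2 N.2).elim
      (fun h ↦ ⟨M, Subset.rfl, inter_subset_inter_left _ h⟩)
      (fun h ↦ ⟨N, inter_subset_inter_left _ h, Subset.rfl⟩)
  obtain ⟨x, hx⟩ := IsCompact.nonempty_iInter_of_directed_nonempty_isCompact_isClosed _ h_directed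
    (fun M ↦ (hc M.2).2 hb) (fun M ↦ (h_closed M).isCompact) h_closed
  rw [mem_iInter] at hx
  exact ⟨x, fun M hM ↦ (hx ⟨M, hM⟩).1, (hx ⟨_, hc_nonempty.some_mem⟩).2⟩

lemma FragmentedBy.of_onFun_of_surjective [T2Space X] {Φ : K → X} (hΦ : Continuous Φ)
    (hΦ_surj : Φ.Surjective) (h : FragmentedBy (Function.onFun r Φ)) : FragmentedBy r := by
  intro A hA
  obtain ⟨M, ⟨hM, hAM⟩, hM_min⟩ :=
    exists_minimal_isClosed_subset_image hΦ (hΦ_surj.range_eq ▸ subset_univ A)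
  obtain ⟨U, hU, ⟨x, hxM, hxU⟩, hrU⟩ := h M ((hA.mono hAM).of_image)
  -- By minimality, removing `M ∩ U` loses a point of `A`; the lost points lift to `M ∩ U` only.
  have h_not_subset : ¬ A ⊆ Φ '' (M \ U) := fun hA' ↦
    (hM_min ⟨hM.sdiff hU, hA'⟩ sdiff_subset hxM).2 hxU
  obtain ⟨a, haA, ha⟩ := not_subset.1 h_not_subset
  have h_mem : ∀ y ∈ A ∩ (Φ '' (M \ U))ᶜ, ∃ x ∈ M ∩ U, Φ x = y := by
    rintro y ⟨hyA, hy⟩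
    obtain ⟨x, hxM, rfl⟩ := hAM hyA
    exact ⟨x, ⟨hxM, by_contra fun hxU ↦ hy ⟨x, ⟨hxM, hxU⟩, rfl⟩⟩, rfl⟩
  refine ⟨(Φ '' (M \ U))ᶜ, ((hM.sdiff hU).isCompact.image hΦ).isClosed.isOpen_compl,
    ⟨a, haA, ha⟩, fun y hy z hz ↦ ?_⟩
  obtain ⟨u, hu, rfl⟩ := h_mem y hy
  obtain ⟨v, hv, rfl⟩ := h_mem z hz
  exact hrU u hu v hv

lemma FragmentedBy.exists_countable_net_of_onFun [T2Space X] [SecondCountableTopology X]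
    {Φ : K → X} (hΦ : Continuous Φ) (h : FragmentedBy (Function.onFun r Φ)) :
    ∃ S : Set K, S.Countable ∧ ∀ x, ∃ s ∈ S, r (Φ x) (Φ s) := by
  have h_range : FragmentedBy fun u v : range Φ ↦ r u v :=
    .of_onFun_of_surjective hΦ.rangeFactorization rangeFactorization_surjective h
  obtain ⟨S, hS_countable, hS⟩ := h_range.exists_countable_net
  choose lift h_lift using rangeFactorization_surjective (f := Φ)
  refine ⟨lift '' S, hS_countable.image lift, fun x ↦ ?_⟩
  obtain ⟨s, hs, hxs⟩ := hS (rangeFactorization Φ x)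
  exact ⟨lift s, mem_image_of_mem lift hs, by rwa [← h_lift s] at hxs⟩

end FragmentedImage

section PointwiseSubsequence

variable {α Y : Type*} [PseudoMetricSpace Y] [ProperSpace Y] {f : ℕ → α → Y}

lemma exists_subseq_tendsto_of_countable [Countable α]
    (hf : ∀ x, Bornology.IsBounded (range fun n ↦ f n x)) :
    ∃ ψ : ℕ → ℕ, StrictMono ψ ∧ ∀ x, ∃ l, Tendsto (fun i ↦ f (ψ i) x) atTop (𝓝 l) := by
  obtain ⟨l, -, ψ, hψ, hl⟩ := (isCompact_univ_pi fun x ↦ (hf x).isCompact_closure).tendsto_subseq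
    fun n x _ ↦ subset_closure (mem_range_self n)
  exact ⟨ψ, hψ, fun x ↦ ⟨l x, tendsto_pi_nhds.1 hl x⟩⟩

lemma exists_subseq_tendsto_of_countable_nets
    (hf : ∀ x, Bornology.IsBounded (range fun n ↦ f n x))
    (h_net : ∀ δ > 0, ∃ S : Set α, S.Countable ∧ ∀ x, ∃ s ∈ S, ∀ n, dist (f n x) (f n s) ≤ δ) :
    ∃ ψ : ℕ → ℕ, StrictMono ψ ∧ ∀ x, ∃ l, Tendsto (fun i ↦ f (ψ i) x) atTop (𝓝 l) := by
  choose S hS_countable hS using fun k : ℕ ↦ h_net (1 / (k + 1)) Nat.one_div_pos_of_nat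
  have : Countable (⋃ k, S k) := (countable_iUnion hS_countable).to_subtype
  obtain ⟨ψ, hψ, h_tendsto⟩ :=
    exists_subseq_tendsto_of_countable (f := fun n (s : ⋃ k, S k) ↦ f n s) fun s ↦ hf s
  refine ⟨ψ, hψ, fun x ↦ cauchySeq_tendsto_of_complete (Metric.cauchySeq_iff.2 fun ε hε ↦ ?_)⟩
  obtain ⟨k, hk⟩ := exists_nat_one_div_lt (show 0 < ε / 3 by positivity)
  obtain ⟨s, hs, hxs⟩ := hS k x
  obtain ⟨l, hl⟩ := h_tendsto ⟨s, mem_iUnion_of_mem k hs⟩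
  obtain ⟨N, hN⟩ := Metric.cauchySeq_iff.1 hl.cauchySeq (ε / 3) (by positivity)
  refine ⟨N, fun m hm n hn ↦ ?_⟩
  have h_mid : dist (f (ψ m) s) (f (ψ n) s) < ε / 3 := hN m hm n hn
  linarith [dist_triangle4 (f (ψ m) x) (f (ψ m) s) (f (ψ n) s) (f (ψ n) x), hxs (ψ m), hxs (ψ n),
    dist_comm (f (ψ n) s) (f (ψ n) x)]

end PointwiseSubsequence

section ConvexCombinations

variable {X : Type*} [TopologicalSpace X]

lemma exists_mem_convexHull_abs_le {ι : Type*} {g : ι → C(X, ℝ)} {h : C(X, ℝ)}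
    (hh : h ∈ convexHull ℝ (range fun n ↦ |g n|)) :
    ∃ y ∈ convexHull ℝ (range g), ∀ x, |y x| ≤ h x := by
  refine convexHull_min (t := {h : C(X, ℝ) | ∃ y ∈ convexHull ℝ (range g), ∀ x, |y x| ≤ h x})
    ?_ ?_ hh
  · rintro _ ⟨n, rfl⟩
    exact ⟨g n, subset_convexHull ℝ _ (mem_range_self n), fun x ↦ le_rfl⟩
  · rintro h ⟨y, hy, hyh⟩ h' ⟨y', hy', hyh'⟩ a b ha hb hab
    refine ⟨a • y + b • y', convex_convexHull ℝ _ hy hy' ha hb hab, fun x ↦ ?_⟩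
    calc |a * y x + b * y' x| ≤ |a * y x| + |b * y' x| := abs_add_le _ _
      _ = a * |y x| + b * |y' x| := by rw [abs_mul, abs_mul, abs_of_nonneg ha, abs_of_nonneg hb]
      _ ≤ a * h x + b * h' x := by gcongr; exacts [hyh x, hyh' x]

variable [CompactSpace X]

lemma isOpen_setOf_forall_lt (ε : ℝ) : IsOpen {h : C(X, ℝ) | ∀ x, h x < ε} := by
  simpa [MapsTo] using ContinuousMap.isOpen_setOfPred_mapsTo (X := X) isCompact_univ
    (isOpen_Iio (a := ε))

lemma exists_nonneg_clm_of_convex {S : Set C(X, ℝ)} (hS : Convex ℝ S) {ε : ℝ} (hε : 0 < ε)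
    (h_ge : ∀ h ∈ S, ∃ x, ε ≤ h x) :
    ∃ (Λ : C(X, ℝ) →L[ℝ] ℝ) (u : ℝ), 0 < u ∧ (∀ h, 0 ≤ h → 0 ≤ Λ h) ∧ ∀ h ∈ S, u ≤ Λ h := by
  have h_convex : Convex ℝ {h : C(X, ℝ) | ∀ x, h x < ε} := by
    simp only [ofPred_forall]
    exact convex_iInter fun x ↦
      convex_halfSpace_lt (ContinuousMap.evalCLM ℝ x : C(X, ℝ) →L[ℝ] ℝ).isLinear ε
  have h_disjoint : Disjoint {h : C(X, ℝ) | ∀ x, h x < ε} S :=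
    Set.disjoint_left.2 fun h h_lt h_mem ↦
      let ⟨x, hx⟩ := h_ge h h_mem
      (h_lt x).not_ge hx
  obtain ⟨Λ, u, hΛ_lt, hΛ_ge⟩ :=
    geometric_hahn_banach_open h_convex (isOpen_setOf_forall_lt ε) hS h_disjoint
  have hu : 0 < u := map_zero Λ ▸ hΛ_lt 0 fun _ ↦ hε
  refine ⟨Λ, u, hu, fun h hh ↦ ?_, hΛ_ge⟩
  by_contra! hΛh
  have h_lt := hΛ_lt ((u / Λ h) • h) fun x ↦
    (mul_nonpos_of_nonpos_of_nonneg (div_neg_of_pos_of_neg hu hΛh).le (hh x)).trans_lt hε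
  rw [map_smul, smul_eq_mul, div_mul_cancel₀ _ hΛh.ne] at h_lt
  exact lt_irrefl _ h_lt

lemma exists_measure_integral_eq [T2Space X] [MeasurableSpace X] [BorelSpace X]
    {Λ : C(X, ℝ) →L[ℝ] ℝ} (hΛ : ∀ h, 0 ≤ h → 0 ≤ Λ h) :
    ∃ μ : Measure X, IsFiniteMeasure μ ∧ ∀ h : C(X, ℝ), ∫ x, h x ∂μ = Λ h := by
  let Λ' : CompactlySupportedContinuousMap X ℝ →ₚ[ℝ] ℝ :=
    { toFun g := Λ g.toContinuousMap
      map_add' g g' := Λ.map_add g.toContinuousMap g'.toContinuousMap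
      map_smul' c g := Λ.map_smul c g.toContinuousMap
      monotone' g g' hgg' := by
        rw [← sub_nonneg, ← map_sub]
        exact hΛ _ fun x ↦ sub_nonneg.2 (hgg' x) }
  exact ⟨RealRMK.rieszMeasure Λ', inferInstance, fun h ↦
    RealRMK.integral_rieszMeasure Λ' ⟨h, .of_compactSpace h⟩⟩

lemma exists_mem_convexHull_forall_lt [T2Space X] {g : ℕ → C(X, ℝ)} {C : ℝ}
    (hg_le : ∀ n x, |g n x| ≤ C) (hg : ∀ x, Tendsto (fun n ↦ g n x) atTop (𝓝 0))
    {ε : ℝ} (hε : 0 < ε) : ∃ h ∈ convexHull ℝ (range g), ∀ x, h x < ε := by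
  by_contra! h_ge
  obtain ⟨Λ, u, hu, hΛ_nonneg, hΛ_ge⟩ :=
    exists_nonneg_clm_of_convex (convex_convexHull ℝ _) hε h_ge
  borelize X
  obtain ⟨μ, _, hμ⟩ := exists_measure_integral_eq hΛ_nonneg
  have h_tendsto : Tendsto (fun n ↦ ∫ x, g n x ∂μ) atTop (𝓝 (∫ _, (0 : ℝ) ∂μ)) :=
    tendsto_integral_of_dominated_convergence (fun _ ↦ C)
      (fun n ↦ (g n).continuous.aestronglyMeasurable) (integrable_const C)
      (fun n ↦ .of_forall (hg_le n)) (.of_forall hg)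
  rw [integral_zero] at h_tendsto
  exact hu.not_ge <| ge_of_tendsto' h_tendsto fun n ↦
    hμ (g n) ▸ hΛ_ge (g n) (subset_convexHull ℝ _ (mem_range_self n))

lemma exists_mem_convexHull_norm_lt_of_t2 [T2Space X] {g : ℕ → C(X, ℝ)} {C : ℝ}
    (hg_le : ∀ n x, |g n x| ≤ C) (hg : ∀ x, Tendsto (fun n ↦ g n x) atTop (𝓝 0))
    {ε : ℝ} (hε : 0 < ε) : ∃ y ∈ convexHull ℝ (range g), ‖y‖ < ε := by
  obtain ⟨h, hh, hh_lt⟩ := exists_mem_convexHull_forall_lt (g := fun n ↦ |g n|)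
    (fun n x ↦ (abs_abs (g n x)).trans_le (hg_le n x))
    (fun x ↦ abs_zero (α := ℝ) ▸ (hg x).abs) hε
  obtain ⟨y, hy, hyh⟩ := exists_mem_convexHull_abs_le hh
  exact ⟨y, hy, (ContinuousMap.norm_lt_iff y hε).2 fun x ↦ (hyh x).trans_lt (hh_lt x)⟩

lemma exists_mem_convexHull_norm_lt {g : ℕ → C(X, ℝ)} {C : ℝ}
    (hg_le : ∀ n x, |g n x| ≤ C) (hg : ∀ x, Tendsto (fun n ↦ g n x) atTop (𝓝 0))
    {ε : ℝ} (hε : 0 < ε) : ∃ y ∈ convexHull ℝ (range g), ‖y‖ < ε := by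
  -- `X` need not be Hausdorff, but its image in `ℕ → ℝ` is.
  have hΦ : Continuous fun x n ↦ g n x := continuous_pi fun n ↦ (g n).continuous
  let Φ : C(X, range fun x n ↦ g n x) := ⟨rangeFactorization _, hΦ.rangeFactorization⟩
  have : CompactSpace (range fun x n ↦ g n x) :=
    isCompact_iff_compactSpace.1 (isCompact_range hΦ)
  let coord (n : ℕ) : C(range fun x n ↦ g n x, ℝ) :=
    ⟨fun u ↦ u.1 n, (continuous_apply n).comp continuous_subtype_val⟩
  obtain ⟨y, hy, hy_lt⟩ := exists_mem_convexHull_norm_lt_of_t2 (g := coord)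
    (by rintro n ⟨_, x, rfl⟩; exact hg_le n x) (by rintro ⟨_, x, rfl⟩; exact hg x) hε
  refine ⟨y.comp Φ, ?_, ?_⟩
  · have h_image := mem_image_of_mem (ContinuousMap.compRightAlgHom ℝ ℝ Φ).toLinearMap hy
    rwa [LinearMap.image_convexHull, ← range_comp] at h_image
  · exact (ContinuousMap.norm_lt_iff _ hε).2 fun x ↦ (y.norm_coe_le_norm (Φ x)).trans_lt hy_lt

end ConvexCombinations

section NoConvergentSubsequence

lemma eq_of_hasSum_single {ι E : Type*} [DecidableEq ι] [NormedAddCommGroup E] [NormedSpace ℝ E]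
    {f : ι → E} {i : ι} {y : E}
    (h : HasSum (fun j ↦ (lp.single 1 i 1 : ℓ¹(ι, ℝ)) j • f j) y) : y = f i := by
  refine h.unique ?_
  convert hasSum_single i fun j hj ↦ ?_ using 1
  · simp
  · simp [hj]

lemma one_le_norm_of_mem_convexHull {ι κ : Type*} [DecidableEq ι] {m k : κ → ι}
    (hmk : ∀ i j, m i ≠ k j) {x : ℓ¹(ι, ℝ)}
    (hx : x ∈ convexHull ℝ (range fun i ↦ (lp.single 1 (m i) 1 - lp.single 1 (k i) 1 : ℓ¹(ι, ℝ)))) :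
    1 ≤ ‖x‖ := by
  classical
  let σ (i : ι) : ℝ := if i ∈ range m then 1 else 0
  obtain ⟨φ, hφ_le, hφ⟩ := exists_clm_lpOne (f := σ) (C := 1) fun i ↦ by
    simp only [σ]; split_ifs <;> simp
  have hφ_eq (i : κ) : φ (lp.single 1 (m i) 1 - lp.single 1 (k i) 1) = 1 := by
    have hm : σ (m i) = 1 := if_pos (mem_range_self i)
    have hk : σ (k i) = 0 := if_neg fun ⟨j, hj⟩ ↦ hmk j i hj
    rw [map_sub, eq_of_hasSum_single (hφ (lp.single 1 (m i) 1)),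
      eq_of_hasSum_single (hφ (lp.single 1 (k i) 1)), hm, hk, sub_zero]
  have hφx : φ x = 1 := convexHull_min (t := φ ⁻¹' {1}) (range_subset_iff.2 hφ_eq)
    ((convex_singleton 1).linear_preimage φ.toLinearMap) hx
  calc 1 = φ x := hφx.symm
    _ ≤ ‖φ x‖ := le_abs_self _
    _ ≤ ‖x‖ := one_mul ‖x‖ ▸ hφ_le x

variable {K : Type*} [TopologicalSpace K] [CompactSpace K]

lemma not_forall_tendsto_single {J : ℓ¹(ℕ, ℝ) →L[ℝ] C(K, ℝ)} {c : ℝ} (hc : 0 < c)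
    (hJ : ∀ a, c * ‖a‖ ≤ ‖J a‖) {ψ : ℕ → ℕ} (hψ : StrictMono ψ) :
    ¬ ∀ x, ∃ l, Tendsto (fun i ↦ J (lp.single 1 (ψ i) 1) x) atTop (𝓝 l) := by
  intro h
  let v (i : ℕ) : ℓ¹(ℕ, ℝ) := lp.single 1 (ψ (2 * i)) 1 - lp.single 1 (ψ (2 * i + 1)) 1
  have hv_le (i : ℕ) : ‖v i‖ ≤ 2 := by
    refine (norm_sub_le _ _).trans ?_
    rw [lp.norm_single one_pos, lp.norm_single one_pos, norm_one]
    norm_num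
  have hJv_le (i : ℕ) (x : K) : |J (v i) x| ≤ ‖J‖ * 2 :=
    ((J (v i)).norm_coe_le_norm x).trans (J.le_opNorm_of_le (hv_le i))
  have hJv (x : K) : Tendsto (fun i ↦ J (v i) x) atTop (𝓝 0) := by
    obtain ⟨l, hl⟩ := h x
    have h_even : Tendsto (fun i : ℕ ↦ 2 * i) atTop atTop :=
      tendsto_id.const_mul_atTop' two_pos
    simpa [v, Function.comp_def] using
      (hl.comp h_even).sub (hl.comp ((tendsto_add_atTop_nat 1).comp h_even))
  obtain ⟨y, hy, hy_lt⟩ := exists_mem_convexHull_norm_lt hJv_le hJv hc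
  rw [range_comp' J v, ← J.coe_coe, ← LinearMap.image_convexHull] at hy
  obtain ⟨a, ha, rfl⟩ := hy
  have ha_norm : 1 ≤ ‖a‖ := one_le_norm_of_mem_convexHull
    (fun i j hij ↦ by have := hψ.injective hij; omega) ha
  exact hy_lt.not_ge <| (le_mul_of_one_le_right hc.le ha_norm).trans (hJ a)

end NoConvergentSubsequence

section LipschitzImage

variable {K : Type*} [TopologicalSpace K] {d : PseudoMetric K ℝ}

lemma exists_uniform_lipschitz {E : Type*} [NormedAddCommGroup E] [NormedSpace ℝ E]
    [CompleteSpace E] {J : E →L[ℝ] C(K, ℝ)}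
    (hJ : ∀ a, ∃ L ≥ 0, ∀ x y : K, |J a x - J a y| ≤ L * d x y) :
    ∃ M ≥ 0, ∀ a x y, |J a x - J a y| ≤ M * ‖a‖ * d x y := by
  let slope (p : K × K) : E →L[ℝ] ℝ :=
    (d p.1 p.2)⁻¹ •
      (ContinuousMap.evalCLM ℝ p.1 - ContinuousMap.evalCLM ℝ p.2 : C(K, ℝ) →L[ℝ] ℝ).comp J
  have h_slope (p : K × K) (a : E) : ‖slope p a‖ = (d p.1 p.2)⁻¹ * |J a p.1 - J a p.2| := by
    simp [slope, abs_of_nonneg (d.nonneg _ _)]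
  obtain ⟨M, hM⟩ := banach_steinhaus (g := slope) fun a ↦ by
    obtain ⟨L, hL_nonneg, hL⟩ := hJ a
    refine ⟨L, fun p ↦ ?_⟩
    rw [h_slope, mul_comm, ← div_eq_mul_inv]
    exact div_le_of_le_mul₀ (d.nonneg _ _) hL_nonneg (hL _ _)
  refine ⟨max M 0, le_max_right _ _, fun a x y ↦ ?_⟩
  obtain hxy | hxy := (d.nonneg x y).eq_or_lt
  · obtain ⟨L, -, hL⟩ := hJ a
    simpa [← hxy] using hL x y
  · have h_le := (slope (x, y)).le_of_opNorm_le ((hM (x, y)).trans (le_max_left M 0)) a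
    rwa [h_slope, inv_mul_le_iff₀ hxy, mul_comm] at h_le

variable [CompactSpace K]

theorem exists_not_fragmentedBy_of_lipschitz {J : ℓ¹(ℕ, ℝ) →L[ℝ] C(K, ℝ)} {c : ℝ} (hc : 0 < c)
    (hJ_ge : ∀ a, c * ‖a‖ ≤ ‖J a‖)
    (hJ : ∀ a, ∃ L ≥ 0, ∀ x y : K, |J a x - J a y| ≤ L * d x y) :
    ∃ ε > 0, ¬ FragmentedBy fun x y ↦ d x y < ε := by
  by_contra! h_frag
  obtain ⟨M, hM_nonneg, hM⟩ := exists_uniform_lipschitz hJ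
  let f (n : ℕ) : C(K, ℝ) := J (lp.single 1 n 1)
  have hf (n : ℕ) (x y : K) : |f n x - f n y| ≤ M * d x y := by
    simpa [lp.norm_single] using hM (lp.single 1 n 1) x y
  have hf_bounded (x : K) : Bornology.IsBounded (range fun n ↦ f n x) := by
    refine isBounded_iff_forall_norm_le.2 ⟨‖J‖ * 1, ?_⟩
    rintro _ ⟨n, rfl⟩
    refine ((f n).norm_coe_le_norm x).trans (J.le_opNorm_of_le ?_)
    simp [lp.norm_single]
  have h_net (δ : ℝ) (hδ : 0 < δ) :
      ∃ S : Set K, S.Countable ∧ ∀ x, ∃ s ∈ S, ∀ n, dist (f n x) (f n s) ≤ δ := by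
    refine FragmentedBy.exists_countable_net_of_onFun (r := fun u v ↦ ∀ n, dist (u n) (v n) ≤ δ)
      (Φ := fun x n ↦ f n x) (continuous_pi fun n ↦ (f n).continuous) ?_
    refine (h_frag (δ / (M + 1)) (by positivity)).mono fun x y hxy n ↦ ?_
    rw [lt_div_iff₀ (by positivity)] at hxy
    exact (hf n x y).trans (by linarith [d.nonneg x y])
  obtain ⟨ψ, hψ, h_tendsto⟩ := exists_subseq_tendsto_of_countable_nets hf_bounded h_net
  exact not_forall_tendsto_single hc hJ_ge hψ h_tendsto

end LipschitzImage

end LipschitzCopy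

open LipschitzCopy in
theorem not_fragmented_iff_lipschitz_copy_of_l1_general
    {K : Type*} [TopologicalSpace K] [CompactSpace K] (d : PseudoMetric K ℝ)
    (hd : LowerSemicontinuous fun p : K × K ↦ d p.1 p.2) :
    List.TFAE [
      ¬ ∀ A : Set K, A.Nonempty → ∀ ε > 0, ∃ U : Set K, IsOpen U ∧
        (A ∩ U).Nonempty ∧ ∀ x ∈ A ∩ U, ∀ y ∈ A ∩ U, d x y < ε,
      ∃ J : ℓ¹(ℕ, ℝ) →L[ℝ] C(K, ℝ), (∀ a, ‖J a‖ = ‖a‖) ∧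
        ∀ a, ∃ L ≥ 0, ∀ x y : K, |J a x - J a y| ≤ L * d x y,
      ∃ J : ℓ¹(ℕ, ℝ) →L[ℝ] C(K, ℝ), (∃ c > 0, ∀ a, c * ‖a‖ ≤ ‖J a‖) ∧
        ∀ a, ∃ L ≥ 0, ∀ x y : K, |J a x - J a y| ≤ L * d x y] := by
  rw [← forall_pos_fragmentedBy_iff]
  tfae_have 1 → 2 := by
    intro h
    push Not at h
    obtain ⟨ε, hε, h⟩ := h
    exact exists_isometric_lipschitz_of_not_fragmentedBy hd hε h
  tfae_have 2 → 3 := fun ⟨J, hJ_norm, hJ⟩ ↦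
    ⟨J, ⟨1, one_pos, fun a ↦ by rw [hJ_norm, one_mul]⟩, hJ⟩
  tfae_have 3 → 1 := by
    rintro ⟨J, ⟨c, hc, hJ_ge⟩, hJ⟩ h
    obtain ⟨ε, hε, hε_not⟩ := exists_not_fragmentedBy_of_lipschitz hc hJ_ge hJ
    exact hε_not (h ε hε)
  tfae_finish

/-- The following are equivalent: (i) `K` is not fragmented by `d`;
(ii) there is a linear isometric embedding of `ℓ₁` into `C(K)` with `d`-Lipschitz range;
(iii) there is an isomorphic (bounded below) linear embedding of `ℓ₁` into `C(K)` with
`d`-Lipschitz range. -/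
theorem not_fragmented_iff_lipschitz_copy_of_l1
    {K : Type*} [TopologicalSpace K] [CompactSpace K] [T2Space K]
    (d : K → K → ℝ)
    (hd_nonneg : ∀ x y, 0 ≤ d x y)
    (hd_symm : ∀ x y, d x y = d y x)
    (hd_eq : ∀ x y, d x y = 0 ↔ x = y)
    (hd_tri : ∀ x y z, d x z ≤ d x y + d y z)
    (hd_lsc : LowerSemicontinuous fun p : K × K => d p.1 p.2) :
    ((¬ (∀ A : Set K, A.Nonempty → ∀ ε > 0, ∃ U : Set K, IsOpen U ∧
        (A ∩ U).Nonempty ∧ ∀ x ∈ A ∩ U, ∀ y ∈ A ∩ U, d x y < ε)) ↔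
      (∃ J : lp (fun _ : ℕ => ℝ) 1 →L[ℝ] C(K, ℝ),
        (∀ a, ‖J a‖ = ‖a‖) ∧
        (∀ a, ∃ L ≥ 0, ∀ t₁ t₂ : K, |J a t₁ - J a t₂| ≤ L * d t₁ t₂))) ∧
    ((¬ (∀ A : Set K, A.Nonempty → ∀ ε > 0, ∃ U : Set K, IsOpen U ∧
        (A ∩ U).Nonempty ∧ ∀ x ∈ A ∩ U, ∀ y ∈ A ∩ U, d x y < ε)) ↔
      (∃ J : lp (fun _ : ℕ => ℝ) 1 →L[ℝ] C(K, ℝ),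
        (∃ c > 0, ∀ a, c * ‖a‖ ≤ ‖J a‖) ∧
        (∀ a, ∃ L ≥ 0, ∀ t₁ t₂ : K, |J a t₁ - J a t₂| ≤ L * d t₁ t₂))) := by
  have h := not_fragmented_iff_lipschitz_copy_of_l1_general
    ⟨d, fun x ↦ (hd_eq x x).2 rfl, hd_symm, hd_tri⟩ hd_lsc
  exact ⟨h.out 0 1, h.out 0 2⟩
end

section
/- Let K be a compact Hausdorff space. Then K is not scattered (i.e., there exists a nonempty closed subset of K with no isolated points) if and only if there exists an isomorphic embedding (a bounded linear map which is bounded below) of ℓ₁, the Banach space of absolutely summable real sequences with the ℓ₁ norm, into C(K). -/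
open Set Filter Topology MeasureTheory
open scoped lp

/-!
If `K` contains a perfect set, repeatedly splitting it gives a Cantor scheme, hence continuous
functions `fₙ : K → [-1, 1]` attaining every pattern of signs simultaneously. Choosing the signs of
the coefficients shows `‖∑ aₙ fₙ‖ = ∑ |aₙ|`, so `eₙ ↦ fₙ` is an isometric embedding of `ℓ¹`.

Conversely, let `fₙ = J eₙ` for an embedding `J` and let `φ = (fₙ)ₙ : K → ℝ^ℕ`. If `φ(K)` is
uncountable it contains a perfect set, which lifts to `K`: a minimal closed set mapping onto it has
no isolated point. If `φ(K)` is countable, a subsequence of `(fₙ)` converges pointwise on `K`, so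
the differences of consecutive terms are bounded and tend to `0` pointwise. By Mazur's argument some
convex combinations of these differences then tend to `0` in norm, whereas convex combinations of
the corresponding differences `eₘ - eₙ` all have norm `2` in `ℓ¹`.
-/

namespace L1Embedding

section Lift

variable {ι 𝕜 F : Type*} [NontriviallyNormedField 𝕜] [NormedAddCommGroup F] [NormedSpace 𝕜 F]
  [CompleteSpace F] {f : ι → F} {C : ℝ}

/-- The bounded operator `ℓ¹(ι, 𝕜) → F`, `a ↦ ∑' i, a i • f i`, determined by a bounded family
`f`, which is the image of the standard unit vectors. -/
noncomputable def l1Lift (f : ι → F) (hC : 0 ≤ C) (hf : ∀ i, ‖f i‖ ≤ C) : ℓ¹(ι, 𝕜) →L[𝕜] F :=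
  lp.tsumCLM 𝕜 ι F ∘L
    lp.mapCLM 1 (fun i => ContinuousLinearMap.toSpanSingleton 𝕜 (f i)) hC (by simpa using hf)

variable (hC : 0 ≤ C) (hf : ∀ i, ‖f i‖ ≤ C)

theorem l1Lift_single [DecidableEq ι] (i : ι) (r : 𝕜) :
    l1Lift f hC hf (lp.single 1 i r) = r • f i := by
  simp only [l1Lift, ContinuousLinearMap.comp_apply, lp.tsumCLM_apply]
  rw [tsum_eq_single i]
  · simp
  · intro j hj
    simp [hj]

theorem norm_l1Lift_apply_le (a : ℓ¹(ι, 𝕜)) : ‖l1Lift f hC hf a‖ ≤ C * ‖a‖ := by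
  refine ContinuousLinearMap.le_of_opNorm_le _ ?_ a
  calc ‖l1Lift f hC hf‖ ≤ ‖lp.tsumCLM 𝕜 ι F‖ * ‖lp.mapCLM 1 _ hC _‖ :=
        ContinuousLinearMap.opNorm_comp_le _ _
    _ ≤ 1 * C := by gcongr; exacts [lp.norm_tsumCLM_le, lp.norm_mapCLM_le _ _ _ _]
    _ = C := one_mul C

theorem hasSum_l1Lift (a : ℓ¹(ι, 𝕜)) : HasSum (fun i => a i • f i) (l1Lift f hC hf a) := by
  classical
  simpa only [l1Lift_single] using
    (l1Lift f hC hf).hasSum (lp.hasSum_single ENNReal.one_ne_top a)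

end Lift

theorem hasSum_norm_l1 {ι E : Type*} [NormedAddCommGroup E] (a : ℓ¹(ι, E)) :
    HasSum (fun i => ‖a i‖) ‖a‖ := by
  simpa using lp.hasSum_norm (by simp) a

section Signs

variable {ι X : Type*} [TopologicalSpace X]

theorem exists_continuous_signs [NormalSpace X] {A : ι → Bool → Set X}
    (hA : ∀ i b, IsClosed (A i b)) (hdisj : ∀ i, Disjoint (A i false) (A i true))
    (hind : ∀ e : ι → Bool, (⋂ i, A i (e i)).Nonempty) :
    ∃ f : ι → C(X, ℝ), (∀ i x, |f i x| ≤ 1) ∧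
      ∀ e : ι → Bool, ∃ x, ∀ i, f i x = bif e i then 1 else -1 := by
  have urysohn (i : ι) : ∃ f : C(X, ℝ), (∀ x, |f x| ≤ 1) ∧
      ∀ b, ∀ x ∈ A i b, f x = bif b then 1 else -1 := by
    obtain ⟨g, hg_false, hg_true, hg⟩ :=
      exists_bounded_mem_Icc_of_closed_of_le (hA i false) (hA i true) (hdisj i)
        (show (-1 : ℝ) ≤ 1 by norm_num)
    exact ⟨g, fun x => abs_le.2 (hg x),
      fun b => b.rec (fun x hx => hg_false hx) fun x hx => hg_true hx⟩
  choose f hf_le hf using urysohn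
  refine ⟨f, hf_le, fun e => ?_⟩
  obtain ⟨x, hx⟩ := hind e
  exact ⟨x, fun i => hf i (e i) x (mem_iInter.1 hx i)⟩

theorem norm_l1Lift_of_signs [CompactSpace X] {f : ι → C(X, ℝ)} (hf : ∀ i, ‖f i‖ ≤ 1)
    (hsigns : ∀ e : ι → Bool, ∃ x, ∀ i, f i x = bif e i then 1 else -1) (a : ℓ¹(ι, ℝ)) :
    ‖l1Lift f zero_le_one hf a‖ = ‖a‖ := by
  refine le_antisymm (by simpa using norm_l1Lift_apply_le zero_le_one hf a) ?_
  obtain ⟨x, hx⟩ := hsigns fun i => decide (0 ≤ a i)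
  have term_eq (i : ι) : (a i • f i) x = ‖a i‖ := by
    rcases le_or_gt 0 (a i) with h | h
    · simp [hx, h, abs_of_nonneg]
    · simp [hx, h.not_ge, abs_of_neg h]
  have eval_eq : l1Lift f zero_le_one hf a x = ‖a‖ := by
    have hsum := ContinuousMap.hasSum_apply (hasSum_l1Lift zero_le_one hf a) x
    simp only [term_eq] at hsum
    exact hsum.unique (hasSum_norm_l1 a)
  calc ‖a‖ = l1Lift f zero_le_one hf a x := eval_eq.symm
    _ ≤ ‖l1Lift f zero_le_one hf a‖ := ContinuousMap.apply_le_norm _ x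

end Signs

section CantorScheme

variable {X : Type*}

theorem disjoint_of_length_eq {β : Type*} {D : List β → Set X} (hanti : CantorScheme.Antitone D)
    (hdisj : CantorScheme.Disjoint D) {s t : List β} (hlen : s.length = t.length) (hne : s ≠ t) :
    Disjoint (D s) (D t) := by
  induction s generalizing t with
  | nil => exact absurd (List.length_eq_zero_iff.1 hlen.symm).symm hne
  | cons b s ih =>
    obtain _ | ⟨c, t⟩ := t
    · simp at hlen
    · obtain rfl | hst := eq_or_ne s t
      · exact hdisj s fun hbc => hne (by rw [hbc])
      · exact (ih (by simpa using hlen) hst).mono (hanti _ _) (hanti _ _)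

variable [TopologicalSpace X] {C : Set X}

theorem exists_cantorScheme_of_perfect [T25Space X] (hC : Perfect C) (hne : C.Nonempty) :
    ∃ D : List Bool → Set X, (∀ s, IsClosed (D s)) ∧ (∀ s, (D s).Nonempty) ∧
      CantorScheme.Antitone D ∧ CantorScheme.Disjoint D := by
  let P := {C : Set X // Perfect C ∧ C.Nonempty}
  have split (C : P) : ∃ p : Bool → P, (∀ b, (p b : Set X) ⊆ C) ∧
      Disjoint (p false : Set X) (p true) := by
    obtain ⟨C₀, C₁, ⟨perf₀, ne₀, sub₀⟩, ⟨perf₁, ne₁, sub₁⟩, hd⟩ := C.2.1.splitting C.2.2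
    exact ⟨fun b => bif b then ⟨C₁, perf₁, ne₁⟩ else ⟨C₀, perf₀, ne₀⟩,
      fun b => b.rec sub₀ sub₁, hd⟩
  choose p hsub hdisj using split
  let D : List Bool → P := List.foldr (fun b C => p C b) ⟨C, hC, hne⟩
  refine ⟨fun s => D s, fun s => (D s).2.1.closed, fun s => (D s).2.2,
    fun s b => hsub (D s) b, fun s => ?_⟩
  rintro (_ | _) (_ | _) hbc
  exacts [absurd rfl hbc, hdisj (D s), (hdisj (D s)).symm, absurd rfl hbc]

theorem exists_independent_pairs_of_perfect [CompactSpace X] [T2Space X] (hC : Perfect C)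
    (hne : C.Nonempty) :
    ∃ A : ℕ → Bool → Set X, (∀ n b, IsClosed (A n b)) ∧
      (∀ n, Disjoint (A n false) (A n true)) ∧ ∀ e : ℕ → Bool, (⋂ n, A n (e n)).Nonempty := by
  obtain ⟨D, hclosed, hnonempty, hanti, hdisj⟩ := exists_cantorScheme_of_perfect hC hne
  -- `A n b` collects the pieces with `n`-th digit `b`; the address lists have the last digit first.
  refine ⟨fun n b => ⋃ s ∈ {s : List Bool | s.length = n}, D (b :: s), fun n b => ?_, fun n => ?_,
    fun e => ?_⟩
  · exact (List.finite_length_eq Bool n).isClosed_biUnion fun s _ => hclosed _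
  · simp only [disjoint_iUnion_left, disjoint_iUnion_right]
    intro s hs t ht
    exact disjoint_of_length_eq hanti hdisj (by simp [hs.out, ht.out]) (by simp)
  · obtain ⟨x, hx⟩ : (⋂ n, D (PiNat.res e n)).Nonempty :=
      IsCompact.nonempty_iInter_of_sequence_nonempty_isCompact_isClosed _ (fun n => hanti _ _)
        (fun n => hnonempty _) (hclosed _).isCompact fun n => hclosed _
    refine ⟨x, mem_iInter.2 fun n => mem_biUnion (PiNat.res_length e n) ?_⟩
    exact mem_iInter.1 hx (n + 1)

theorem exists_linearIsometry_l1_of_perfect [CompactSpace X] [T2Space X] (hC : Perfect C)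
    (hne : C.Nonempty) : Nonempty (ℓ¹(ℕ, ℝ) →ₗᵢ[ℝ] C(X, ℝ)) := by
  obtain ⟨A, hclosed, hdisj, hind⟩ := exists_independent_pairs_of_perfect hC hne
  obtain ⟨f, hf, hsigns⟩ := exists_continuous_signs hclosed hdisj hind
  have hf_norm (n : ℕ) : ‖f n‖ ≤ 1 := ((f n).norm_le zero_le_one).2 (hf n)
  exact ⟨⟨(l1Lift f zero_le_one hf_norm).toLinearMap, norm_l1Lift_of_signs hf_norm hsigns⟩⟩

end CantorScheme

section PerfectPreimage

variable {X Y : Type*} [TopologicalSpace X] [TopologicalSpace Y]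

theorem perfectSpace_of_irreducible [PerfectSpace Y] {f : X → Y} (hf : IsClosedMap f)
    (hsurj : f.Surjective) (hirr : ∀ E : Set X, E ≠ univ → IsClosed E → f '' E ≠ univ) :
    PerfectSpace X := by
  rw [perfectSpace_iff_forall_not_isolated]
  intro x
  by_contra hx
  have hopen : IsOpen {x} := by
    rwa [isOpen_singleton_iff_punctured_nhds, ← not_neBot]
  have image_open : IsOpen (f '' {x}ᶜ)ᶜ := (hf _ hopen.isClosed_compl).isOpen_compl
  have image_ne : f '' {x}ᶜ ≠ univ := hirr _ (by simp) hopen.isClosed_compl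
  have subset_singleton : (f '' {x}ᶜ)ᶜ ⊆ {f x} := by
    intro y hy
    obtain ⟨z, rfl⟩ := hsurj y
    by_contra hzx
    exact hy ⟨z, fun hz => hzx (congrArg f hz), rfl⟩
  have : (f '' {x}ᶜ)ᶜ = {f x} :=
    (nonempty_compl.2 image_ne).subset_singleton_iff.1 subset_singleton
  exact not_isOpen_singleton (f x) (this ▸ image_open)

theorem exists_isCompact_irreducible [CompactSpace X] [T2Space Y] {f : X → Y} (hf : Continuous f)
    (hsurj : f.Surjective) :
    ∃ E : Set X, IsCompact E ∧ f '' E = univ ∧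
      ∀ E₀ : Set E, E₀ ≠ univ → IsClosed E₀ → E.domRestrict f '' E₀ ≠ univ := by
  -- Mathlib's version wants `X` and `Y` in the same universe; the quotient of `X` replaces `Y`.
  have hquot : IsQuotientMap (⟨f, hf⟩ : C(X, Y)) := hf.isClosedMap.isQuotientMap hf hsurj
  let e := hquot.homeomorph.symm
  have image_eq_univ (S : Set Y) : e '' S = univ ↔ S = univ := by
    rw [← e.injective.image_injective.eq_iff, image_univ_of_surjective e.surjective]
  have : T2Space (Quotient (Setoid.ker f)) := e.t2Space
  obtain ⟨E, hE, hE_image, hirr⟩ := exists_compact_surjective_zorn_subset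
    (e.continuous.comp hf) (e.surjective.comp hsurj)
  refine ⟨E, isCompact_iff_compactSpace.2 hE, ?_, fun E₀ hne hclosed h => ?_⟩
  · rwa [image_comp, image_eq_univ] at hE_image
  · refine hirr E₀ hne hclosed ?_
    change (e ∘ E.domRestrict f) '' E₀ = univ
    rwa [image_comp, image_eq_univ]

theorem preperfect_iff_perfectSpace {C : Set X} : Preperfect C ↔ PerfectSpace C := by
  rw [perfectSpace_iff_forall_not_isolated, Preperfect, Subtype.forall]
  refine forall₂_congr fun x hx => ?_
  have : ({⟨x, hx⟩}ᶜ : Set C) = Subtype.val ⁻¹' {x}ᶜ := by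
    ext; simp [Subtype.ext_iff]
  rw [AccPt, neBot_iff, neBot_iff, this, Ne, Ne, nhdsWithin_subtype_eq_bot_iff]

theorem preperfect_image {f : X → Y} (hf : Continuous f) (hinj : f.Injective) {C : Set X}
    (hC : Preperfect C) : Preperfect (f '' C) := by
  rintro _ ⟨x, hx, rfl⟩
  simpa only [map_principal] using (hC x hx).map hf.continuousAt hinj

theorem exists_perfect_of_subset_range [CompactSpace X] [T2Space X] [T2Space Y] {f : X → Y}
    (hf : Continuous f) {C : Set Y} (hC : Perfect C) (hne : C.Nonempty) (hrange : C ⊆ range f) :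
    ∃ E : Set X, E.Nonempty ∧ Perfect E := by
  have : PerfectSpace C := preperfect_iff_perfectSpace.1 hC.acc
  have : Nonempty C := hne.to_subtype
  have : CompactSpace (f ⁻¹' C) := isCompact_iff_compactSpace.1 (hC.closed.preimage hf).isCompact
  let g : f ⁻¹' C → C := C.restrictPreimage f
  have hg : Continuous g := hf.restrictPreimage
  have hg_surj : g.Surjective := by
    rintro ⟨y, hy⟩
    obtain ⟨x, rfl⟩ := hrange hy
    exact ⟨⟨x, hy⟩, rfl⟩
  obtain ⟨E, hE, hE_image, hirr⟩ := exists_isCompact_irreducible hg hg_surj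
  have : CompactSpace E := isCompact_iff_compactSpace.1 hE
  have : PerfectSpace E := perfectSpace_of_irreducible
    (hg.comp continuous_subtype_val).isClosedMap
    (by rwa [← range_eq_univ, range_comp, Subtype.range_coe]) hirr
  have hE_ne : E.Nonempty := image_nonempty.1 (hE_image ▸ univ_nonempty)
  exact ⟨Subtype.val '' E, hE_ne.image _, (hE.image continuous_subtype_val).isClosed,
    preperfect_image continuous_subtype_val Subtype.val_injective
      (preperfect_iff_perfectSpace.2 this)⟩

end PerfectPreimage

theorem exists_subseq_tendsto_of_countable_range {X Y : Type*} [TopologicalSpace Y]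
    [FirstCountableTopology Y] {s : Set Y} (hs : IsCompact s) {f : ℕ → X → Y}
    (hf : ∀ n x, f n x ∈ s) (hcount : (range fun x n => f n x).Countable) :
    ∃ m : ℕ → ℕ, StrictMono m ∧ ∀ x, ∃ y, Tendsto (fun k => f (m k) x) atTop (𝓝 y) := by
  have := hcount.to_subtype
  obtain ⟨v, -, m, hm, hlim⟩ :=
    (isCompact_univ_pi fun _ : range fun x n => f n x => hs).tendsto_subseq
      (x := fun n y => y.1 n) (by rintro n ⟨_, x, rfl⟩ -; exact hf n x)
  exact ⟨m, hm, fun x => ⟨_, tendsto_pi_nhds.1 hlim ⟨_, x, rfl⟩⟩⟩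

section Mazur

theorem map_nonneg_of_isUpperSet {E R : Type*} [AddCommGroup E] [PartialOrder E]
    [IsOrderedAddMonoid E] [AddCommGroup R] [LinearOrder R] [IsOrderedAddMonoid R] [Archimedean R]
    {T : Set E} (hT : IsUpperSet T) (hne : T.Nonempty) (Λ : E →+ R) (hbdd : BddBelow (Λ '' T))
    {g : E} (hg : 0 ≤ g) : 0 ≤ Λ g := by
  obtain ⟨t, ht⟩ := hne
  obtain ⟨s, hs⟩ := hbdd
  by_contra! hneg
  obtain ⟨n, hn⟩ := exists_lt_nsmul (neg_pos.2 hneg) (Λ t - s)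
  have hmem : t + n • g ∈ T := hT (le_add_of_nonneg_right (nsmul_nonneg hg n)) ht
  have hle : s ≤ Λ t + n • Λ g := by simpa using hs (mem_image_of_mem Λ hmem)
  rw [smul_neg, sub_lt_iff_lt_add, lt_neg_add_iff_add_lt, add_comm] at hn
  exact hle.not_gt hn

theorem convex_setOf_exists_abs_le {X : Type*} [TopologicalSpace X]
    {S : Set C(X, ℝ)} (hS : Convex ℝ S) :
    Convex ℝ {g : C(X, ℝ) | ∃ u ∈ S, |u| ≤ g} := by
  rintro g ⟨u, hu, hug⟩ h ⟨v, hv, hvh⟩ s t hs ht hst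
  refine ⟨s • u + t • v, hS hu hv hs ht hst, fun x => ?_⟩
  calc |s * u x + t * v x| ≤ |s * u x| + |t * v x| := abs_add_le _ _
    _ = s * |u x| + t * |v x| := by rw [abs_mul, abs_mul, abs_of_nonneg hs, abs_of_nonneg ht]
    _ ≤ s * g x + t * h x := by gcongr; exacts [hug x, hvh x]

variable {X : Type*} [TopologicalSpace X] [CompactSpace X] [T2Space X]

theorem exists_isFiniteMeasure_integral_eq [MeasurableSpace X] [BorelSpace X]
    (Λ : C(X, ℝ) →ₚ[ℝ] ℝ) :
    ∃ μ : Measure X, IsFiniteMeasure μ ∧ ∀ g : C(X, ℝ), ∫ x, g x ∂μ = Λ g := by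
  let L : CompactlySupportedContinuousMap X ℝ →ₚ[ℝ] ℝ :=
    { toFun g := Λ g
      map_add' f g := map_add Λ (f : C(X, ℝ)) g
      map_smul' r g := map_smul Λ r (g : C(X, ℝ))
      monotone' f g hfg := Λ.monotone' hfg }
  exact ⟨RealRMK.rieszMeasure L, inferInstance, fun g =>
    RealRMK.integral_rieszMeasure L (CompactlySupportedContinuousMap.continuousMapEquiv g)⟩

theorem tendsto_positiveLinearMap_of_bounded (Λ : C(X, ℝ) →ₚ[ℝ] ℝ) {h : ℕ → C(X, ℝ)}
    {g : C(X, ℝ)} {M : ℝ} (hM : ∀ n x, |h n x| ≤ M)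
    (hlim : ∀ x, Tendsto (fun n => h n x) atTop (𝓝 (g x))) :
    Tendsto (fun n => Λ (h n)) atTop (𝓝 (Λ g)) := by
  borelize X
  obtain ⟨μ, _, hμ⟩ := exists_isFiniteMeasure_integral_eq Λ
  simp only [← hμ]
  exact tendsto_integral_of_dominated_convergence (fun _ => M)
    (fun n => (h n).continuous.aestronglyMeasurable) (integrable_const M)
    (fun n => .of_forall (hM n)) (.of_forall hlim)

theorem zero_mem_closure_convexHull_of_tendsto_zero {h : ℕ → C(X, ℝ)} {M : ℝ}
    (hM : ∀ n x, |h n x| ≤ M) (hlim : ∀ x, Tendsto (fun n => h n x) atTop (𝓝 0)) :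
    (0 : C(X, ℝ)) ∈ closure (convexHull ℝ (range h)) := by
  by_contra hzero
  obtain ⟨ε, hε, hball⟩ : ∃ ε > 0, ∀ u ∈ convexHull ℝ (range h), ε ≤ ‖u‖ := by
    simpa [Metric.mem_closure_iff] using hzero
  -- Separating `0` from this upper set, rather than from the hull, yields a positive functional.
  let T : Set C(X, ℝ) := {g | ∃ u ∈ convexHull ℝ (range h), |u| ≤ g}
  have abs_mem (n : ℕ) : |h n| ∈ T := ⟨h n, subset_convexHull ℝ _ (mem_range_self n), le_rfl⟩
  have hT_upper : IsUpperSet T := fun g g' hgg' ⟨u, hu, hug⟩ => ⟨u, hu, hug.trans hgg'⟩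
  have hdisj : Disjoint (Metric.ball (0 : C(X, ℝ)) ε) T := by
    rw [disjoint_left]
    rintro g hg ⟨u, hu, hug⟩
    have : ‖u‖ ≤ ‖g‖ := (ContinuousMap.norm_le _ (norm_nonneg g)).2 fun x =>
      (hug x).trans (g.apply_le_norm x)
    exact ((hball u hu).trans this).not_gt (mem_ball_zero_iff.1 hg)
  obtain ⟨Λ, s, hΛ_ball, hΛ_T⟩ := geometric_hahn_banach_open (convex_ball _ _) Metric.isOpen_ball
    (convex_setOf_exists_abs_le (convex_convexHull ℝ (range h))) hdisj
  have hs : 0 < s := by simpa using hΛ_ball 0 (Metric.mem_ball_self hε)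
  have hΛ_nonneg (g : C(X, ℝ)) (hg : 0 ≤ g) : 0 ≤ Λ g :=
    map_nonneg_of_isUpperSet hT_upper ⟨_, abs_mem 0⟩ (Λ : C(X, ℝ) →+ ℝ)
      ⟨s, forall_mem_image.2 hΛ_T⟩ hg
  have hΛ_lim : Tendsto (fun n => Λ |h n|) atTop (𝓝 (Λ 0)) :=
    tendsto_positiveLinearMap_of_bounded (PositiveLinearMap.mk₀ Λ.toLinearMap hΛ_nonneg)
      (by simpa using hM) fun x => by simpa using (hlim x).abs
  have : s ≤ Λ 0 := ge_of_tendsto' hΛ_lim fun n => hΛ_T _ (abs_mem n)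
  exact hs.not_ge (by simpa using this)

end Mazur

section L1Basis

variable {ι : Type*} [DecidableEq ι]

theorem two_le_norm_of_mem_convexHull_single_sub_single {κ : Type*} {p q : κ → ι}
    (hpq : Disjoint (range p) (range q)) {a : ℓ¹(ι, ℝ)}
    (ha : a ∈ convexHull ℝ (range fun k => lp.single 1 (p k) 1 - lp.single 1 (q k) 1)) :
    2 ≤ ‖a‖ := by
  classical
  let sign (i : ι) : ℝ := if i ∈ range p then 1 else -1
  have hsign (i : ι) : ‖sign i‖ ≤ 1 := by
    dsimp only [sign]; split_ifs <;> simp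
  let ψ : ℓ¹(ι, ℝ) →L[ℝ] ℝ := l1Lift sign zero_le_one hsign
  have hψ : ψ a = 2 := by
    have hconv : Convex ℝ (ψ ⁻¹' {2}) := (convex_singleton 2).is_linear_preimage ψ.isLinear
    refine convexHull_min ?_ hconv ha
    rintro _ ⟨k, rfl⟩
    have hp : sign (p k) = 1 := if_pos (mem_range_self k)
    have hq : sign (q k) = -1 := if_neg (disjoint_right.1 hpq (mem_range_self k))
    norm_num [ψ, l1Lift_single, hp, hq]
  calc (2 : ℝ) = ψ a := hψ.symm
    _ ≤ ‖ψ a‖ := le_abs_self _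
    _ ≤ 1 * ‖a‖ := norm_l1Lift_apply_le _ _ a
    _ = ‖a‖ := one_mul _

variable {K : Type*} [TopologicalSpace K] [CompactSpace K]

theorem abs_apply_single_le (J : ℓ¹(ι, ℝ) →L[ℝ] C(K, ℝ)) (i : ι) (x : K) :
    |J (lp.single 1 i 1) x| ≤ ‖J‖ := by
  calc |J (lp.single 1 i 1) x| ≤ ‖J (lp.single 1 i 1)‖ := (J (lp.single 1 i 1)).norm_coe_le_norm x
    _ ≤ ‖J‖ := J.unit_le_opNorm _ (by simp [lp.norm_single])

theorem not_forall_exists_tendsto_apply_single [T2Space K] (J : ℓ¹(ι, ℝ) →L[ℝ] C(K, ℝ)) {c : ℝ}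
    (hc : 0 < c) (hJ : ∀ a, c * ‖a‖ ≤ ‖J a‖) {m : ℕ → ι} (hm : m.Injective) :
    ¬ ∀ x, ∃ y, Tendsto (fun k => J (lp.single 1 (m k) 1) x) atTop (𝓝 y) := by
  intro hlim
  let w (k : ℕ) : ℓ¹(ι, ℝ) := lp.single 1 (m (2 * k)) 1 - lp.single 1 (m (2 * k + 1)) 1
  have hbound (k : ℕ) (x : K) : |J (w k) x| ≤ ‖J‖ + ‖J‖ := by
    simp only [w, map_sub, ContinuousMap.sub_apply]
    exact (abs_sub _ _).trans (add_le_add (abs_apply_single_le J _ x) (abs_apply_single_le J _ x))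
  have hnull (x : K) : Tendsto (fun k => J (w k) x) atTop (𝓝 0) := by
    obtain ⟨y, hy⟩ := hlim x
    have heven : Tendsto (fun k : ℕ => 2 * k) atTop atTop :=
      tendsto_id.const_mul_atTop' two_pos
    simpa [w] using (hy.comp heven).sub (hy.comp ((tendsto_add_atTop_nat 1).comp heven))
  have hdisj : Disjoint (range fun k => m (2 * k)) (range fun k => m (2 * k + 1)) := by
    rw [disjoint_range_iff]
    intro j k hjk
    have := hm hjk
    omega
  obtain ⟨u, hu, hu_small⟩ := Metric.mem_closure_iff.1
    (zero_mem_closure_convexHull_of_tendsto_zero hbound hnull) (c * 2) (by positivity)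
  obtain ⟨a, ha, rfl⟩ : u ∈ J '' convexHull ℝ (range w) := by
    rwa [IsLinearMap.image_convexHull (f := J) J.isLinear, ← range_comp']
  have := two_le_norm_of_mem_convexHull_single_sub_single hdisj ha
  rw [dist_zero_left] at hu_small
  have : c * 2 ≤ ‖J a‖ := (by gcongr : c * 2 ≤ c * ‖a‖).trans (hJ a)
  exact this.not_gt hu_small

theorem exists_perfect_of_l1_embedding [T2Space K]
    (J : ℓ¹(ℕ, ℝ) →L[ℝ] C(K, ℝ)) {c : ℝ} (hc : 0 < c) (hJ : ∀ a, c * ‖a‖ ≤ ‖J a‖) :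
    ∃ C : Set K, C.Nonempty ∧ Perfect C := by
  let φ (x : K) (n : ℕ) : ℝ := J (lp.single 1 n 1) x
  have hφ : Continuous φ := by fun_prop
  by_cases hcount : (range φ).Countable
  · obtain ⟨m, hm, hlim⟩ := exists_subseq_tendsto_of_countable_range (isCompact_Icc (a := -‖J‖))
      (fun n x => abs_le.1 (abs_apply_single_le J n x)) hcount
    exact absurd hlim (not_forall_exists_tendsto_apply_single J hc hJ hm.injective)
  · obtain ⟨D, hD, hne, hsub⟩ := exists_perfect_nonempty_of_isClosed_of_not_countable
      (isCompact_range hφ).isClosed hcount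
    exact exists_perfect_of_subset_range hφ hD hne hsub

end L1Basis

end L1Embedding

/-- A compact Hausdorff space `K` is not scattered (it has a nonempty
closed subset with no isolated points, i.e. a nonempty perfect subset) if and only if
`ℓ₁` embeds isomorphically (boundedly below) into `C(K)`. -/
theorem not_scattered_iff_l1_embeds
    {K : Type*} [TopologicalSpace K] [CompactSpace K] [T2Space K] :
    (∃ C : Set K, C.Nonempty ∧ Perfect C) ↔
      ∃ J : lp (fun _ : ℕ => ℝ) 1 →L[ℝ] C(K, ℝ),
        ∃ c > 0, ∀ a, c * ‖a‖ ≤ ‖J a‖ := by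
  constructor
  · rintro ⟨C, hne, hC⟩
    obtain ⟨J⟩ := L1Embedding.exists_linearIsometry_l1_of_perfect hC hne
    exact ⟨J.toContinuousLinearMap, 1, one_pos, fun a => by simp⟩
  · rintro ⟨J, c, hc, hJ⟩
    exact L1Embedding.exists_perfect_of_l1_embedding J hc hJ
end

section
/- Let p ∈ (1, ∞) and suppose there exists a linear isometric embedding of ℓ_p into C(K) whose range consists of d-Lipschitz functions. Then for every p' ∈ [p, ∞) there exists a linear isometric embedding of ℓ_{p'} into C(K) whose range consists of d-Lipschitz functions. -/
/-!
Let `q` and `q'` be the exponents conjugate to `p < p'`. Under an isometric embedding `J` of `ℓ^p`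
into `C(K)`, each point `t` of `K` gives a functional `φ_t = δ_t ∘ J` in the unit ball of `ℓ^q`.
The Mazur map, which replaces each coordinate `x` by `sgn(x) |x| ^ (q / q')`, carries the unit ball
of `ℓ^q` into that of `ℓ^q'`, so the image of `φ_t` pairs with each `a ∈ ℓ^p'` to give a value
`T a t`, and `T` maps `ℓ^p'` into `C(K)` with norm at most one.

It is an isometry: for `‖a‖ = 1`, the vector `b` with coordinates `sgn(a_i) |a_i| ^ (p' / p)` has
norm one in `ℓ^p`, and `|J b|` attains the value one at some `t`; the equality case of Hölder's
inequality for `b` and `φ_t` then says that the image of `φ_t` norms `a`.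

Since `q / q' > 1`, the Mazur map is Lipschitz on the unit ball of `ℓ^q`. By the uniform
boundedness principle the pointwise Lipschitz bounds for `t ↦ φ_t a` hold with one constant on the
unit ball of `ℓ^p`, so `t ↦ φ_t` is `d`-Lipschitz in norm, and hence so is every `T a`.
-/

open scoped lp ENNReal

section SignedPow

/-- The signed power `sgn(x) |x| ^ r`. Writing it as `x * |x| ^ (r - 1)` gives the value `0` at
`x = 0` for every exponent `r`. -/
noncomputable def signedPow (r x : ℝ) : ℝ := x * |x| ^ (r - 1)

variable {r s : ℝ}

lemma signedPow_one (x : ℝ) : signedPow 1 x = x := by simp [signedPow]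

lemma signedPow_zero_right (r : ℝ) : signedPow r 0 = 0 := zero_mul _

lemma signedPow_of_abs_eq_one {c : ℝ} (hc : |c| = 1) (r : ℝ) : signedPow r c = c := by
  simp [signedPow, hc]

lemma signedPow_mul (r x y : ℝ) : signedPow r (x * y) = signedPow r x * signedPow r y := by
  simp only [signedPow, abs_mul, Real.mul_rpow (abs_nonneg x) (abs_nonneg y)]
  ring

lemma abs_signedPow (hr : r ≠ 0) (x : ℝ) : |signedPow r x| = |x| ^ r := by
  rcases eq_or_ne x 0 with rfl | hx
  · simp [signedPow_zero_right, Real.zero_rpow hr]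
  · have hx' : 0 < |x| := abs_pos.mpr hx
    rw [signedPow, abs_mul, Real.abs_rpow_of_nonneg hx'.le, abs_abs, Real.rpow_sub_one hx'.ne',
      mul_div_cancel₀ _ hx'.ne']

lemma abs_signedPow_rpow (hr : r ≠ 0) (x s : ℝ) : |signedPow r x| ^ s = |x| ^ (r * s) := by
  rw [abs_signedPow hr, ← Real.rpow_mul (abs_nonneg x)]

lemma signedPow_signedPow (hs : s ≠ 0) (r x : ℝ) :
    signedPow r (signedPow s x) = signedPow (s * r) x := by
  rcases eq_or_ne x 0 with rfl | hx
  · simp only [signedPow_zero_right]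
  · rw [signedPow, abs_signedPow_rpow hs, signedPow, signedPow, mul_assoc,
      ← Real.rpow_add (abs_pos.mpr hx)]
    ring_nf

lemma signedPow_mul_signedPow (hrs : r + s ≠ 0) (x : ℝ) :
    signedPow r x * signedPow s x = |x| ^ (r + s) := by
  rcases eq_or_ne x 0 with rfl | hx
  · simp [signedPow_zero_right, Real.zero_rpow hrs]
  · have hx' : 0 < |x| := abs_pos.mpr hx
    calc signedPow r x * signedPow s x = |x| ^ (2 : ℝ) * |x| ^ (r - 1) * |x| ^ (s - 1) := by
          rw [Real.rpow_two, sq_abs, signedPow, signedPow]; ring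
      _ = |x| ^ (r + s) := by rw [← Real.rpow_add hx', ← Real.rpow_add hx']; ring_nf

lemma hasDerivAt_signedPow (hr : 1 < r) (x : ℝ) :
    HasDerivAt (signedPow r) (r * |x| ^ (r - 1)) x := by
  rcases eq_or_ne x 0 with rfl | hx
  · have hcont : Continuous fun t : ℝ ↦ |t| ^ (r - 1) :=
      continuous_abs.rpow_const fun _ ↦ Or.inr (sub_nonneg.mpr hr.le)
    rw [hasDerivAt_iff_tendsto_slope_zero]
    refine ((hcont.tendsto' 0 _ (by simp [Real.zero_rpow (sub_pos.mpr hr).ne'])).mono_left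
      nhdsWithin_le_nhds).congr' ?_
    filter_upwards [self_mem_nhdsWithin] with t (ht : t ≠ 0)
    simp [signedPow, ht]
  · have hx' : |x| ≠ 0 := abs_ne_zero.mpr hx
    refine ((hasDerivAt_id x).mul
      ((hasDerivAt_abs hx).rpow_const (p := r - 1) (Or.inl hx'))).congr_deriv ?_
    rw [id_eq, one_mul, mul_assoc (SignType.sign x : ℝ), ← mul_assoc x,
      self_mul_sign, Real.rpow_sub_one hx' (r - 1)]
    field_simp
    ring

lemma continuous_signedPow (hr : 1 < r) : Continuous (signedPow r) :=
  continuous_iff_continuousAt.mpr fun x ↦ (hasDerivAt_signedPow hr x).continuousAt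

lemma abs_slope_signedPow_le (hr : 1 < r) (x y : ℝ) :
    |slope (signedPow r) x y| ≤ r * max |x| |y| ^ (r - 1) := by
  set m := max |x| |y|
  have hlip : |signedPow r y - signedPow r x| ≤ r * m ^ (r - 1) * |y - x| := by
    refine (convex_Icc (-m) m).norm_image_sub_le_of_norm_hasDerivWithin_le
      (fun z _ ↦ (hasDerivAt_signedPow hr z).hasDerivWithinAt) (fun z hz ↦ ?_)
      (abs_le.mp (le_max_left _ _)) (abs_le.mp (le_max_right _ _))
    rw [Real.norm_of_nonneg (by positivity)]
    gcongr
    exact abs_le.mpr hz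
  rw [slope_def_field, abs_div]
  exact div_le_of_le_mul₀ (abs_nonneg _) (by positivity) hlip

lemma abs_slope_signedPow_rpow_le (hr : 1 < r) (hs : 0 < s) (x y : ℝ) :
    |slope (signedPow r) x y| ^ s ≤ r ^ s * (|x| ^ ((r - 1) * s) + |y| ^ ((r - 1) * s)) := by
  have hmax : max |x| |y| ^ ((r - 1) * s) ≤ |x| ^ ((r - 1) * s) + |y| ^ ((r - 1) * s) := by
    rcases max_choice |x| |y| with hm | hm <;> rw [hm]
    · exact le_add_of_nonneg_right (by positivity)
    · exact le_add_of_nonneg_left (by positivity)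
  calc |slope (signedPow r) x y| ^ s ≤ (r * max |x| |y| ^ (r - 1)) ^ s := by
        gcongr; exact abs_slope_signedPow_le hr x y
    _ = r ^ s * max |x| |y| ^ ((r - 1) * s) := by
        rw [Real.mul_rpow (by positivity) (by positivity), ← Real.rpow_mul (by positivity)]
    _ ≤ _ := by gcongr

end SignedPow

section HolderEquality

variable {ι : Type*} {P Q P' Q' : ℝ}

lemma eq_signedPow_of_mul_eq_young (h : P.HolderConjugate Q) {b x : ℝ}
    (hbx : b * x = |b| ^ P / P + |x| ^ Q / Q) : b = signedPow (Q - 1) x := by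
  have habs : |b| * |x| = |b| ^ P / P + |x| ^ Q / Q :=
    (Real.young_inequality_of_nonneg (abs_nonneg b) (abs_nonneg x) h).antisymm
      (hbx ▸ abs_mul b x ▸ le_abs_self (b * x))
  have hpow : |b| ^ P = |x| ^ Q :=
    (Real.young_inequality_eq_iff_of_nonneg (abs_nonneg b) (abs_nonneg x) h).mp habs
  rcases eq_or_ne x 0 with rfl | hx
  · rw [signedPow_zero_right, ← abs_eq_zero, ← Real.rpow_eq_zero (abs_nonneg b) h.ne_zero, hpow,
      abs_zero, Real.zero_rpow h.symm.ne_zero]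
  · refine mul_right_cancel₀ hx ?_
    calc b * x = |x| ^ Q * (P⁻¹ + Q⁻¹) := by rw [hbx, hpow]; ring
      _ = |x| ^ (Q - 1 + 1) := by rw [h.inv_add_inv_eq_one, mul_one, sub_add_cancel]
      _ = signedPow (Q - 1) x * signedPow 1 x :=
          (signedPow_mul_signedPow (by simpa using h.symm.ne_zero) x).symm
      _ = signedPow (Q - 1) x * x := by rw [signedPow_one]

lemma eq_mul_signedPow_of_hasSum_mul (h : P.HolderConjugate Q) {b x : ι → ℝ} {c : ℝ}
    (hb : HasSum (fun i ↦ |b i| ^ P) 1) (hx : ∀ s : Finset ι, ∑ i ∈ s, |x i| ^ Q ≤ 1)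
    (hbx : HasSum (fun i ↦ b i * x i) c) (hc : |c| = 1) (i : ι) :
    b i = c * signedPow (Q - 1) (x i) := by
  have hcc : c * c = 1 := by rw [← abs_mul_abs_self, hc, one_mul]
  have hxs : Summable fun i ↦ |x i| ^ Q := summable_of_sum_le (fun _ ↦ by positivity) hx
  let defect (i : ι) : ℝ := |b i| ^ P / P + |x i| ^ Q / Q - c * b i * x i
  have hdefect_nonneg (i : ι) : 0 ≤ defect i := by
    have := Real.young_inequality (c * b i) (x i) h
    rw [abs_mul, hc, one_mul] at this
    exact sub_nonneg.mpr this
  have hdefect_sum : HasSum defect (1 / P + (∑' i, |x i| ^ Q) / Q - 1) := by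
    refine ((hb.div_const P).add (hxs.hasSum.div_const Q)).sub ?_
    simpa only [mul_assoc, hcc] using hbx.mul_left c
  have hdefect_sum_le : 1 / P + (∑' i, |x i| ^ Q) / Q - 1 ≤ 0 := by
    have : (∑' i, |x i| ^ Q) / Q ≤ 1 / Q :=
      div_le_div_of_nonneg_right (hxs.tsum_le_of_sum_le hx) h.symm.nonneg
    have := h.one_div_add_one_div
    linarith
  have hdefect_zero : defect i = 0 :=
    ((le_hasSum hdefect_sum i fun j _ ↦ hdefect_nonneg j).trans hdefect_sum_le).antisymm
      (hdefect_nonneg i)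
  have hyoung : c * b i = signedPow (Q - 1) (x i) := by
    refine eq_signedPow_of_mul_eq_young h ?_
    rw [abs_mul, hc, one_mul]
    exact (sub_eq_zero.mp hdefect_zero).symm
  rw [← hyoung, ← mul_assoc, hcc, one_mul]

lemma hasSum_mul_signedPow_of_hasSum_signedPow_mul (h : P.HolderConjugate Q)
    (h' : P'.HolderConjugate Q') {a x : ι → ℝ} {c : ℝ} (ha : HasSum (fun i ↦ |a i| ^ P') 1)
    (hx : ∀ s : Finset ι, ∑ i ∈ s, |x i| ^ Q ≤ 1)
    (hax : HasSum (fun i ↦ signedPow (P' / P) (a i) * x i) c) (hc : |c| = 1) :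
    HasSum (fun i ↦ a i * signedPow (Q / Q') (x i)) c := by
  have hP := h.ne_zero
  have hP' := h'.ne_zero
  have hQ := h.symm.ne_zero
  have hb : HasSum (fun i ↦ |signedPow (P' / P) (a i)| ^ P) 1 := by
    simpa only [abs_signedPow_rpow (div_ne_zero hP' hP), div_mul_cancel₀ P' hP] using ha
  have ha_eq (i : ι) : a i = c * signedPow (Q / P') (x i) := calc
    a i = signedPow (P / P') (signedPow (P' / P) (a i)) := by
      rw [signedPow_signedPow (div_ne_zero hP' hP), div_mul_div_cancel₀ hP, div_self hP',
        signedPow_one]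
    _ = c * signedPow ((Q - 1) * (P / P')) (x i) := by
      rw [eq_mul_signedPow_of_hasSum_mul h hb hx hax hc i, signedPow_mul,
        signedPow_of_abs_eq_one hc, signedPow_signedPow h.symm.sub_one_ne_zero]
    _ = c * signedPow (Q / P') (x i) := by rw [← mul_div_assoc, h.symm.sub_one_mul_conj]
  have hexp : Q / P' + Q / Q' = Q := by
    rw [div_eq_mul_inv, div_eq_mul_inv, ← mul_add, h'.inv_add_inv_eq_one, mul_one]
  have hterm (i : ι) : a i * signedPow (Q / Q') (x i) = c * |a i| ^ P' := calc
    _ = c * (signedPow (Q / P') (x i) * signedPow (Q / Q') (x i)) := by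
      rw [ha_eq, mul_assoc]
    _ = c * |x i| ^ Q := by rw [signedPow_mul_signedPow (hexp.symm ▸ hQ), hexp]
    _ = c * |a i| ^ P' := by
      rw [ha_eq i, abs_mul, hc, one_mul, abs_signedPow_rpow (div_ne_zero hQ hP'),
        div_mul_cancel₀ Q hP']
  simpa only [hterm, mul_one] using ha.mul_left c

lemma div_sub_one_eq_div_of_holderTriple {S : ℝ} (h : P.HolderConjugate Q)
    (h' : P'.HolderConjugate Q') (hS : P'.HolderTriple S P) : Q / Q' - 1 = Q / S := by
  have hinv : S⁻¹ = Q'⁻¹ - Q⁻¹ := by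
    linarith [h.inv_add_inv_eq_one, h'.inv_add_inv_eq_one, hS.inv_add_inv_eq_inv]
  rw [div_eq_mul_inv Q S, hinv, mul_sub, mul_inv_cancel₀ h.symm.ne_zero, div_eq_mul_inv]

lemma one_lt_div_of_holderTriple {S : ℝ} (h : P.HolderConjugate Q)
    (h' : P'.HolderConjugate Q') (hS : P'.HolderTriple S P) : 1 < Q / Q' := by
  rw [← sub_pos, div_sub_one_eq_div_of_holderTriple h h' hS]
  exact div_pos h.symm.pos hS.symm.pos

end HolderEquality

section LpSeries

variable {ι : Type*} [DecidableEq ι] {p : ℝ≥0∞}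

lemma norm_sum_lp_single_eq (hp : 0 < p.toReal) (s : Finset ι) (c : ι → ℝ) :
    ‖∑ i ∈ s, lp.single p i (c i)‖ = (∑ i ∈ s, |c i| ^ p.toReal) ^ (1 / p.toReal) := by
  simp only [← Real.norm_eq_abs, ← lp.norm_sum_single hp c, one_div]
  exact (Real.rpow_rpow_inv (lp.norm_nonneg' _) hp.ne').symm

variable {E : Type*} [NormedAddCommGroup E] [NormedSpace ℝ E] [Fact (1 ≤ p)]

lemma map_lp_single (T : ℓ^p(ι, ℝ) →L[ℝ] E) (i : ι) (c : ℝ) :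
    T (lp.single p i c) = c • T (lp.single p i 1) := by
  rw [← map_smul, ← lp.single_smul, smul_eq_mul, mul_one]

lemma hasSum_smul_map_lp_single (hp : p ≠ ⊤) (T : ℓ^p(ι, ℝ) →L[ℝ] E)
    (a : ℓ^p(ι, ℝ)) : HasSum (fun i ↦ a i • T (lp.single p i 1)) (T a) :=
  ((lp.hasSum_single hp a).mapL T).congr_fun fun i ↦ (map_lp_single T i (a i)).symm

lemma sum_abs_map_lp_single_rpow_le {Q : ℝ} (h : p.toReal.HolderConjugate Q)
    (φ : ℓ^p(ι, ℝ) →L[ℝ] ℝ) (s : Finset ι) :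
    ∑ i ∈ s, |φ (lp.single p i 1)| ^ Q ≤ ‖φ‖ ^ Q := by
  set x : ι → ℝ := fun i ↦ φ (lp.single p i 1)
  obtain ⟨g, hg, hgx⟩ := (NNReal.isGreatest_Lp s (fun i ↦ ‖x i‖₊) h.symm).1
  replace hg : ∑ i ∈ s, (g i : ℝ) ^ p.toReal ≤ 1 := mod_cast hg
  replace hgx : ∑ i ∈ s, |x i| * g i = (∑ i ∈ s, |x i| ^ Q) ^ (1 / Q) := by
    simpa using congrArg NNReal.toReal hgx
  let v : ℓ^p(ι, ℝ) := ∑ i ∈ s, lp.single p i (SignType.sign (x i) * (g i : ℝ))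
  have hv : ‖v‖ ≤ 1 := by
    rw [norm_sum_lp_single_eq h.pos]
    refine Real.rpow_le_one (by positivity) (le_trans ?_ hg) (by have := h.pos; positivity)
    gcongr with i
    rw [abs_mul, NNReal.abs_eq]
    refine mul_le_of_le_one_left (by positivity) ?_
    rcases lt_trichotomy (x i) 0 with hx | hx | hx <;> simp [hx]
  have hφv : φ v = (∑ i ∈ s, |x i| ^ Q) ^ (1 / Q) := by
    rw [← hgx, map_sum]
    refine Finset.sum_congr rfl fun i _ ↦ ?_
    rw [map_lp_single, smul_eq_mul, mul_right_comm, sign_mul_self]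
  rw [← Real.rpow_inv_le_iff_of_pos (by positivity) (norm_nonneg φ) h.symm.pos, ← one_div, ← hφv]
  exact (le_abs_self _).trans (φ.unit_le_opNorm v hv)

lemma exists_lp_clm_hasSum_smul [CompleteSpace E] (hp : p ≠ ⊤) (y : ι → E) {C : ℝ} (hC : 0 ≤ C)
    (hy : ∀ (c : ι → ℝ) (s : Finset ι),
      ‖∑ i ∈ s, c i • y i‖ ≤ C * ‖∑ i ∈ s, lp.single p i (c i)‖) :
    ∃ T : ℓ^p(ι, ℝ) →L[ℝ] E, (∀ a, HasSum (fun i ↦ a i • y i) (T a)) ∧ ‖T‖ ≤ C := by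
  have hsum (a : ℓ^p(ι, ℝ)) : Summable fun i ↦ a i • y i := by
    refine summable_iff_vanishing_norm.mpr fun ε hε ↦ ?_
    obtain ⟨s, hs⟩ := summable_iff_vanishing_norm.mp (lp.hasSum_single hp a).summable
      (ε / (C + 1)) (by positivity)
    refine ⟨s, fun t ht ↦ (hy a t).trans_lt ?_⟩
    calc C * ‖∑ i ∈ t, lp.single p i (a i)‖ ≤ (C + 1) * ‖∑ i ∈ t, lp.single p i (a i)‖ := by
          gcongr; linarith
      _ < ε := (lt_div_iff₀' (by positivity)).mp (hs t ht)
  let T₀ : ℓ^p(ι, ℝ) →ₗ[ℝ] E :=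
    { toFun a := ∑' i, a i • y i
      map_add' a b := by
        simpa only [lp.coeFn_add, Pi.add_apply, add_smul] using (hsum a).tsum_add (hsum b)
      map_smul' c a := by
        simpa only [lp.coeFn_smul, Pi.smul_apply, smul_assoc, RingHom.id_apply] using
          (hsum a).tsum_const_smul c }
  have hT₀ (a : ℓ^p(ι, ℝ)) : ‖T₀ a‖ ≤ C * ‖a‖ :=
    le_of_tendsto_of_tendsto' (hsum a).hasSum.norm ((lp.hasSum_single hp a).norm.const_mul C)
      (hy a)
  exact ⟨T₀.mkContinuous C hT₀, fun a ↦ (hsum a).hasSum, T₀.mkContinuous_norm_le hC hT₀⟩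

end LpSeries

section LpPointwise

variable {ι : Type*} {p p' : ℝ≥0∞}

lemma exists_lp_signedPow_eq (hp' : 0 < p'.toReal) (hp : 0 < p.toReal) (a : ℓ^p'(ι, ℝ)) :
    ∃ b : ℓ^p(ι, ℝ), (∀ i, b i = signedPow (p'.toReal / p.toReal) (a i)) ∧
      ‖b‖ ^ p.toReal = ‖a‖ ^ p'.toReal := by
  have hsum : HasSum (fun i ↦ ‖signedPow (p'.toReal / p.toReal) (a i)‖ ^ p.toReal)
      (‖a‖ ^ p'.toReal) := by
    simpa only [Real.norm_eq_abs, abs_signedPow_rpow (div_pos hp' hp).ne',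
      div_mul_cancel₀ _ hp.ne'] using lp.hasSum_norm hp' a
  exact ⟨⟨_, memℓp_gen hsum.summable⟩, fun _ ↦ rfl, (lp.hasSum_norm hp _).unique hsum⟩

lemma exists_lp_eq_mul {S B : ℝ} (hS : p'.toReal.HolderTriple S p.toReal) (hB : 0 ≤ B)
    (a : ℓ^p'(ι, ℝ)) {k : ι → ℝ} (hk : ∀ s : Finset ι, ∑ i ∈ s, |k i| ^ S ≤ B) :
    ∃ v : ℓ^p(ι, ℝ), (∀ i, v i = a i * k i) ∧ ‖v‖ ≤ ‖a‖ * B ^ (1 / S) := by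
  have hp' := hS.pos
  have hp := hS.pos'
  have ha := lp.norm_nonneg' a
  have hsum (s : Finset ι) : ∑ i ∈ s, ‖a i * k i‖ ^ p.toReal ≤
      (‖a‖ * B ^ (1 / S)) ^ p.toReal := calc
    _ ≤ (∑ i ∈ s, |a i| ^ p'.toReal) ^ (p.toReal / p'.toReal) *
        (∑ i ∈ s, |k i| ^ S) ^ (p.toReal / S) := Real.Lr_rpow_le_Lp_mul_Lq s a k hS
    _ ≤ (‖a‖ ^ p'.toReal) ^ (p.toReal / p'.toReal) * B ^ (p.toReal / S) := by
      have := hS.symm.pos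
      gcongr
      · exact lp.sum_rpow_le_norm_rpow hp' a s
      · exact hk s
    _ = (‖a‖ * B ^ (1 / S)) ^ p.toReal := by
      rw [Real.mul_rpow ha (by positivity), ← Real.rpow_mul ha, ← Real.rpow_mul hB,
        mul_div_cancel₀ _ hp'.ne', one_div_mul_eq_div]
  exact ⟨⟨_, memℓp_gen' hsum⟩, fun _ ↦ rfl,
    lp.norm_le_of_forall_sum_le hp (by positivity) hsum⟩

end LpPointwise

section MazurMap

variable {ι : Type*} [DecidableEq ι] {p p' : ℝ≥0∞} [Fact (1 ≤ p)] {Q Q' S : ℝ}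

/-- The coordinates of the image of a functional `φ` on `ℓ^p` under the Mazur map: `φ` is
identified with the family of its values on the unit vectors, an element of `ℓ^q` for the exponent
`q` conjugate to `p`, and the signed power of exponent `r` is applied coordinatewise. With
`r = q / q'` this lands in `ℓ^q'`. -/
noncomputable def mazurCoord (r : ℝ) (φ : ℓ^p(ι, ℝ) →L[ℝ] ℝ) (i : ι) : ℝ :=
  signedPow r (φ (lp.single p i 1))

lemma sum_abs_map_lp_single_rpow_le_one (h : p.toReal.HolderConjugate Q)
    {φ : ℓ^p(ι, ℝ) →L[ℝ] ℝ} (hφ : ‖φ‖ ≤ 1) (s : Finset ι) :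
    ∑ i ∈ s, |φ (lp.single p i 1)| ^ Q ≤ 1 :=
  (sum_abs_map_lp_single_rpow_le h φ s).trans
    (Real.rpow_le_one (norm_nonneg φ) hφ h.symm.nonneg)

lemma sum_abs_mazurCoord_rpow_le_one (h : p.toReal.HolderConjugate Q) (hQ' : Q' ≠ 0)
    {φ : ℓ^p(ι, ℝ) →L[ℝ] ℝ} (hφ : ‖φ‖ ≤ 1) (s : Finset ι) :
    ∑ i ∈ s, |mazurCoord (Q / Q') φ i| ^ Q' ≤ 1 := by
  simpa only [mazurCoord, abs_signedPow_rpow (div_ne_zero h.symm.ne_zero hQ'),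
    div_mul_cancel₀ _ hQ'] using sum_abs_map_lp_single_rpow_le_one h hφ s

lemma abs_sum_mul_mazurCoord_le (h : p.toReal.HolderConjugate Q)
    (h' : p'.toReal.HolderConjugate Q') {φ : ℓ^p(ι, ℝ) →L[ℝ] ℝ} (hφ : ‖φ‖ ≤ 1) (c : ι → ℝ)
    (s : Finset ι) :
    |∑ i ∈ s, c i * mazurCoord (Q / Q') φ i| ≤ ‖∑ i ∈ s, lp.single p' i (c i)‖ := by
  set x := mazurCoord (Q / Q') φ
  calc |∑ i ∈ s, c i * x i| ≤ ∑ i ∈ s, |c i| * |x i| := by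
        simpa only [abs_mul] using Finset.abs_sum_le_sum_abs (fun i ↦ c i * x i) s
    _ ≤ (∑ i ∈ s, |c i| ^ p'.toReal) ^ (1 / p'.toReal) * (∑ i ∈ s, |x i| ^ Q') ^ (1 / Q') := by
        simpa only [abs_abs] using Real.inner_le_Lp_mul_Lq s (|c ·|) (|x ·|) h'
    _ ≤ ‖∑ i ∈ s, lp.single p' i (c i)‖ := by
        rw [← norm_sum_lp_single_eq h'.pos]
        refine mul_le_of_le_one_right (lp.norm_nonneg' _)
          (Real.rpow_le_one (by positivity) ?_ ?_)
        · exact sum_abs_mazurCoord_rpow_le_one h h'.symm.ne_zero hφ s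
        · exact one_div_nonneg.mpr h'.symm.nonneg

lemma hasSum_mul_mazurCoord_of_abs_map_eq_one (hp : p ≠ ⊤) (h : p.toReal.HolderConjugate Q)
    (h' : p'.toReal.HolderConjugate Q') {φ : ℓ^p(ι, ℝ) →L[ℝ] ℝ} (hφ : ‖φ‖ ≤ 1)
    {a : ℓ^p'(ι, ℝ)} (ha : ‖a‖ = 1) {b : ℓ^p(ι, ℝ)}
    (hb : ∀ i, b i = signedPow (p'.toReal / p.toReal) (a i)) (hφb : |φ b| = 1) :
    HasSum (fun i ↦ a i * mazurCoord (Q / Q') φ i) (φ b) := by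
  refine hasSum_mul_signedPow_of_hasSum_signedPow_mul h h' ?_
    (sum_abs_map_lp_single_rpow_le_one h hφ) ?_ hφb
  · simpa [ha] using lp.hasSum_norm h'.pos a
  · simpa only [hb, smul_eq_mul] using hasSum_smul_map_lp_single hp φ b

lemma abs_sub_le_of_hasSum_mul_mazurCoord (hp : p ≠ ⊤) (h : p.toReal.HolderConjugate Q)
    (h' : p'.toReal.HolderConjugate Q') (hS : p'.toReal.HolderTriple S p.toReal)
    {φ ψ : ℓ^p(ι, ℝ) →L[ℝ] ℝ} (hφ : ‖φ‖ ≤ 1) (hψ : ‖ψ‖ ≤ 1) {a : ℓ^p'(ι, ℝ)} {A B : ℝ}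
    (hA : HasSum (fun i ↦ a i * mazurCoord (Q / Q') φ i) A)
    (hB : HasSum (fun i ↦ a i * mazurCoord (Q / Q') ψ i) B) :
    |A - B| ≤ ‖a‖ * ((Q / Q') ^ S * 2) ^ (1 / S) * ‖φ - ψ‖ := by
  have hr := one_lt_div_of_holderTriple h h' hS
  have hrS : (Q / Q' - 1) * S = Q := by
    rw [div_sub_one_eq_div_of_holderTriple h h' hS, div_mul_cancel₀ _ hS.symm.ne_zero]
  set r := Q / Q'
  let x (i : ι) : ℝ := φ (lp.single p i 1)
  let y (i : ι) : ℝ := ψ (lp.single p i 1)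
  let k (i : ι) : ℝ := slope (signedPow r) (y i) (x i)
  have hk (s : Finset ι) : ∑ i ∈ s, |k i| ^ S ≤ r ^ S * 2 := calc
    _ ≤ ∑ i ∈ s, r ^ S * (|y i| ^ Q + |x i| ^ Q) := by
      gcongr with i
      simpa only [hrS] using abs_slope_signedPow_rpow_le hr hS.symm.pos (y i) (x i)
    _ ≤ r ^ S * 2 := by
      rw [← Finset.mul_sum, Finset.sum_add_distrib, ← one_add_one_eq_two]
      gcongr
      · exact sum_abs_map_lp_single_rpow_le_one h hψ s
      · exact sum_abs_map_lp_single_rpow_le_one h hφ s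
  obtain ⟨v, hv, hv_norm⟩ := exists_lp_eq_mul hS (by positivity) a hk
  have hterm (i : ι) : v i * (φ - ψ) (lp.single p i 1) =
      a i * mazurCoord r φ i - a i * mazurCoord r ψ i := calc
    _ = a i * ((x i - y i) * k i) := by
      rw [hv, sub_apply, mul_assoc, mul_comm (k i)]
    _ = a i * (mazurCoord r φ i - mazurCoord r ψ i) :=
      congrArg (a i * ·) (sub_smul_slope (signedPow r) (y i) (x i))
    _ = _ := mul_sub _ _ _
  have hsub : A - B = (φ - ψ) v := (hA.sub hB).unique <| by
    simpa only [hterm, smul_eq_mul] using hasSum_smul_map_lp_single hp (φ - ψ) v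
  calc |A - B| ≤ ‖φ - ψ‖ * ‖v‖ := hsub ▸ (φ - ψ).le_opNorm v
    _ ≤ ‖φ - ψ‖ * (‖a‖ * (r ^ S * 2) ^ (1 / S)) := by gcongr
    _ = _ := mul_comm _ _

end MazurMap

lemma exists_norm_sub_le_mul_of_pointwise {X E F : Type*} [NormedAddCommGroup E] [NormedSpace ℝ E]
    [CompleteSpace E] [NormedAddCommGroup F] [NormedSpace ℝ F] {d : X → X → ℝ}
    (hd : ∀ s t, 0 ≤ d s t) {φ : X → E →L[ℝ] F}
    (hφ : ∀ a, ∃ L ≥ 0, ∀ s t, ‖φ s a - φ t a‖ ≤ L * d s t) :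
    ∃ C ≥ 0, ∀ s t, ‖φ s - φ t‖ ≤ C * d s t := by
  let g (z : X × X) : E →L[ℝ] F := (d z.1 z.2)⁻¹ • (φ z.1 - φ z.2)
  obtain ⟨C, hC⟩ : ∃ C, ∀ z, ‖g z‖ ≤ C := by
    refine banach_steinhaus fun a ↦ ?_
    obtain ⟨L, hL, hLd⟩ := hφ a
    refine ⟨L, fun z ↦ ?_⟩
    change ‖(d z.1 z.2)⁻¹ • (φ z.1 a - φ z.2 a)‖ ≤ L
    rw [norm_smul, norm_inv, Real.norm_of_nonneg (hd _ _), inv_mul_eq_div]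
    exact div_le_of_le_mul₀ (hd _ _) hL (hLd _ _)
  refine ⟨max C 0, le_max_right _ _, fun s t ↦ ?_⟩
  rcases (hd s t).eq_or_lt with hst | hst
  · have hφst : φ s = φ t := by
      ext a
      obtain ⟨L, -, hLd⟩ := hφ a
      exact sub_eq_zero.mp (norm_le_zero_iff.mp (by simpa [← hst] using hLd s t))
    simp [hφst, ← hst]
  · calc ‖φ s - φ t‖ = ‖g (s, t)‖ * d s t := by
          simp only [g, norm_smul, norm_inv, Real.norm_of_nonneg hst.le]
          field_simp
      _ ≤ max C 0 * d s t := by gcongr; exact (hC _).trans (le_max_left _ _)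

lemma exists_norm_apply_eq_norm_of_ne_zero {K E : Type*} [TopologicalSpace K] [CompactSpace K]
    [NormedAddCommGroup E] {f : C(K, E)} (hf : f ≠ 0) : ∃ t, ‖f t‖ = ‖f‖ := by
  have : Nonempty K := by
    by_contra hK
    rw [not_nonempty_iff] at hK
    exact hf (Subsingleton.elim _ _)
  obtain ⟨t, -, ht⟩ := isCompact_univ.exists_isMaxOn Set.univ_nonempty
    f.continuous.norm.continuousOn
  exact ⟨t, (f.norm_coe_le_norm t).antisymm
    ((ContinuousMap.norm_le _ (norm_nonneg _)).mpr fun s ↦ ht (Set.mem_univ s))⟩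

lemma norm_map_eq_of_forall_norm_eq_one {𝕜 E F : Type*} [RCLike 𝕜] [NormedAddCommGroup E]
    [NormedSpace 𝕜 E] [NormedAddCommGroup F] [NormedSpace 𝕜 F] (T : E →ₗ[𝕜] F)
    (hT : ∀ a, ‖a‖ = 1 → ‖T a‖ = 1) (a : E) : ‖T a‖ = ‖a‖ := by
  rcases eq_or_ne a 0 with rfl | ha
  · rw [map_zero, norm_zero, norm_zero]
  · have hunit := hT _ (norm_smul_inv_norm (𝕜 := 𝕜) ha)
    rwa [map_smul, norm_smul, norm_inv, RCLike.norm_ofReal, abs_norm,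
      inv_mul_eq_one₀ (norm_ne_zero_iff.mpr ha), eq_comm] at hunit

section PointEvaluation

variable {K E F : Type*} [TopologicalSpace K] [CompactSpace K] [NormedAddCommGroup E]
  [NormedSpace ℝ E] [NormedAddCommGroup F] [NormedSpace ℝ F]

/-- The operator `a ↦ J a t`: the pullback under `J` of the point evaluation at `t`. -/
noncomputable def evalComp (J : E →ₗᵢ[ℝ] C(K, F)) (t : K) : E →L[ℝ] F :=
  (ContinuousMap.evalCLM ℝ t).comp J.toContinuousLinearMap

lemma norm_evalComp_le_one (J : E →ₗᵢ[ℝ] C(K, F)) (t : K) : ‖evalComp J t‖ ≤ 1 :=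
  ContinuousLinearMap.opNorm_le_bound _ zero_le_one fun a ↦ by
    rw [one_mul, ← J.norm_map a]
    exact (J a).norm_coe_le_norm t

end PointEvaluation

/-- Lipschitz functions with respect to a real-valued function `d` of two points, which is not
assumed to be a metric or to be related to the topology of `K`. -/
def IsDLipschitz {K : Type*} (d : K → K → ℝ) (f : K → ℝ) : Prop :=
  ∃ L ≥ 0, ∀ t₁ t₂, |f t₁ - f t₂| ≤ L * d t₁ t₂

section MazurTransfer

variable {ι K : Type*} [DecidableEq ι] [TopologicalSpace K] [CompactSpace K]
  {p p' : ℝ≥0∞} [Fact (1 ≤ p)] {Q Q' S : ℝ}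

lemma exists_clm_hasSum_mul_mazurCoord [Fact (1 ≤ p')] (J : ℓ^p(ι, ℝ) →ₗᵢ[ℝ] C(K, ℝ))
    (hp' : p' ≠ ⊤) (h : p.toReal.HolderConjugate Q) (h' : p'.toReal.HolderConjugate Q')
    (hr : 1 < Q / Q') :
    ∃ T : ℓ^p'(ι, ℝ) →L[ℝ] C(K, ℝ), ‖T‖ ≤ 1 ∧
      ∀ a t, HasSum (fun i ↦ a i * mazurCoord (Q / Q') (evalComp J t) i) (T a t) := by
  let y (i : ι) : C(K, ℝ) := ⟨fun t ↦ mazurCoord (Q / Q') (evalComp J t) i,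
    (continuous_signedPow hr).comp (J (lp.single p i 1)).continuous⟩
  obtain ⟨T, hT, hT_norm⟩ := exists_lp_clm_hasSum_smul hp' y zero_le_one fun c s ↦ by
    rw [one_mul, ContinuousMap.norm_le _ (norm_nonneg _)]
    intro t
    simpa only [ContinuousMap.sum_apply, ContinuousMap.smul_apply, smul_eq_mul] using!
      abs_sum_mul_mazurCoord_le h h' (norm_evalComp_le_one J t) c s
  exact ⟨T, hT_norm, fun a t ↦ (hT a).mapL (ContinuousMap.evalCLM ℝ t)⟩

variable {J : ℓ^p(ι, ℝ) →ₗᵢ[ℝ] C(K, ℝ)} {a : ℓ^p'(ι, ℝ)}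

lemma one_le_norm_of_hasSum_mul_mazurCoord (hp : p ≠ ⊤) (h : p.toReal.HolderConjugate Q)
    (h' : p'.toReal.HolderConjugate Q') (ha : ‖a‖ = 1) {f : C(K, ℝ)}
    (hf : ∀ t, HasSum (fun i ↦ a i * mazurCoord (Q / Q') (evalComp J t) i) (f t)) :
    1 ≤ ‖f‖ := by
  obtain ⟨b, hb, hb_norm⟩ := exists_lp_signedPow_eq h'.pos h.pos a
  replace hb_norm : ‖b‖ = 1 := by
    rwa [ha, Real.one_rpow, ← Real.one_rpow p.toReal,
      Real.rpow_left_inj (norm_nonneg b) zero_le_one h.ne_zero] at hb_norm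
  have hJb : ‖J b‖ = 1 := by rw [J.norm_map, hb_norm]
  obtain ⟨t, ht⟩ := exists_norm_apply_eq_norm_of_ne_zero (norm_ne_zero_iff.mp (hJb ▸ one_ne_zero))
  have habs : |evalComp J t b| = 1 := ht.trans hJb
  have hfb : f t = evalComp J t b := (hf t).unique
    (hasSum_mul_mazurCoord_of_abs_map_eq_one hp h h' (norm_evalComp_le_one J t) ha hb habs)
  rw [← habs, ← hfb]
  exact f.norm_coe_le_norm t

lemma isDLipschitz_of_hasSum_mul_mazurCoord [Fact (1 ≤ p')] {d : K → K → ℝ} (hd : ∀ s t, 0 ≤ d s t)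
    (hJ : ∀ a, IsDLipschitz d (J a)) (hp : p ≠ ⊤) (h : p.toReal.HolderConjugate Q)
    (h' : p'.toReal.HolderConjugate Q') (hS : p'.toReal.HolderTriple S p.toReal)
    {f : K → ℝ} (hf : ∀ t, HasSum (fun i ↦ a i * mazurCoord (Q / Q') (evalComp J t) i) (f t)) :
    IsDLipschitz d f := by
  obtain ⟨C, hC, hCd⟩ := exists_norm_sub_le_mul_of_pointwise (φ := evalComp J) hd hJ
  have hr := one_lt_div_of_holderTriple h h' hS
  set M := ‖a‖ * ((Q / Q') ^ S * 2) ^ (1 / S)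
  refine ⟨M * C, by positivity, fun s t ↦ ?_⟩
  calc |f s - f t| ≤ M * ‖evalComp J s - evalComp J t‖ :=
        abs_sub_le_of_hasSum_mul_mazurCoord hp h h' hS (norm_evalComp_le_one J s)
          (norm_evalComp_le_one J t) (hf s) (hf t)
    _ ≤ M * (C * d s t) := by gcongr; exact hCd s t
    _ = M * C * d s t := (mul_assoc _ _ _).symm

end MazurTransfer

lemma exists_holderTriple_of_lt {P P' : ℝ} (hP : 0 < P) (hPP' : P < P') :
    ∃ S, P'.HolderTriple S P :=
  ⟨(P⁻¹ - P'⁻¹)⁻¹, by simp, hP.trans hPP', inv_pos.mpr (sub_pos.mpr (inv_strictAnti₀ hP hPP'))⟩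

theorem lp_lipschitz_embedding_of_larger_exponent_general {ι K : Type*} [TopologicalSpace K]
    [CompactSpace K] {d : K → K → ℝ} (hd : ∀ s t, 0 ≤ d s t) {p p' : ℝ≥0∞} [Fact (1 ≤ p)]
    [Fact (1 ≤ p')] (hp : 1 < p) (hpp' : p ≤ p') (hp' : p' < ⊤)
    (h : ∃ J : ℓ^p(ι, ℝ) →ₗᵢ[ℝ] C(K, ℝ), ∀ a, IsDLipschitz d (J a)) :
    ∃ J : ℓ^p'(ι, ℝ) →ₗᵢ[ℝ] C(K, ℝ), ∀ a, IsDLipschitz d (J a) := by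
  classical
  rcases hpp'.eq_or_lt with rfl | hpp'
  · exact h
  obtain ⟨J, hJ⟩ := h
  have hp_top : p ≠ ⊤ := (hpp'.trans hp').ne
  have hP : 1 < p.toReal := by
    simpa using ENNReal.toReal_strict_mono hp_top hp
  have hPP' : p.toReal < p'.toReal := ENNReal.toReal_strict_mono hp'.ne hpp'
  have hpQ := Real.HolderConjugate.conjExponent hP
  have hpQ' := Real.HolderConjugate.conjExponent (hP.trans hPP')
  obtain ⟨S, hS⟩ := exists_holderTriple_of_lt (zero_lt_one.trans hP) hPP'
  obtain ⟨T, hT_norm, hT⟩ := exists_clm_hasSum_mul_mazurCoord J hp'.ne hpQ hpQ'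
    (one_lt_div_of_holderTriple hpQ hpQ' hS)
  have hT_isometry : ∀ a, ‖T a‖ = ‖a‖ :=
    norm_map_eq_of_forall_norm_eq_one T.toLinearMap fun a ha ↦
      ((T.le_of_opNorm_le hT_norm a).trans_eq (by rw [ha, one_mul])).antisymm
        (one_le_norm_of_hasSum_mul_mazurCoord hp_top hpQ hpQ' ha (hT a))
  exact ⟨⟨T.toLinearMap, hT_isometry⟩,
    fun a ↦ isDLipschitz_of_hasSum_mul_mazurCoord hd hJ hp_top hpQ hpQ' hS (hT a)⟩

/-- Let `p ∈ (1, ∞)` and suppose `ℓ_p` embeds linearly isometrically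
into `C(K)` with `d`-Lipschitz range. Then for every `p' ∈ [p, ∞)` the space `ℓ_{p'}`
also embeds linearly isometrically into `C(K)` with `d`-Lipschitz range. -/
theorem lp_lipschitz_embedding_of_larger_exponent
    {K : Type*} [TopologicalSpace K] [CompactSpace K] [T2Space K]
    (d : K → K → ℝ)
    (hd_nonneg : ∀ x y, 0 ≤ d x y)
    (hd_symm : ∀ x y, d x y = d y x)
    (hd_eq : ∀ x y, d x y = 0 ↔ x = y)
    (hd_tri : ∀ x y z, d x z ≤ d x y + d y z)
    (hd_lsc : LowerSemicontinuous fun p : K × K => d p.1 p.2)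
    (p : ENNReal) [Fact (1 ≤ p)] (hp1 : 1 < p) (hp2 : p < ⊤)
    (h : ∃ J : lp (fun _ : ℕ => ℝ) p →L[ℝ] C(K, ℝ),
      (∀ a, ‖J a‖ = ‖a‖) ∧
      (∀ a, ∃ L ≥ 0, ∀ t₁ t₂ : K, |J a t₁ - J a t₂| ≤ L * d t₁ t₂)) :
    ∀ (p' : ENNReal) [Fact (1 ≤ p')], p ≤ p' → p' < ⊤ →
      ∃ J : lp (fun _ : ℕ => ℝ) p' →L[ℝ] C(K, ℝ),
        (∀ a, ‖J a‖ = ‖a‖) ∧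
        (∀ a, ∃ L ≥ 0, ∀ t₁ t₂ : K, |J a t₁ - J a t₂| ≤ L * d t₁ t₂) := by
  intro p' _ hpp' hp'
  obtain ⟨J, hJ_norm, hJ⟩ := h
  obtain ⟨J', hJ'⟩ := lp_lipschitz_embedding_of_larger_exponent_general hd_nonneg hp1 hpp' hp'
    ⟨⟨J.toLinearMap, hJ_norm⟩, hJ⟩
  exact ⟨J'.toContinuousLinearMap, J'.norm_map, hJ'⟩
end
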